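/- Let Ω, ω, u, λ, ū be as in the context, and let φ be the first Neumann eigenfunction of −(ωφ')' = μωφ on (0,1) (φ ∈ C¹([0,1]), φ'(0) = φ'(1) = 0, ωφ' differentiable on (0,1) with (ωφ')' = −μωφ there, μ the smallest positive eigenvalue), normalized so that φ(0) = lim_{x→0+} ū(x). Then |ū(x) − φ(x)| ≤ C ε · sup_Ω |u| for all x ∈ (0,1), with C depending only on n. -/

import Mathlib

open MeasureTheory Set Filter Topology RealInnerProductSpace

noncomputable section

/-- The point `(x, y) ∈ ℝ × ℝ^m ≅ ℝ^{m+1}`. -/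
def mkPt (m : ℕ) (x : ℝ) (y : EuclideanSpace ℝ (Fin m)) : EuclideanSpace ℝ (Fin (m+1)) :=
  (EuclideanSpace.equiv (Fin (m+1)) ℝ).symm (Fin.cons x ((EuclideanSpace.equiv (Fin m) ℝ) y))

/-- The cross-section `Ω(s) = {y : (s, y) ∈ Ω}`. -/
def cross {m : ℕ} (Ω : Set (EuclideanSpace ℝ (Fin (m+1)))) (s : ℝ) :
    Set (EuclideanSpace ℝ (Fin m)) := {y | mkPt m s y ∈ Ω}

/-- `ω(s)`: the (n-1)-dimensional volume of the cross-section `Ω(s)`. -/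
def ωvol {m : ℕ} (Ω : Set (EuclideanSpace ℝ (Fin (m+1)))) (s : ℝ) : ℝ :=
  (volume (cross Ω s)).toReal

/-- The Laplacian, as the sum of the pure second derivatives along the standard basis. -/
def lap {k : ℕ} (u : EuclideanSpace ℝ (Fin k) → ℝ) (p : EuclideanSpace ℝ (Fin k)) : ℝ :=
  ∑ i, fderiv ℝ (fun q => fderiv ℝ u q (EuclideanSpace.single i 1)) p (EuclideanSpace.single i 1)

/-- The cross-sectional average `ū(x)` of `u`. -/
def ubarFn {m : ℕ} (Ω : Set (EuclideanSpace ℝ (Fin (m+1))))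
    (u : EuclideanSpace ℝ (Fin (m+1)) → ℝ) (x : ℝ) : ℝ :=
  (∫ y in cross Ω x, u (mkPt m x y)) / ωvol Ω x

/-- `(φ, φd)` is a (nonzero, C¹ on [0,1]) solution of the Neumann problem
`-(ω φ')' = μ ω φ` on (0,1), with `φ'(0) = φ'(1) = 0`. -/
def NeumannSol (ω : ℝ → ℝ) (μ : ℝ) (φ φd : ℝ → ℝ) : Prop :=
  (∀ x ∈ Icc (0:ℝ) 1, HasDerivWithinAt φ (φd x) (Icc 0 1) x) ∧
  ContinuousOn φd (Icc 0 1) ∧ φd 0 = 0 ∧ φd 1 = 0 ∧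
  (∃ x ∈ Icc (0:ℝ) 1, φ x ≠ 0) ∧
  ∀ x ∈ Ioo (0:ℝ) 1, HasDerivAt (fun t => ω t * φd t) (-(μ * ω x * φ x)) x

/-- `μ` is a Neumann eigenvalue of `-(ω φ')' = μ ω φ`. -/
def IsNeumannEigenvalue (ω : ℝ → ℝ) (μ : ℝ) : Prop := ∃ φ φd, NeumannSol ω μ φ φd

lemma incr_bound {a b : ℝ} {z zd g gd : ℝ → ℝ} (hz : ContinuousOn z (Icc a b))
    (hg : ContinuousOn g (Icc a b)) (hzd : ∀ t ∈ Ioo a b, HasDerivAt z (zd t) t)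
    (hgd : ∀ t ∈ Ioo a b, HasDerivAt g (gd t) t) (hle : ∀ t ∈ Ioo a b, |zd t| ≤ gd t)
    {t : ℝ} (ht : t ∈ Icc a b) : |z t - z a| ≤ g t - g a := by
  have h1 : MonotoneOn (fun t => g t - z t) (Icc a b) := by
    apply monotoneOn_of_deriv_nonneg (convex_Icc a b) (hg.sub hz)
    · intro x hx
      rw [interior_Icc] at hx
      exact ((hgd x hx).sub (hzd x hx)).differentiableAt.differentiableWithinAt
    · intro x hx
      rw [interior_Icc] at hx
      rw [((hgd x hx).sub (hzd x hx)).deriv]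
      have := abs_le.1 (hle x hx); linarith
  have h2 : MonotoneOn (fun t => g t + z t) (Icc a b) := by
    apply monotoneOn_of_deriv_nonneg (convex_Icc a b) (hg.add hz)
    · intro x hx
      rw [interior_Icc] at hx
      exact ((hgd x hx).add (hzd x hx)).differentiableAt.differentiableWithinAt
    · intro x hx
      rw [interior_Icc] at hx
      rw [((hgd x hx).add (hzd x hx)).deriv]
      have := abs_le.1 (hle x hx); linarith
  have ha : a ∈ Icc a b := ⟨le_rfl, ht.1.trans ht.2⟩
  have e1 := h1 ha ht ht.1
  have e2 := h2 ha ht ht.1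
  simp only at e1 e2
  rw [abs_le]; constructor <;> linarith

lemma gron {A B T : ℝ} (hA : 0 < A) (hB : 0 ≤ B) (hT : 0 < T) {z zd : ℝ → ℝ}
    (hc : ContinuousOn z (Icc 0 T)) (hd : ∀ t ∈ Ioo 0 T, HasDerivAt z (zd t) t)
    (H : ∀ t ∈ Ioo 0 T, ∀ S, (∀ s ∈ Ioo 0 t, |z s| ≤ S) → |zd t| ≤ A * S + B) :
    ∀ t ∈ Icc 0 T, |z t| ≤ 2 * (|z 0| + B * T) * Real.exp (2 * A * T) := by
  obtain ⟨t0, ht0, hmax⟩ := isCompact_Icc.exists_isMaxOn (nonempty_Icc.2 hT.le)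
    (f := fun t => Real.exp (-(2 * A * t)) * |z t|)
    ((by fun_prop : Continuous fun t => Real.exp (-(2 * A * t))).continuousOn.mul hc.abs)
  set N := Real.exp (-(2 * A * t0)) * |z t0| with hN
  have hN0 : 0 ≤ N := by positivity
  have hb : ∀ t ∈ Icc 0 T, |z t| ≤ N * Real.exp (2 * A * t) := by
    intro t ht
    have := hmax ht
    simp only [mem_ofPred_eq] at this
    rw [← hN] at this
    calc |z t| = (Real.exp (-(2 * A * t)) * |z t|) * Real.exp (2 * A * t) := by
          rw [mul_right_comm, ← Real.exp_add]; simp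
      _ ≤ _ := by gcongr
  have key : |z t0 - z 0| ≤ (N / 2 * Real.exp (2 * A * t0) + B * t0)
      - (N / 2 * Real.exp (2 * A * 0) + B * 0) := by
    apply incr_bound (b := T) (zd := zd) (g := fun t => N / 2 * Real.exp (2 * A * t) + B * t)
      (gd := fun t => A * (N * Real.exp (2 * A * t)) + B) hc (by fun_prop) hd _ _ ht0
    · intro t _
      have h1 : HasDerivAt (fun t : ℝ => 2 * A * t) (2 * A * 1) t := (hasDerivAt_id t).const_mul _
      have h2 := (h1.exp.const_mul (N / 2)).fun_add ((hasDerivAt_id t).const_mul B)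
      refine h2.congr_deriv ?_
      ring
    · intro t ht
      apply H t ht
      intro s hs
      refine (hb s ⟨hs.1.le, (hs.2.trans ht.2).le⟩).trans ?_
      gcongr
      exact hs.2.le
  have h3 : N * Real.exp (2 * A * t0) = |z t0| := by
    rw [hN, mul_right_comm, ← Real.exp_add]; simp
  have h4 : |z t0| ≤ |z 0| + |z t0 - z 0| := by
    have := abs_add_le (z 0) (z t0 - z 0); simpa using this
  have h5 : N ≤ N * Real.exp (2 * A * t0) := by
    have : 1 ≤ Real.exp (2 * A * t0) := Real.one_le_exp (by have := ht0.1; positivity)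
    nlinarith
  have h6 : B * t0 ≤ B * T := by gcongr; exact ht0.2
  have h7 : N ≤ 2 * (|z 0| + B * T) := by
    simp only [mul_zero, Real.exp_zero] at key
    linarith
  intro t ht
  refine (hb t ht).trans ?_
  have : 0 ≤ B * T := by positivity
  gcongr
  exact ht.2

structure Wt (m : ℕ) (ω : ℝ → ℝ) : Prop where
  cont : ContinuousOn ω (Ioo 0 1)
  pos : ∀ x ∈ Ioo (0:ℝ) 1, 0 < ω x
  l : ∀ s t, 0 < s → s ≤ t → t < 1 → ω s * (1 - t) ^ m ≤ ω t * (1 - s) ^ m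
  r : ∀ s t, 0 < s → s ≤ t → t < 1 → ω t * s ^ m ≤ ω s * t ^ m
  one : ω (1 / 2) = 1

lemma Wt.rev {m : ℕ} {ω : ℝ → ℝ} (h : Wt m ω) : Wt m (fun x => ω (1 - x)) where
  cont := h.cont.comp (by fun_prop) (fun x hx => ⟨by linarith [hx.2], by linarith [hx.1]⟩)
  pos x hx := h.pos _ ⟨by linarith [hx.2], by linarith [hx.1]⟩
  l s t h1 h2 h3 := by
    have := h.r (1 - t) (1 - s) (by linarith) (by linarith) (by linarith)
    simpa using this
  r s t h1 h2 h3 := by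
    have := h.l (1 - t) (1 - s) (by linarith) (by linarith) (by linarith)
    simpa using this
  one := by have := h.one; norm_num at this ⊢; exact this

lemma Wt.left {m : ℕ} {ω : ℝ → ℝ} (h : Wt m ω) {T : ℝ} (hT : T < 1) {s t : ℝ} (hs : 0 < s)
    (hst : s ≤ t) (ht : t ≤ T) : ω s ≤ (1 / (1 - T)) ^ m * ω t := by
  have h1 := h.l s t hs hst (by linarith)
  have hp := h.pos t ⟨by linarith, by linarith⟩
  have hp' := h.pos s ⟨by linarith, by linarith⟩
  have h2 : ω s * (1 - T) ^ m ≤ ω t := by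
    calc ω s * (1 - T) ^ m ≤ ω s * (1 - t) ^ m := by
          gcongr
      _ ≤ ω t * (1 - s) ^ m := h1
      _ ≤ ω t * 1 := by
          gcongr
          exact pow_le_one₀ (by linarith) (by linarith)
      _ = _ := mul_one _
  have h3 : 0 < (1 - T) ^ m := pow_pos (by linarith) _
  rw [div_pow, one_pow, one_div, inv_mul_eq_div, le_div_iff₀ h3]
  exact h2

lemma Wt.right {m : ℕ} {ω : ℝ → ℝ} (h : Wt m ω) {T : ℝ} (hT : 0 < T) {s t : ℝ} (hs : T ≤ s)
    (hst : s ≤ t) (ht : t < 1) : ω t ≤ (1 / T) ^ m * ω s := by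
  have := h.rev.left (T := 1 - T) (by linarith) (s := 1 - t) (t := 1 - s) (by linarith)
    (by linarith) (by linarith)
  simpa using this

lemma Wt.le {m : ℕ} {ω : ℝ → ℝ} (h : Wt m ω) {x : ℝ} (hx : x ∈ Ioo (0:ℝ) 1) : ω x ≤ 2 ^ m := by
  rcases le_total x (1 / 2) with h1 | h1
  · have := h.left (T := 1 / 2) (by norm_num) hx.1 h1 le_rfl
    rw [h.one] at this
    norm_num at this ⊢; exact this
  · have := h.right (T := 1 / 2) (by norm_num) le_rfl h1 hx.2
    rw [h.one] at this
    norm_num at this ⊢; exact this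

lemma Wt.ge {m : ℕ} {ω : ℝ → ℝ} (h : Wt m ω) {x : ℝ} (hx : x ∈ Ioc (0:ℝ) (1 / 2)) :
    (2 * x) ^ m ≤ ω x := by
  have := h.r x (1 / 2) hx.1 hx.2 (by norm_num)
  rw [h.one, one_mul] at this
  rw [mul_pow]
  have h3 : (0:ℝ) < 2 ^ m := by positivity
  calc 2 ^ m * x ^ m ≤ 2 ^ m * (ω x * (1 / 2) ^ m) := by gcongr
    _ = ω x := by rw [div_pow]; field_simp; simp

lemma ii_of {f : ℝ → ℝ} {C : ℝ} (hf : ContinuousOn f (Ioo 0 1)) (hC : ∀ x ∈ Ioo (0:ℝ) 1, |f x| ≤ C)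
    {a b : ℝ} (ha : a ∈ Icc (0:ℝ) 1) (hb : b ∈ Icc (0:ℝ) 1) : IntervalIntegrable f volume a b := by
  have h : IntegrableOn f (Ioo 0 1) := by
    refine IntegrableOn.of_bound (C := C) (by simp)
      (hf.aestronglyMeasurable measurableSet_Ioo) ?_
    rw [ae_restrict_iff' measurableSet_Ioo]
    exact Eventually.of_forall fun x hx => by simpa using hC x hx
  have h0 : IntervalIntegrable f volume 0 1 := by
    rw [intervalIntegrable_iff_integrableOn_Ioo_of_le zero_le_one]; exact h
  apply h0.mono_set
  rw [uIcc_of_le zero_le_one]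
  exact uIcc_subset_Icc ha hb

lemma ftc_of {f : ℝ → ℝ} {C : ℝ} (hf : ContinuousOn f (Ioo 0 1))
    (hC : ∀ x ∈ Ioo (0:ℝ) 1, |f x| ≤ C) {a : ℝ} (ha : a ∈ Icc (0:ℝ) 1)
    {t : ℝ} (ht : t ∈ Ioo (0:ℝ) 1) : HasDerivAt (fun t => ∫ s in a..t, f s) (f t) t := by
  apply intervalIntegral.integral_hasDerivAt_right (ii_of hf hC ha ⟨ht.1.le, ht.2.le⟩)
  · exact (hf.stronglyMeasurableAtFilter isOpen_Ioo) t ht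
  · exact hf.continuousAt (isOpen_Ioo.mem_nhds ht)

lemma icont_of {f : ℝ → ℝ} {C : ℝ} (hf : ContinuousOn f (Ioo 0 1))
    (hC : ∀ x ∈ Ioo (0:ℝ) 1, |f x| ≤ C) {a : ℝ} (ha : a ∈ Icc (0:ℝ) 1) :
    ContinuousOn (fun t => ∫ s in a..t, f s) (Icc 0 1) := by
  have h := intervalIntegral.continuousOn_primitive_interval' (a := a) (b₁ := 0) (b₂ := 1)
    (ii_of hf hC (a := 0) (b := 1) (by simp) (by simp)) (by simpa using ha)
  rwa [uIcc_of_le zero_le_one] at h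

lemma abs_int_le {f : ℝ → ℝ} {B a b : ℝ} (hab : a ≤ b) (h : ∀ s ∈ Ioo a b, |f s| ≤ B) :
    |∫ s in a..b, f s| ≤ B * (b - a) := by
  have := intervalIntegral.norm_integral_le_of_norm_le_const_ae (a := a) (b := b) (f := f) (C := B) ?_
  · rw [abs_of_nonneg (by linarith : (0:ℝ) ≤ b - a)] at this
    simpa using this
  · have : ∀ᵐ x : ℝ, x ≠ b := by simp [ae_iff]
    filter_upwards [this] with x hx hx2
    rw [uIoc_of_le hab] at hx2
    exact h x ⟨hx2.1, lt_of_le_of_ne hx2.2 hx⟩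

/-- stability -/
lemma stabL {ω : ℝ → ℝ} {K Λ B T : ℝ} (hK : 0 < K) (hΛ : 0 < Λ) (hB : 0 ≤ B) (hT : 0 < T)
    (hT1 : T ≤ 1) (hp : ∀ t ∈ Ioo 0 T, 0 < ω t)
    (hω : ∀ s t, 0 < s → s ≤ t → t < T → ω s ≤ K * ω t) {z zd r : ℝ → ℝ}
    (hc : ContinuousOn z (Icc 0 T)) (hd : ∀ t ∈ Ioo 0 T, HasDerivAt z (zd t) t)
    (he : ∀ t ∈ Ioo 0 T, ω t * zd t = - ∫ s in 0..t, ω s * r s)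
    (hr : ∀ t ∈ Ioo 0 T, |r t| ≤ Λ * |z t| + B) :
    (∀ t ∈ Icc 0 T, |z t| ≤ 2 * (|z 0| + K * B) * Real.exp (2 * (K * Λ))) ∧
    ∀ t ∈ Ioo 0 T, |zd t| ≤ K * Λ * (2 * (|z 0| + K * B) * Real.exp (2 * (K * Λ))) + K * B := by
  have H : ∀ t ∈ Ioo 0 T, ∀ S, (∀ s ∈ Ioo 0 t, |z s| ≤ S) → |zd t| ≤ K * Λ * S + K * B := by
    intro t ht S hS
    have hS0 : 0 ≤ S := (abs_nonneg _).trans (hS (t / 2) ⟨by linarith [ht.1], by linarith [ht.1]⟩)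
    have hpt := hp t ht
    have h1 : |∫ s in 0..t, ω s * r s| ≤ (K * ω t * (Λ * S + B)) * (t - 0) := by
      apply abs_int_le ht.1.le
      intro s hs
      have hps := hp s ⟨hs.1, hs.2.trans ht.2⟩
      rw [abs_mul, abs_of_pos hps]
      gcongr
      · exact hω s t hs.1 hs.2.le ht.2
      · exact (hr s ⟨hs.1, hs.2.trans ht.2⟩).trans (by gcongr; exact hS s hs)
    have h2 : |ω t * zd t| ≤ K * ω t * (Λ * S + B) := by
      rw [he t ht, abs_neg]
      refine h1.trans ?_
      have : t - 0 ≤ 1 := by linarith [ht.2]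
      have h0 : 0 ≤ K * ω t * (Λ * S + B) := by positivity
      nlinarith
    rw [abs_mul, abs_of_pos hpt] at h2
    have : |zd t| ≤ K * (Λ * S + B) := by
      apply le_of_mul_le_mul_left _ hpt
      linarith
    linarith
  have hz : ∀ t ∈ Icc 0 T, |z t| ≤ 2 * (|z 0| + K * B) * Real.exp (2 * (K * Λ)) := by
    intro t ht
    refine (gron (by positivity : 0 < K * Λ) (by positivity : 0 ≤ K * B) hT hc hd H t ht).trans ?_
    have h1 : K * B * T ≤ K * B := by
      have : 0 ≤ K * B := by positivity
      nlinarith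
    have h2 : 2 * (K * Λ) * T ≤ 2 * (K * Λ) := by
      have : 0 ≤ 2 * (K * Λ) := by positivity
      nlinarith
    gcongr
  refine ⟨hz, fun t ht => H t ht _ fun s hs => hz s ⟨hs.1.le, (hs.2.trans ht.2).le⟩⟩

def Jop (ω f : ℝ → ℝ) (t : ℝ) : ℝ := (∫ s in 0..t, ω s * f s) / ω t

lemma Wt.mul_bdd {m : ℕ} {ω : ℝ → ℝ} (h : Wt m ω) {f : ℝ → ℝ} {C : ℝ}
    (hC : ∀ x ∈ Ioo (0:ℝ) 1, |f x| ≤ C) : ∀ x ∈ Ioo (0:ℝ) 1, |ω x * f x| ≤ 2 ^ m * C := by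
  intro x hx
  rw [abs_mul, abs_of_pos (h.pos x hx)]
  have := h.le hx
  have := h.pos x hx
  gcongr
  exact hC x hx

lemma Jop_bound {m : ℕ} {ω : ℝ → ℝ} (h : Wt m ω) {f : ℝ → ℝ} {D t : ℝ} (ht : t ∈ Icc (0:ℝ) (3 / 4))
    (hf : ∀ s ∈ Ioo 0 t, |f s| ≤ D) : |Jop ω f t| ≤ 4 ^ m * D * t := by
  rcases ht.1.eq_or_lt with h0 | h0
  · subst h0; simp [Jop]
  have hp := h.pos t ⟨h0, by linarith [ht.2]⟩
  rw [Jop, abs_div, abs_of_pos hp, div_le_iff₀ hp]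
  have hD : 0 ≤ D := (abs_nonneg _).trans (hf (t / 2) ⟨by linarith, by linarith⟩)
  have h1 : |∫ s in 0..t, ω s * f s| ≤ (4 ^ m * ω t * D) * (t - 0) := by
    apply abs_int_le h0.le
    intro s hs
    have hps := h.pos s ⟨hs.1, by linarith [hs.2, ht.2]⟩
    rw [abs_mul, abs_of_pos hps]
    have := h.left (T := 3 / 4) (by norm_num) hs.1 hs.2.le ht.2
    norm_num at this
    gcongr
    exact hf s hs
  linarith

lemma Jop_cont {m : ℕ} {ω : ℝ → ℝ} (h : Wt m ω) {f : ℝ → ℝ} (hf : Continuous f) :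
    ContinuousOn (Jop ω f) (Icc 0 (3 / 4)) := by
  obtain ⟨C, hC⟩ := (isCompact_Icc (a := (0:ℝ)) (b := 1)).exists_bound_of_continuousOn hf.continuousOn
  have hC' : ∀ x ∈ Ioo (0:ℝ) 1, |f x| ≤ C := fun x hx => hC x ⟨hx.1.le, hx.2.le⟩
  intro t ht
  rcases ht.1.eq_or_lt with h0 | h0
  · subst h0
    have h1 : Jop ω f 0 = 0 := by simp [Jop]
    rw [ContinuousWithinAt, h1]
    apply squeeze_zero_norm' (a := fun t => 4 ^ m * C * t)
    · filter_upwards [self_mem_nhdsWithin] with t ht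
      apply Jop_bound h ht
      exact fun s hs => hC' s ⟨hs.1, by linarith [hs.2, ht.2]⟩
    · have : Tendsto (fun t : ℝ => 4 ^ m * C * t) (𝓝 0) (𝓝 (4 ^ m * C * 0)) :=
        (by fun_prop : Continuous fun t : ℝ => 4 ^ m * C * t).tendsto 0
      rw [mul_zero] at this
      exact this.mono_left nhdsWithin_le_nhds
  · have ht' : t ∈ Ioo (0:ℝ) 1 := ⟨h0, by linarith [ht.2]⟩
    have h1 := (ftc_of (h.cont.mul hf.continuousOn) (h.mul_bdd hC') (a := 0) (by simp) ht').continuousAt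
    have h2 := h.cont.continuousAt (isOpen_Ioo.mem_nhds ht')
    exact (h1.div h2 (h.pos t ht').ne').continuousWithinAt

lemma prim_cont {g : ℝ → ℝ} {T : ℝ} (hT : 0 ≤ T) (hg : ContinuousOn g (Icc 0 T)) :
    ContinuousOn (fun t => ∫ s in 0..t, g s) (Icc 0 T) := by
  have h := intervalIntegral.continuousOn_primitive_interval' (a := 0) (b₁ := 0) (b₂ := T)
    (f := g) (μ := volume) (hg.intervalIntegrable_of_Icc hT) (by simp)
  rwa [uIcc_of_le hT] at h

lemma ivp {m : ℕ} {ω : ℝ → ℝ} (h : Wt m ω) {lam : ℝ} (hl : 0 < lam) :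
    ∃ f fd : ℝ → ℝ, ContinuousOn f (Icc 0 (3 / 4)) ∧ f 0 = 1 ∧ fd 0 = 0 ∧
      ContinuousOn fd (Icc 0 (3 / 4)) ∧
      (∀ t ∈ Icc (0:ℝ) (3 / 4), HasDerivWithinAt f (fd t) (Icc 0 (3 / 4)) t) ∧
      ∀ t ∈ Ioo (0:ℝ) (3 / 4), ω t * fd t = - ∫ s in 0..t, ω s * (lam * f s) := by
  have hT : (0:ℝ) ≤ 3 / 4 := by norm_num
  set K : ℝ := 4 ^ m with hK
  have hK0 : 0 < K := by positivity
  set A := 2 * lam * K with hA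
  have hA0 : 0 < A := by positivity
  let e : C(Icc (0:ℝ) (3 / 4), ℝ) → ℝ → ℝ := fun f s => Real.exp (A * s) * IccExtend hT f s
  have he : ∀ f, Continuous (e f) := fun f =>
    (by fun_prop : Continuous fun s => Real.exp (A * s)).mul f.continuous.Icc_extend'
  let Ψ : C(Icc (0:ℝ) (3 / 4), ℝ) → ℝ → ℝ := fun f x =>
    1 - lam * ∫ t in 0..x, Jop ω (e f) t
  have hΨ : ∀ f, ContinuousOn (Ψ f) (Icc 0 (3 / 4)) := fun f =>
    continuousOn_const.sub (continuousOn_const.mul (prim_cont hT (Jop_cont h (he f))))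
  let Φ : C(Icc (0:ℝ) (3 / 4), ℝ) → C(Icc (0:ℝ) (3 / 4), ℝ) := fun f =>
    ⟨fun x => Real.exp (-(A * x)) * Ψ f x,
      (by fun_prop : Continuous fun x : Icc (0:ℝ) (3 / 4) => Real.exp (-(A * x))).mul
        (continuousOn_iff_continuous_domRestrict.1 (hΨ f))⟩
  have hcontr : ContractingWith (1 / 2) Φ := by
    refine ⟨by rw [← NNReal.coe_lt_coe]; norm_num, LipschitzWith.of_dist_le_mul fun f g => ?_⟩
    rw [ContinuousMap.dist_le (by positivity)]
    intro x
    set D := dist f g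
    have hD0 : 0 ≤ D := dist_nonneg
    have hd : ∀ s, |e f s - e g s| ≤ D * Real.exp (A * s) := by
      intro s
      have : |IccExtend hT f s - IccExtend hT g s| ≤ D := by
        simp only [IccExtend, Function.comp]
        exact ContinuousMap.dist_apply_le_dist (f := f) (g := g) (projIcc 0 (3 / 4) hT s)
      simp only [e]
      rw [← mul_sub, abs_mul, Real.abs_exp, mul_comm]
      gcongr
    have hJ : ∀ t ∈ Icc (0:ℝ) (3 / 4), |Jop ω (e f) t - Jop ω (e g) t| ≤ K * D * Real.exp (A * t) := by
      intro t ht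
      have hi : ∀ f, IntervalIntegrable (fun s => ω s * e f s) volume 0 t := by
        intro f
        obtain ⟨C, hC⟩ := (isCompact_Icc (a := (0:ℝ)) (b := 1)).exists_bound_of_continuousOn
          (he f).continuousOn
        have hC' : ∀ x ∈ Ioo (0:ℝ) 1, |e f x| ≤ C := fun x hx => hC x ⟨hx.1.le, hx.2.le⟩
        exact ii_of (h.cont.mul (he f).continuousOn) (h.mul_bdd hC') (by simp)
          ⟨ht.1, by linarith [ht.2]⟩
      have h1 : Jop ω (e f) t - Jop ω (e g) t = Jop ω (fun s => e f s - e g s) t := by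
        simp only [Jop]
        rw [← sub_div, ← intervalIntegral.integral_sub (hi f) (hi g)]
        congr 2
        ext s; ring
      rw [h1]
      refine (Jop_bound h ht (D := D * Real.exp (A * t)) ?_).trans ?_
      · intro s hs
        refine (hd s).trans ?_
        gcongr
        exact hs.2.le
      · have : 0 ≤ K * (D * Real.exp (A * t)) := by positivity
        nlinarith [ht.2]
    have hxI := x.2
    have hdiff : |Ψ f x - Ψ g x| ≤ 1 / 2 * D * Real.exp (A * x) := by
      have h1 : Ψ f x - Ψ g x = -(lam * ∫ t in 0..(x:ℝ), (Jop ω (e f) t - Jop ω (e g) t)) := by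
        simp only [Ψ]
        have hsub : Icc (0:ℝ) x ⊆ Icc 0 (3 / 4) := Icc_subset_Icc_right hxI.2
        rw [intervalIntegral.integral_sub]
        · ring
        · exact ((Jop_cont h (he f)).mono hsub).intervalIntegrable_of_Icc hxI.1
        · exact ((Jop_cont h (he g)).mono hsub).intervalIntegrable_of_Icc hxI.1
      have h2 : ‖∫ t in 0..(x:ℝ), (Jop ω (e f) t - Jop ω (e g) t)‖
          ≤ ∫ t in 0..(x:ℝ), K * D * Real.exp (A * t) := by
        apply intervalIntegral.norm_integral_le_of_norm_le hxI.1
        · exact Eventually.of_forall fun t ht => hJ t ⟨ht.1.le, ht.2.trans hxI.2⟩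
        · exact Continuous.intervalIntegrable (by fun_prop) _ _
      have h3 : ∫ t in 0..(x:ℝ), K * D * Real.exp (A * t)
          = K * D / A * (Real.exp (A * x) - 1) := by
        have hder : ∀ t ∈ uIcc (0:ℝ) x, HasDerivAt (fun t => K * D / A * Real.exp (A * t))
            (K * D * Real.exp (A * t)) t := by
          intro t _
          have h1 : HasDerivAt (fun t : ℝ => A * t) (A * 1) t := (hasDerivAt_id t).const_mul _
          refine (h1.exp.const_mul (K * D / A)).congr_deriv ?_
          field_simp
        rw [intervalIntegral.integral_eq_sub_of_hasDerivAt hder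
          (Continuous.intervalIntegrable (by fun_prop) _ _)]
        simp; ring
      rw [h1, abs_neg, abs_mul, abs_of_pos hl]
      rw [h3, Real.norm_eq_abs] at h2
      have h4 : lam * (K * D / A) = 1 / 2 * D := by
        rw [hA]; field_simp
      calc _ ≤ lam * (K * D / A * (Real.exp (A * x) - 1)) := by gcongr
        _ = 1 / 2 * D * (Real.exp (A * x) - 1) := by rw [← mul_assoc, h4]
        _ ≤ _ := by gcongr; linarith
    change |Real.exp (-(A * x)) * Ψ f x - Real.exp (-(A * x)) * Ψ g x| ≤ _
    rw [← mul_sub, abs_mul, Real.abs_exp]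
    calc _ ≤ Real.exp (-(A * x)) * (1 / 2 * D * Real.exp (A * x)) := by gcongr
      _ = 1 / 2 * D * (Real.exp (-(A * x)) * Real.exp (A * x)) := by ring
      _ = _ := by rw [← Real.exp_add]; simp
  let f₀ := hcontr.fixedPoint
  have hfix : Φ f₀ = f₀ := hcontr.fixedPoint_isFixedPt
  have hef : ∀ x ∈ Icc (0:ℝ) (3 / 4), e f₀ x = Ψ f₀ x := by
    intro x hx
    have h1 : f₀ ⟨x, hx⟩ = Real.exp (-(A * x)) * Ψ f₀ x := by
      conv_lhs => rw [← hfix]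
      rfl
    simp only [e]
    rw [IccExtend_of_mem hT _ hx, h1, ← mul_assoc, ← Real.exp_add]
    simp
  refine ⟨Ψ f₀, fun t => -(lam * Jop ω (e f₀) t), hΨ f₀, by simp [Ψ], by simp [Jop],
    (continuousOn_const.mul (Jop_cont h (he f₀))).neg, ?_, ?_⟩
  · intro t ht
    have hJ := Jop_cont h (he f₀)
    have hsub : Icc (0:ℝ) t ⊆ Icc 0 (3 / 4) := Icc_subset_Icc_right ht.2
    have : Fact (t ∈ Icc (0:ℝ) (3 / 4)) := ⟨ht⟩
    have := intervalIntegral.integral_hasDerivWithinAt_right (a := 0) (b := t)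
      ((hJ.mono hsub).intervalIntegrable_of_Icc ht.1) (s := Icc 0 (3 / 4)) (t := Icc 0 (3 / 4))
      (hJ.stronglyMeasurableAtFilter_nhdsWithin measurableSet_Icc t) (hJ t ht)
    exact (this.const_mul lam).const_sub 1
  · intro t ht
    have hp := h.pos t ⟨ht.1, by linarith [ht.2]⟩
    have : ∫ s in 0..t, ω s * (lam * Ψ f₀ s) = lam * ∫ s in 0..t, ω s * e f₀ s := by
      rw [← intervalIntegral.integral_const_mul]
      apply intervalIntegral.integral_congr
      intro s hs
      rw [uIcc_of_le ht.1.le] at hs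
      simp only
      rw [hef s ⟨hs.1, hs.2.trans ht.2.le⟩]; ring
    rw [this]
    simp only [Jop]
    field_simp

structure Dat (m : ℕ) (a0 C1 E ε : ℝ) (ω U v vd : ℝ → ℝ) (lam : ℝ) : Prop where
  eps : 0 < ε
  W : Wt m ω
  Uc : ContinuousOn U (Ioo 0 1)
  Ub : ∀ x ∈ Ioo (0:ℝ) 1, |U x| ≤ 1
  lpos : 0 < lam
  mean : ∫ s in (0:ℝ)..1, ω s * U s = 0
  vc : ContinuousOn v (Icc 0 1)
  vD : ∀ t ∈ Ioo (0:ℝ) 1, HasDerivAt v (vd t) t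
  eq : ∀ t ∈ Ioo (0:ℝ) 1, ω t * vd t = - ∫ s in 0..t, ω s * (lam * U s)
  vdb : ∀ t ∈ Ioo (0:ℝ) 1, |vd t| ≤ C1
  err : ∀ t ∈ Ioo (0:ℝ) 1, |U t - v t| ≤ E * ε
  v0 : a0 ≤ v 0
  v1 : v 1 ≤ -a0

structure IVPsol (ω : ℝ → ℝ) (lam : ℝ) (f fd : ℝ → ℝ) : Prop where
  c : ContinuousOn f (Icc 0 (3 / 4))
  f0 : f 0 = 1
  fd0 : fd 0 = 0
  cd : ContinuousOn fd (Icc 0 (3 / 4))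
  D : ∀ t ∈ Icc (0:ℝ) (3 / 4), HasDerivWithinAt f (fd t) (Icc 0 (3 / 4)) t
  eq : ∀ t ∈ Ioo (0:ℝ) (3 / 4), ω t * fd t = - ∫ s in 0..t, ω s * (lam * f s)

lemma IVPsol.D' {ω : ℝ → ℝ} {lam : ℝ} {f fd : ℝ → ℝ} (h : IVPsol ω lam f fd) :
    ∀ t ∈ Ioo (0:ℝ) (3 / 4), HasDerivAt f (fd t) t := fun t ht =>
  (h.D t ⟨ht.1.le, ht.2.le⟩).hasDerivAt (Icc_mem_nhds ht.1 ht.2)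

lemma Dat.ωU {m : ℕ} {a0 C1 E ε lam : ℝ} {ω U v vd : ℝ → ℝ} (d : Dat m a0 C1 E ε ω U v vd lam)
    {a b : ℝ} (ha : a ∈ Icc (0:ℝ) 1) (hb : b ∈ Icc (0:ℝ) 1) :
    IntervalIntegrable (fun s => ω s * (lam * U s)) volume a b := by
  have := (ii_of (d.W.cont.mul d.Uc) (d.W.mul_bdd d.Ub) ha hb).const_mul lam
  refine this.congr_ae (Eventually.of_forall fun x => ?_)
  simp only [Pi.mul_apply]; ring

lemma Dat.rev {m : ℕ} {a0 C1 E ε lam : ℝ} {ω U v vd : ℝ → ℝ} (d : Dat m a0 C1 E ε ω U v vd lam) :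
    Dat m a0 C1 E ε (fun x => ω (1 - x)) (fun x => -U (1 - x)) (fun x => -v (1 - x))
      (fun x => vd (1 - x)) lam := by
  have hI : ∀ x ∈ Ioo (0:ℝ) 1, 1 - x ∈ Ioo (0:ℝ) 1 := fun x hx =>
    ⟨by linarith [hx.2], by linarith [hx.1]⟩
  have hm : ∫ s in (0:ℝ)..1, ω s * (lam * U s) = 0 := by
    have := d.mean
    have h2 : ∀ s, ω s * (lam * U s) = lam * (ω s * U s) := fun s => by ring
    simp_rw [h2]
    rw [intervalIntegral.integral_const_mul, this, mul_zero]
  refine ⟨d.eps, d.W.rev, ?_, ?_, d.lpos, ?_, ?_, ?_, ?_, ?_, ?_, ?_, ?_⟩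
  · exact (d.Uc.comp (by fun_prop) hI).neg
  · intro x hx; rw [abs_neg]; exact d.Ub _ (hI x hx)
  · have := intervalIntegral.integral_comp_sub_left (fun s => ω s * -U s) (a := 0) (b := 1) 1
    rw [this]
    simpa using d.mean
  · exact (d.vc.comp (by fun_prop) (fun x hx => ⟨by linarith [hx.2], by linarith [hx.1]⟩)).neg
  · intro t ht
    have h1 : HasDerivAt (fun x : ℝ => 1 - x) (-1) t := by
      simpa using (hasDerivAt_id t).const_sub 1
    have := ((d.vD _ (hI t ht)).comp t h1).neg
    refine this.congr_deriv ?_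
    ring
  · intro t ht
    have h1 := intervalIntegral.integral_comp_sub_left (fun s => ω s * (lam * -U s))
      (a := 0) (b := t) 1
    rw [h1, d.eq _ (hI t ht)]
    have h2 := intervalIntegral.integral_add_adjacent_intervals
      (d.ωU (a := 0) (b := 1 - t) (by simp) ⟨(hI t ht).1.le, (hI t ht).2.le⟩)
      (d.ωU (a := 1 - t) (b := 1) ⟨(hI t ht).1.le, (hI t ht).2.le⟩ (by simp))
    rw [hm] at h2
    have h3 : ∫ s in (1 - t)..(1 - 0), ω s * (lam * -U s)
        = - ∫ s in (1 - t)..1, ω s * (lam * U s) := by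
      rw [← intervalIntegral.integral_neg, sub_zero]
      congr 1; ext s; ring
    rw [h3]; linarith
  · intro t ht; exact d.vdb _ (hI t ht)
  · intro t ht
    have := d.err _ (hI t ht)
    rw [abs_sub_comm] at this
    rwa [show -U (1 - t) - -v (1 - t) = v (1 - t) - U (1 - t) by ring]
  · have := d.v1; simp; linarith
  · have := d.v0; simp; linarith

lemma Dat.half {m : ℕ} {a0 C1 E ε lam : ℝ} {ω U v vd : ℝ → ℝ} (d : Dat m a0 C1 E ε ω U v vd lam) :
    v 0 - v (1 / 2) ≤ lam * 2 ^ m := by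
  have hl := d.lpos
  have h := incr_bound (a := 0) (b := 1 / 2) (z := v) (zd := vd) (g := fun t => lam * 2 ^ m * t)
    (gd := fun t => lam * 2 ^ m) (t := 1 / 2) (d.vc.mono (Icc_subset_Icc_right (by norm_num)))
    (by fun_prop) (fun t ht => d.vD t ⟨ht.1, by linarith [ht.2]⟩)
    (fun t _ => by simpa using (hasDerivAt_id t).const_mul (lam * 2 ^ m)) ?_ (by norm_num)
  · have := (abs_le.1 h).1
    have h2 : 0 < lam * 2 ^ m := by positivity
    linarith
  · intro t ht
    have ht1 : t ∈ Ioo (0:ℝ) 1 := ⟨ht.1, by linarith [ht.2]⟩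
    have hp := d.W.pos t ht1
    have h1 : |∫ s in 0..t, ω s * (lam * U s)| ≤ (2 ^ m * ω t * (lam * 1)) * (t - 0) := by
      apply abs_int_le ht.1.le
      intro s hs
      have hs1 : s ∈ Ioo (0:ℝ) 1 := ⟨hs.1, hs.2.trans ht1.2⟩
      have hps := d.W.pos s hs1
      rw [abs_mul, abs_of_pos hps, abs_mul, abs_of_pos hl]
      have := d.W.left (T := 1 / 2) (by norm_num) hs.1 hs.2.le ht.2.le
      norm_num at this
      gcongr
      exact d.Ub s hs1
    have h2 := d.eq t ht1
    have h3 : ω t * |vd t| ≤ ω t * (lam * 2 ^ m) := by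
      rw [← abs_of_pos hp, ← abs_mul, abs_of_pos hp, h2, abs_neg]
      refine h1.trans ?_
      have : t - 0 ≤ 1 := by linarith [ht1.2]
      have h0 : 0 ≤ 2 ^ m * ω t * (lam * 1) := by positivity
      nlinarith
    exact le_of_mul_le_mul_left h3 hp

lemma Dat.lam_ge {m : ℕ} {a0 C1 E ε lam : ℝ} {ω U v vd : ℝ → ℝ} (d : Dat m a0 C1 E ε ω U v vd lam) :
    a0 / 2 ^ m ≤ lam := by
  have h1 := d.half
  have h2 := d.rev.half
  norm_num at h1 h2
  have := d.v0
  have := d.v1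
  rw [div_le_iff₀ (by positivity)]
  linarith

/-- the length scale on which `v` stays large -/
def dlt (a0 C1 : ℝ) : ℝ := min (1 / 2) (a0 / (2 * C1))

lemma Dat.v_ge {m : ℕ} {a0 C1 E ε lam : ℝ} {ω U v vd : ℝ → ℝ} (d : Dat m a0 C1 E ε ω U v vd lam)
    (hC1 : 0 < C1) {t : ℝ} (ht : t ∈ Icc 0 (dlt a0 C1)) : a0 / 2 ≤ v t := by
  have hd : dlt a0 C1 ≤ 1 / 2 := min_le_left _ _
  have hd2 : dlt a0 C1 ≤ a0 / (2 * C1) := min_le_right _ _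
  have h := incr_bound (a := 0) (b := 1 / 2) (z := v) (zd := vd) (g := fun t => C1 * t)
    (gd := fun t => C1) (t := t) (d.vc.mono (Icc_subset_Icc_right (by norm_num)))
    (by fun_prop) (fun t ht => d.vD t ⟨ht.1, by linarith [ht.2]⟩)
    (fun t _ => by simpa using (hasDerivAt_id t).const_mul C1)
    (fun t ht => d.vdb t ⟨ht.1, by linarith [ht.2]⟩) ⟨ht.1, ht.2.trans hd⟩
  have h1 := (abs_le.1 h).1
  have h2 : C1 * t ≤ a0 / 2 := by
    have := ht.2.trans hd2
    rw [le_div_iff₀ (by positivity)] at this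
    linarith
  have := d.v0
  linarith

lemma Dat.int_ge {m : ℕ} {a0 C1 E ε lam : ℝ} {ω U v vd : ℝ → ℝ} (d : Dat m a0 C1 E ε ω U v vd lam)
    (ha : 0 < a0) (hC1 : 0 < C1) {g : ℝ → ℝ} {c : ℝ} (hc : 0 ≤ c)
    (hg : ∀ t ∈ Ioo 0 (dlt a0 C1), c ≤ g t)
    (hi : IntervalIntegrable (fun s => ω s * g s) volume 0 (dlt a0 C1)) :
    c * 2 ^ m * dlt a0 C1 ^ (m + 1) / (m + 1) ≤ ∫ s in 0..dlt a0 C1, ω s * g s := by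
  have hd : dlt a0 C1 ≤ 1 / 2 := min_le_left _ _
  have hd0 : 0 < dlt a0 C1 := lt_min (by norm_num) (by positivity)
  have h1 : ∫ s in 0..dlt a0 C1, (c * 2 ^ m) * s ^ m ≤ ∫ s in 0..dlt a0 C1, ω s * g s := by
    apply intervalIntegral.integral_mono_on_of_le_Ioo hd0.le
      (Continuous.intervalIntegrable (by fun_prop) _ _) hi
    intro s hs
    have h2 := d.W.ge (x := s) ⟨hs.1, hs.2.le.trans hd⟩
    have h3 := hg s hs
    have h4 : 0 ≤ (2 * s) ^ m := by have := hs.1; positivity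
    have h5 := h4.trans h2
    calc c * 2 ^ m * s ^ m = (2 * s) ^ m * c := by rw [mul_pow]; ring
      _ ≤ _ := by gcongr
  rw [intervalIntegral.integral_const_mul, integral_pow] at h1
  simp only [ne_eq, Nat.add_eq_zero_iff, one_ne_zero, and_false, not_false_eq_true, zero_pow,
    sub_zero] at h1
  rw [mul_div_assoc]; exact h1

def Lbd (m : ℕ) (a0 C1 : ℝ) : ℝ :=
  2 ^ m * C1 / (a0 / 4 * 2 ^ m * dlt a0 C1 ^ (m + 1) / (m + 1))

lemma Dat.lam_le {m : ℕ} {a0 C1 E ε lam : ℝ} {ω U v vd : ℝ → ℝ} (d : Dat m a0 C1 E ε ω U v vd lam)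
    (ha : 0 < a0) (hC1 : 0 < C1) (hE : E * ε ≤ a0 / 4) : lam ≤ Lbd m a0 C1 := by
  have hd : dlt a0 C1 ≤ 1 / 2 := min_le_left _ _
  have hd0 : 0 < dlt a0 C1 := lt_min (by norm_num) (by positivity)
  have hdI : dlt a0 C1 ∈ Ioo (0:ℝ) 1 := ⟨hd0, by linarith⟩
  have h1 := d.int_ge ha hC1 (g := U) (c := a0 / 4) (by positivity) (by
    intro t ht
    have h2 := d.v_ge hC1 (t := t) ⟨ht.1.le, ht.2.le⟩
    have h3 := abs_le.1 (d.err t ⟨ht.1, ht.2.trans hdI.2⟩)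
    linarith [h3.1])
    (ii_of (d.W.cont.mul d.Uc) (d.W.mul_bdd d.Ub) (by simp) ⟨hdI.1.le, hdI.2.le⟩)
  have h2 := d.eq _ hdI
  have h3 : ∫ s in 0..dlt a0 C1, ω s * (lam * U s) = lam * ∫ s in 0..dlt a0 C1, ω s * U s := by
    rw [← intervalIntegral.integral_const_mul]
    congr 1; ext s; ring
  rw [h3] at h2
  have h4 := d.W.mul_bdd d.vdb _ hdI
  rw [h2, abs_neg] at h4
  have h5 := (le_abs_self _).trans h4
  have hl := d.lpos
  rw [Lbd, le_div_iff₀ (by positivity)]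
  refine le_trans ?_ h5
  gcongr

lemma ivp_bound {m : ℕ} {ω : ℝ → ℝ} (h : Wt m ω) {lam Λ : ℝ} (hl : 0 < lam) (hΛ : lam ≤ Λ)
    {f fd : ℝ → ℝ} (hf : IVPsol ω lam f fd) :
    ∀ t ∈ Icc (0:ℝ) (3 / 4), |f t| ≤ 2 * Real.exp (2 * (4 ^ m * Λ)) := by
  have := (stabL (ω := ω) (K := 4 ^ m) (Λ := Λ) (B := 0) (T := 3 / 4) (by positivity)
    (by linarith) le_rfl (by norm_num) (by norm_num)
    (fun t ht => h.pos t ⟨ht.1, by linarith [ht.2]⟩)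
    (fun s t h1 h2 h3 => by
      have := h.left (T := 3 / 4) (by norm_num) h1 h2 h3.le
      norm_num at this; exact this) hf.c hf.D' hf.eq (fun t ht => by
        rw [abs_mul, abs_of_pos hl, add_zero]; gcongr)).1
  simpa [hf.f0] using this

lemma IVPsol.ii {m : ℕ} {ω : ℝ → ℝ} (h : Wt m ω) {lam : ℝ} 
    {f fd : ℝ → ℝ} (hf : IVPsol ω lam f fd) {g : ℝ → ℝ} {t C : ℝ} (ht : t ∈ Icc (0:ℝ) (3 / 4))
    (hg : ContinuousOn g (Ioo 0 1)) (hC : ∀ x ∈ Ioo (0:ℝ) 1, |g x| ≤ C) :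
    IntervalIntegrable (fun s => ω s * (f s * g s)) volume 0 t := by
  have h1 : IntervalIntegrable (fun s => ω s * g s) volume 0 t :=
    ii_of (h.cont.mul hg) (h.mul_bdd hC) (by simp) ⟨ht.1, by linarith [ht.2]⟩
  have := h1.mul_continuousOn (g := f) (by
    rw [uIcc_of_le ht.1]; exact hf.c.mono (Icc_subset_Icc_right ht.2))
  refine this.congr_ae (Eventually.of_forall fun x => ?_)
  simp only; ring

lemma ivp_lip {m : ℕ} {ω : ℝ → ℝ} (h : Wt m ω) {l1 l2 Λ : ℝ} (hl : 0 < l1) (hΛ : l1 ≤ Λ)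
    (hl2 : 0 < l2) (hΛ2 : l2 ≤ Λ)
    {f fd g gd : ℝ → ℝ} (hf : IVPsol ω l1 f fd) (hg : IVPsol ω l2 g gd) :
    ∃ C, C = (4 ^ m * Λ + 1) * (2 * (4 ^ m * (2 * Real.exp (2 * (4 ^ m * Λ))))
        * Real.exp (2 * (4 ^ m * Λ))) + 4 ^ m * (2 * Real.exp (2 * (4 ^ m * Λ))) ∧
    |f (1 / 2) - g (1 / 2)| ≤ C * |l1 - l2| ∧ |fd (1 / 2) - gd (1 / 2)| ≤ C * |l1 - l2| := by
  have hgb := ivp_bound h hl2 hΛ2 hg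
  set b := 2 * Real.exp (2 * (4 ^ m * Λ)) with hb
  have hb0 : 0 < b := by positivity
  have hΛ0 : 0 < Λ := by linarith
  have := stabL (ω := ω) (K := 4 ^ m) (Λ := Λ) (B := b * |l1 - l2|) (T := 3 / 4) (by positivity)
    hΛ0 (by positivity) (by norm_num) (by norm_num)
    (fun t ht => h.pos t ⟨ht.1, by linarith [ht.2]⟩)
    (fun s t h1 h2 h3 => by
      have := h.left (T := 3 / 4) (by norm_num) h1 h2 h3.le
      norm_num at this; exact this) (z := fun t => f t - g t) (zd := fun t => fd t - gd t)
      (r := fun t => l1 * f t - l2 * g t)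
      (hf.c.sub hg.c) (fun t ht => (hf.D' t ht).sub (hg.D' t ht)) (fun t ht => by
        have e1 := hf.eq t ht
        have e2 := hg.eq t ht
        have i1 := hf.ii h (g := fun _ => l1) (C := |l1|) ⟨ht.1.le, ht.2.le⟩ continuousOn_const
          (fun _ _ => le_rfl)
        have i2 := hg.ii h (g := fun _ => l2) (C := |l2|) ⟨ht.1.le, ht.2.le⟩ continuousOn_const
          (fun _ _ => le_rfl)
        rw [mul_sub, e1, e2]
        have : ∀ s, ω s * (l1 * f s - l2 * g s) = ω s * (f s * l1) - ω s * (g s * l2) := 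
          fun s => by ring
        simp_rw [this]
        rw [intervalIntegral.integral_sub i1 i2]
        simp_rw [mul_comm l1, mul_comm l2]
        ring) (fun t ht => by
        have h1 : l1 * f t - l2 * g t = l1 * (f t - g t) + g t * (l1 - l2) := by ring
        rw [h1]
        refine (abs_add_le _ _).trans ?_
        rw [abs_mul, abs_mul, abs_of_pos hl]
        gcongr
        exact hgb t ⟨ht.1.le, ht.2.le⟩)
  refine ⟨_, rfl, ?_, ?_⟩
  · refine (this.1 (1 / 2) (by norm_num)).trans ?_
    simp only [hf.f0, hg.f0, sub_self, abs_zero, zero_add]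
    set e := Real.exp (2 * (4 ^ m * Λ))
    have : 0 ≤ (4 ^ m * Λ) * (2 * (4 ^ m * b) * e) * |l1 - l2| := by positivity
    have : 0 ≤ (4 ^ m * b) * |l1 - l2| := by positivity
    linarith
  · refine (this.2 (1 / 2) (by norm_num)).trans ?_
    simp only [hf.f0, hg.f0, sub_self, abs_zero, zero_add]
    set e := Real.exp (2 * (4 ^ m * Λ))
    have : 0 ≤ (2 * (4 ^ m * b) * e) * |l1 - l2| := by positivity
    linarith

lemma ftcT {g : ℝ → ℝ} {T : ℝ} (hi : IntervalIntegrable g volume 0 T)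
    (hg : ContinuousOn g (Ioo 0 T)) {t : ℝ} (ht : t ∈ Ioo 0 T) :
    HasDerivAt (fun t => ∫ s in 0..t, g s) (g t) t := by
  have hT : 0 ≤ T := (ht.1.trans ht.2).le
  apply intervalIntegral.integral_hasDerivAt_right
  · apply hi.mono_set
    rw [uIcc_of_le hT, uIcc_of_le ht.1.le]
    exact Icc_subset_Icc_right ht.2.le
  · exact (hg.stronglyMeasurableAtFilter isOpen_Ioo) t ht
  · exact hg.continuousAt (isOpen_Ioo.mem_nhds ht)

lemma icT {g : ℝ → ℝ} {T : ℝ} (hT : 0 ≤ T) (hi : IntervalIntegrable g volume 0 T) :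
    ContinuousOn (fun t => ∫ s in 0..t, g s) (Icc 0 T) := by
  have h := intervalIntegral.continuousOn_primitive_interval' (a := 0) hi (by simp)
  rwa [uIcc_of_le hT] at h

set_option maxHeartbeats 1000000 in
lemma leftPack (m : ℕ) {a0 C1 E : ℝ} (ha : 0 < a0) (hC1 : 0 < C1) (hE : 0 < E) :
    ∃ c > (0:ℝ), ∃ C4 > (0:ℝ), ∃ e > (0:ℝ), ∀ ε ω U v vd lam, Dat m a0 C1 E ε ω U v vd lam →
    ε < e → ∀ lam' f fd, 0 < lam' → |lam' - lam| ≤ 1 → IVPsol ω lam' f fd →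
    |v 0 * f (1 / 2) - v (1 / 2)| ≤ C4 * (|lam' - lam| + ε) ∧
    |v 0 * fd (1 / 2) - vd (1 / 2)| ≤ C4 * (|lam' - lam| + ε) ∧
    ∃ I, c ≤ I ∧ |v 0 * fd (1 / 2) * v (1 / 2) - v 0 * f (1 / 2) * vd (1 / 2) + (lam' - lam) * I|
      ≤ C4 * (|lam' - lam| * (|lam' - lam| + ε) + ε) := by
  have hd : dlt a0 C1 ≤ 1 / 2 := min_le_left _ _
  have hd0 : 0 < dlt a0 C1 := lt_min (by norm_num) (by positivity)
  set Λ := Lbd m a0 C1 + 1 with hΛ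
  have hL0 : 0 < Lbd m a0 C1 := by unfold Lbd; positivity
  have hΛ0 : 0 < Λ := by positivity
  set K : ℝ := 4 ^ m with hK
  have hK0 : 0 < K := by positivity
  set X := Real.exp (2 * (K * Λ)) with hX
  have hX0 : 0 < X := Real.exp_pos _
  set b := 2 + Λ * E with hb
  have hb0 : 0 < b := by positivity
  set C3 := (K * Λ + 1) * (2 * (K * b) * X) + K * b with hC3
  have hC30 : 0 < C3 := by positivity
  set Cb := 2 + 2 * C3 with hCb
  have hCb0 : 0 < Cb := by positivity
  refine ⟨(a0 / 2) ^ 2 * 2 ^ m * dlt a0 C1 ^ (m + 1) / (m + 1), by positivity,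
    C3 + 2 ^ m * (Cb * Λ * E + C3 * 2), by positivity,
    min 1 (min (a0 / (4 * E)) (1 / E)), by positivity, ?_⟩
  intro ε ω U v vd lam d he lam' f fd hl' hτ hf
  have he1 : ε < 1 := he.trans_le (min_le_left _ _)
  have he2 : E * ε ≤ a0 / 4 := by
    have := he.trans_le ((min_le_right _ _).trans (min_le_left _ _))
    rw [lt_div_iff₀ (by positivity)] at this
    linarith
  have he3 : E * ε ≤ 1 := by
    have := he.trans_le ((min_le_right _ _).trans (min_le_right _ _))
    rw [lt_div_iff₀ (by positivity)] at this
    linarith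
  have hε := d.eps
  have hl := d.lpos
  have hlam := d.lam_le ha hC1 he2
  set τ := |lam' - lam| with hτd
  have hτ0 : 0 ≤ τ := abs_nonneg _
  have hlΛ : lam ≤ Λ := by linarith
  have hlΛ' : lam' ≤ Λ := by have := (abs_le.1 hτ).2; linarith
  have hvb : ∀ t ∈ Ioo (0:ℝ) 1, |v t| ≤ 2 := by
    intro t ht
    have h1 := abs_le.1 (d.err t ht)
    have h2 := abs_le.1 (d.Ub t ht)
    rw [abs_le]; constructor <;> linarith
  have hvco : ContinuousOn v (Ioo 0 1) := d.vc.mono Ioo_subset_Icc_self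
  have hI : ∀ t ∈ Ioo (0:ℝ) (3 / 4), t ∈ Ioo (0:ℝ) 1 := fun t ht => ⟨ht.1, by linarith [ht.2]⟩
  obtain ⟨s1, s2⟩ := stabL (ω := ω) (K := K) (Λ := Λ) (B := b * (τ + ε)) (T := 3 / 4) hK0
    hΛ0 (by positivity) (by norm_num) (by norm_num)
    (fun t ht => d.W.pos t (hI t ht))
    (fun s t h1 h2 h3 => by
      have := d.W.left (T := 3 / 4) (by norm_num) h1 h2 h3.le
      norm_num at this; exact this) (z := fun t => v 0 * f t - v t)
      (zd := fun t => v 0 * fd t - vd t)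
      (r := fun t => lam' * (v 0 * f t) - lam * U t)
      ((continuousOn_const.mul hf.c).sub (d.vc.mono (Icc_subset_Icc_right (by norm_num))))
      (fun t ht => ((hf.D' t ht).const_mul _).sub (d.vD t (hI t ht))) (fun t ht => by
        have e1 := hf.eq t ht
        have e2 := d.eq t (hI t ht)
        have i1 := hf.ii d.W (g := fun _ => lam' * v 0) (C := |lam' * v 0|) ⟨ht.1.le, ht.2.le⟩
          continuousOn_const (fun _ _ => le_rfl)
        have i2 := d.ωU (a := 0) (b := t) (by simp) ⟨ht.1.le, (hI t ht).2.le⟩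
        have : ∀ s, ω s * (lam' * (v 0 * f s) - lam * U s)
          = ω s * (f s * (lam' * v 0)) - ω s * (lam * U s) := fun s => by ring
        simp_rw [this]
        rw [intervalIntegral.integral_sub i1 i2]
        have h3 : ∫ s in 0..t, ω s * (f s * (lam' * v 0))
            = v 0 * ∫ s in 0..t, ω s * (lam' * f s) := by
          rw [← intervalIntegral.integral_const_mul]
          congr 1; ext s; ring
        rw [h3, mul_sub, e2, mul_left_comm, e1]
        ring) (fun t ht => by
        have h1 : lam' * (v 0 * f t) - lam * U t
          = lam' * (v 0 * f t - v t) + ((lam' - lam) * v t - lam * (U t - v t)) := by ring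
        rw [h1]
        refine (abs_add_le _ _).trans ?_
        have h2 : |(lam' - lam) * v t - lam * (U t - v t)| ≤ τ * 2 + Λ * (E * ε) := by
          refine (abs_sub _ _).trans ?_
          rw [abs_mul, abs_mul, abs_of_pos hl]
          gcongr
          · exact hvb t (hI t ht)
          · exact d.err t (hI t ht)
        have h3 : τ * 2 + Λ * (E * ε) ≤ b * (τ + ε) := by
          rw [hb]
          have : 0 ≤ Λ * E * τ := by positivity
          nlinarith
        rw [abs_mul, abs_of_pos hl']
        gcongr
        exact h2.trans h3)
  simp only [hf.f0, mul_one, sub_self, abs_zero, zero_add] at s1 s2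
  have s1' : ∀ t ∈ Icc (0:ℝ) (3 / 4), |v 0 * f t - v t| ≤ C3 * (τ + ε) := by
    intro t ht
    refine (s1 t ht).trans ?_
    rw [hC3]
    have : 0 ≤ (K * Λ) * (2 * (K * b) * X) * (τ + ε) := by positivity
    have : 0 ≤ (K * b) * (τ + ε) := by positivity
    linarith
  have s2' : ∀ t ∈ Ioo (0:ℝ) (3 / 4), |v 0 * fd t - vd t| ≤ C3 * (τ + ε) := by
    intro t ht
    refine (s2 t ht).trans ?_
    rw [hC3]
    have : 0 ≤ (2 * (K * b) * X) * (τ + ε) := by positivity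
    linarith
  have hC34 : C3 ≤ C3 + 2 ^ m * (Cb * Λ * E + C3 * 2) := by
    have : 0 ≤ 2 ^ m * (Cb * Λ * E + C3 * 2) := by positivity
    linarith
  have hη : 0 ≤ τ + ε := by positivity
  refine ⟨(s1' _ (by norm_num)).trans (by gcongr), (s2' _ (by norm_num)).trans (by gcongr),
    ∫ s in 0..(1 / 2 : ℝ), ω s * (v s) ^ 2, ?_, ?_⟩
  · have hv2 : ∀ x ∈ Ioo (0:ℝ) 1, |v x ^ 2| ≤ 4 := by
      intro x hx
      rw [abs_pow]
      calc |v x| ^ 2 ≤ 2 ^ 2 := pow_le_pow_left₀ (abs_nonneg _) (hvb x hx) 2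
        _ = 4 := by norm_num
    have ii : ∀ a ∈ Icc (0:ℝ) 1, ∀ b ∈ Icc (0:ℝ) 1,
        IntervalIntegrable (fun s => ω s * v s ^ 2) volume a b := fun a ha b hb =>
      ii_of (d.W.cont.mul (hvco.pow 2)) (d.W.mul_bdd hv2) ha hb
    have hdI : dlt a0 C1 ∈ Icc (0:ℝ) 1 := ⟨hd0.le, by linarith⟩
    have h1 := d.int_ge ha hC1 (g := fun s => v s ^ 2) (c := (a0 / 2) ^ 2) (by positivity) (by
      intro t ht
      have h2 := d.v_ge hC1 (t := t) ⟨ht.1.le, ht.2.le⟩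
      gcongr) (ii 0 (by simp) _ hdI)
    refine h1.trans ?_
    rw [← intervalIntegral.integral_add_adjacent_intervals (ii 0 (by simp) _ hdI)
      (ii _ hdI (1 / 2) (by norm_num))]
    have : 0 ≤ ∫ s in dlt a0 C1..(1 / 2), ω s * v s ^ 2 := by
      apply intervalIntegral.integral_nonneg hd
      intro s hs
      have := d.W.pos s ⟨by linarith [hs.1], by linarith [hs.2]⟩
      positivity
    linarith
  · have hfi := hf.ii d.W (g := fun _ => lam') (C := |lam'|) (t := 3 / 4) (by norm_num)
      continuousOn_const (fun _ _ => le_rfl)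
    have hfi' : IntervalIntegrable (fun s => ω s * (lam' * f s)) volume 0 (3 / 4) := by
      simp_rw [mul_comm lam']; exact hfi
    have hfc : ContinuousOn (fun s => ω s * (lam' * f s)) (Ioo 0 (3 / 4)) :=
      (d.W.cont.mono hI).mul (continuousOn_const.mul (hf.c.mono Ioo_subset_Icc_self))
    have hUi := d.ωU (a := 0) (b := 3 / 4) (by simp) (by norm_num)
    have hUc : ContinuousOn (fun s => ω s * (lam * U s)) (Ioo 0 (3 / 4)) :=
      (d.W.cont.mono hI).mul (continuousOn_const.mul (d.Uc.mono hI))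
    have hgb : ∀ x ∈ Ioo (0:ℝ) 1, |lam * U x - lam' * v x| ≤ lam * 1 + lam' * 2 := by
      intro x hx
      refine (abs_sub _ _).trans ?_
      rw [abs_mul, abs_mul, abs_of_pos hl, abs_of_pos hl']
      gcongr
      · exact d.Ub x hx
      · exact hvb x hx
    have hki := (hf.ii d.W (t := 1 / 2) (g := fun s => lam * U s - lam' * v s) (by norm_num)
      ((continuousOn_const.mul d.Uc).sub (continuousOn_const.mul hvco)) hgb).const_mul (v 0)
    have hsub : Icc (0:ℝ) (1 / 2) ⊆ Icc 0 (3 / 4) := Icc_subset_Icc_right (by norm_num)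
    have key := intervalIntegral.integral_eq_sub_of_hasDerivAt_of_le
      (f := fun t => v 0 * ((-∫ s in 0..t, ω s * (lam' * f s)) * v t
        - f t * (-∫ s in 0..t, ω s * (lam * U s)))) (a := 0) (b := 1 / 2) (by norm_num) (by
          apply continuousOn_const.mul
          apply ContinuousOn.sub
          · exact (((icT (by norm_num) hfi').mono hsub).neg).mul
              (d.vc.mono (Icc_subset_Icc_right (by norm_num)))
          · exact (hf.c.mono hsub).mul ((icT (by norm_num) hUi).mono hsub).neg)
      (f' := fun s => v 0 * (ω s * (f s * (lam * U s - lam' * v s)))) (by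
        intro t ht
        have ht' : t ∈ Ioo (0:ℝ) (3 / 4) := ⟨ht.1, by linarith [ht.2]⟩
        have d1 := ((ftcT hfi' hfc ht').neg.mul (d.vD t (hI t ht'))).sub
          ((hf.D' t ht').mul (ftcT hUi hUc ht').neg)
        refine (d1.const_mul (v 0)).congr_deriv ?_
        simp only [Pi.neg_apply]
        rw [← hf.eq t ht', ← d.eq t (hI t ht')]
        ring) hki
    simp only [intervalIntegral.integral_same, neg_zero, zero_mul, mul_zero, sub_zero] at key
    rw [← hf.eq _ (by norm_num), ← d.eq _ (by norm_num), d.W.one] at key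
    have hv2 : ∀ x ∈ Ioo (0:ℝ) 1, |(lam' - lam) * v x ^ 2| ≤ τ * 4 := by
      intro x hx
      rw [abs_mul, abs_pow]
      have h1 : |v x| ^ 2 ≤ 4 := by
        calc |v x| ^ 2 ≤ 2 ^ 2 := pow_le_pow_left₀ (abs_nonneg _) (hvb x hx) 2
          _ = 4 := by norm_num
      gcongr
    have hI2 : IntervalIntegrable (fun s => ω s * ((lam' - lam) * v s ^ 2)) volume 0 (1 / 2) :=
      ii_of (d.W.cont.mul (continuousOn_const.mul (hvco.pow 2))) (d.W.mul_bdd hv2) (by simp)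
        (by norm_num)
    have heq : v 0 * fd (1 / 2) * v (1 / 2) - v 0 * f (1 / 2) * vd (1 / 2)
        + (lam' - lam) * ∫ s in 0..(1 / 2 : ℝ), ω s * v s ^ 2
        = ∫ s in 0..(1 / 2 : ℝ), (v 0 * (ω s * (f s * (lam * U s - lam' * v s)))
          + ω s * ((lam' - lam) * v s ^ 2)) := by
      rw [intervalIntegral.integral_add hki hI2, key, ← intervalIntegral.integral_const_mul]
      congr 1
      · ring
      · congr 1; ext s; ring
    rw [heq]
    have hfin : ∀ s ∈ Ioo (0:ℝ) (1 / 2), |v 0 * (ω s * (f s * (lam * U s - lam' * v s)))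
          + ω s * ((lam' - lam) * v s ^ 2)|
          ≤ 2 ^ m * (Cb * Λ * (E * ε) + τ * (C3 * (τ + ε)) * 2) := by
      intro s hs
      have hs' : s ∈ Ioo (0:ℝ) 1 := ⟨hs.1, by linarith [hs.2]⟩
      have hz := s1' s ⟨hs.1.le, by linarith [hs.2]⟩
      have hv := hvb s hs'
      have hP : |v 0 * f s| ≤ Cb := by
        have h1 := abs_le.1 hz
        have h2 := abs_le.1 hv
        have : C3 * (τ + ε) ≤ C3 * 2 := mul_le_mul_of_nonneg_left (by linarith) hC30.le
        rw [hCb, abs_le]; constructor <;> linarith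
      have h1 : v 0 * (ω s * (f s * (lam * U s - lam' * v s)))
          + ω s * ((lam' - lam) * v s ^ 2) = ω s * ((v 0 * f s) * lam * (U s - v s)
            - (lam' - lam) * (v 0 * f s - v s) * v s) := by ring
      rw [h1, abs_mul, abs_of_pos (d.W.pos s hs')]
      have hω := d.W.le hs'
      have hω0 := d.W.pos s hs'
      gcongr
      refine (abs_sub _ _).trans ?_
      rw [abs_mul (v 0 * f s * lam), abs_mul (v 0 * f s), abs_mul _ (v s), abs_mul (lam' - lam),
        abs_of_pos hl]
      gcongr
      exact d.err s hs'
    refine (abs_int_le (by norm_num) hfin).trans ?_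
    have e1 : 0 ≤ 2 ^ m * (Cb * Λ * (E * ε) + τ * (C3 * (τ + ε)) * 2) := by positivity
    have e2 : 0 ≤ C3 * (τ * (τ + ε) + ε) := by positivity
    have e3 : 0 ≤ 2 ^ m * (Cb * Λ * E) * (τ * (τ + ε)) := by positivity
    have e4 : 0 ≤ 2 ^ m * (C3 * 2) * ε := by positivity
    linarith

lemma hdw_of_notMem {f : ℝ → ℝ} {f' x : ℝ} {s : Set ℝ} (h : x ∉ closure s) :
    HasDerivWithinAt f f' s x :=
  hasDerivWithinAt_iff_hasFDerivWithinAt.2 (HasFDerivWithinAt.of_notMem_closure h)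

lemma IVPsol.flux {m : ℕ} {ω : ℝ → ℝ} (h : Wt m ω) {lam : ℝ}
    {f fd : ℝ → ℝ} (hf : IVPsol ω lam f fd) {t : ℝ} (ht : t ∈ Ioo (0:ℝ) (3 / 4)) :
    HasDerivAt (fun t => ω t * fd t) (-(ω t * (lam * f t))) t := by
  have hI : ∀ t ∈ Ioo (0:ℝ) (3 / 4), t ∈ Ioo (0:ℝ) 1 := fun t ht => ⟨ht.1, by linarith [ht.2]⟩
  have hfi := hf.ii h (g := fun _ => lam) (C := |lam|) (t := 3 / 4) (by norm_num)
    continuousOn_const (fun _ _ => le_rfl)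
  have hfi' : IntervalIntegrable (fun s => ω s * (lam * f s)) volume 0 (3 / 4) := by
    simp_rw [mul_comm lam]; exact hfi
  have hfc : ContinuousOn (fun s => ω s * (lam * f s)) (Ioo 0 (3 / 4)) :=
    (h.cont.mono hI).mul (continuousOn_const.mul (hf.c.mono Ioo_subset_Icc_self))
  refine (ftcT hfi' hfc ht).neg.congr_of_eventuallyEq ?_
  filter_upwards [isOpen_Ioo.mem_nhds ht] with s hs
  exact hf.eq s hs

lemma glue {m : ℕ} {ω : ℝ → ℝ} (h : Wt m ω) {lam : ℝ} {f fd g gd : ℝ → ℝ}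
    (hf : IVPsol ω lam f fd) (hg : IVPsol (fun x => ω (1 - x)) lam g gd) {a b : ℝ}
    (hab : a ≠ 0 ∨ b ≠ 0) (h1 : a * f (1 / 2) = b * g (1 / 2))
    (h2 : a * fd (1 / 2) = -(b * gd (1 / 2))) : IsNeumannEigenvalue ω lam := by
  have hhalf : (1:ℝ) - 1 / 2 = 1 / 2 := by norm_num
  set φ : ℝ → ℝ := fun x => if x ≤ 1 / 2 then a * f x else b * g (1 - x) with hφ
  set φd : ℝ → ℝ := fun x => if x ≤ 1 / 2 then a * fd x else -(b * gd (1 - x)) with hφd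
  have φl : ∀ x, x ≤ 1 / 2 → φ x = a * f x := fun x hx => by simp only [hφ, if_pos hx]
  have φdl : ∀ x, x ≤ 1 / 2 → φd x = a * fd x := fun x hx => by simp only [hφd, if_pos hx]
  have φr : ∀ x, 1 / 2 ≤ x → φ x = b * g (1 - x) := fun x hx => by
    rcases hx.eq_or_lt with h0 | h0
    · subst h0; rw [φl _ le_rfl, h1, hhalf]
    · simp only [hφ, if_neg (not_le.2 h0)]
  have φdr : ∀ x, 1 / 2 ≤ x → φd x = -(b * gd (1 - x)) := fun x hx => by
    rcases hx.eq_or_lt with h0 | h0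
    · subst h0; rw [φdl _ le_rfl, h2, hhalf]
    · simp only [hφd, if_neg (not_le.2 h0)]
  have hu : Icc (0:ℝ) 1 = Icc 0 (1 / 2) ∪ Icc (1 / 2) 1 :=
    (Icc_union_Icc_eq_Icc (by norm_num) (by norm_num)).symm
  have hsubm : ∀ t, HasDerivAt (fun x : ℝ => 1 - x) (-1) t := fun t => by
    simpa using (hasDerivAt_id t).const_sub 1
  refine ⟨φ, φd, ?_, ?_, ?_, ?_, ?_, ?_⟩
  · intro x hx
    rw [hu]
    apply HasDerivWithinAt.union
    · rcases le_or_gt x (1 / 2) with hle | hgt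
      · have hx' : x ∈ Icc (0:ℝ) (3 / 4) := ⟨hx.1, by linarith⟩
        rw [φdl x hle]
        refine (((hf.D x hx').const_mul a).mono (Icc_subset_Icc_right (by norm_num))).congr
          (fun y hy => φl y hy.2) (φl x hle)
      · apply hdw_of_notMem
        rw [isClosed_Icc.closure_eq]
        exact fun hh => absurd hh.2 (not_le.2 hgt)
    · rcases le_or_gt (1 / 2) x with hle | hgt
      · have hx' : 1 - x ∈ Icc (0:ℝ) (3 / 4) := ⟨by linarith [hx.2], by linarith⟩
        rw [φdr x hle]
        have := ((hg.D (1 - x) hx').comp x (hsubm x).hasDerivWithinAt (s := Icc (1 / 2) 1)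
          (fun y hy => ⟨by linarith [hy.2], by linarith [hy.1]⟩)).const_mul b
        refine (this.congr (fun y hy => φr y hy.1) (φr x hle)).congr_deriv ?_
        ring
      · apply hdw_of_notMem
        rw [isClosed_Icc.closure_eq]
        exact fun hh => absurd hh.1 (not_le.2 hgt)
  · rw [hu]
    apply ContinuousOn.union_of_isClosed _ _ isClosed_Icc isClosed_Icc
    · exact (continuousOn_const.mul (hf.cd.mono (Icc_subset_Icc_right (by norm_num)))).congr
        (fun y hy => φdl y hy.2)
    · exact (continuousOn_const.mul (hg.cd.comp (by fun_prop)
        (fun y hy => ⟨by linarith [hy.2], by linarith [hy.1]⟩))).neg.congr (fun y hy => φdr y hy.1)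
  · rw [φdl 0 (by norm_num), hf.fd0, mul_zero]
  · rw [φdr 1 (by norm_num), sub_self, hg.fd0]; simp
  · rcases hab with h0 | h0
    · exact ⟨0, by simp, by rw [φl 0 (by norm_num), hf.f0]; simpa using h0⟩
    · exact ⟨1, by simp, by rw [φr 1 (by norm_num), sub_self, hg.f0]; simpa using h0⟩
  · intro x hx
    have hu2 : Ioc (0:ℝ) (1 / 2) ∪ Ico (1 / 2) 1 ∈ 𝓝 x := by
      rw [Ioc_union_Ico_eq_Ioo (by norm_num) (by norm_num)]
      exact isOpen_Ioo.mem_nhds hx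
    refine HasDerivWithinAt.hasDerivAt (HasDerivWithinAt.union ?_ ?_) hu2
    · rcases le_or_gt x (1 / 2) with hle | hgt
      · have hx' : x ∈ Ioo (0:ℝ) (3 / 4) := ⟨hx.1, by linarith⟩
        rw [φl x hle]
        refine (((hf.flux h hx').const_mul a).hasDerivWithinAt.congr (fun y hy => ?_) ?_).congr_deriv ?_
        · rw [φdl y hy.2]; ring
        · rw [φdl x hle]; ring
        · ring
      · apply hdw_of_notMem
        intro hh
        have := closure_minimal (Ioc_subset_Icc_self (a := (0:ℝ)) (b := 1 / 2)) isClosed_Icc hh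
        exact absurd this.2 (not_le.2 hgt)
    · rcases le_or_gt (1 / 2) x with hle | hgt
      · have hx' : 1 - x ∈ Ioo (0:ℝ) (3 / 4) := ⟨by linarith [hx.2], by linarith⟩
        rw [φr x hle]
        have := ((hg.flux h.rev hx').comp x (hsubm x)).const_mul (-b)
        refine (this.hasDerivWithinAt.congr (fun y hy => ?_) ?_).congr_deriv ?_
        · rw [φdr y hy.1]; simp; ring
        · rw [φdr x hle]; simp; ring
        · simp; ring
      · apply hdw_of_notMem
        intro hh
        have := closure_minimal (Ico_subset_Icc_self : Ico (1 / 2:ℝ) 1 ⊆ _) isClosed_Icc hh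
        exact absurd this.1 (not_le.2 hgt)

lemma ivp' {m : ℕ} {ω : ℝ → ℝ} (h : Wt m ω) {lam : ℝ} (hl : 0 < lam) :
    ∃ f fd, IVPsol ω lam f fd := by
  obtain ⟨f, fd, h1, h2, h3, h4, h5, h6⟩ := ivp h hl
  exact ⟨f, fd, h1, h2, h3, h4, h5, h6⟩

def lipC (m : ℕ) (Λ : ℝ) : ℝ :=
  (4^m*Λ+1)*(2*(4^m*(2*Real.exp (2*(4^m*Λ))))*Real.exp (2*(4^m*Λ))) + 4^m*(2*Real.exp (2*(4^m*Λ)))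

set_option maxHeartbeats 1000000 in
lemma exEig (m : ℕ) {a0 C1 E : ℝ} (ha : 0 < a0) (hC1 : 0 < C1) (hE : 0 < E) :
    ∃ B > (0:ℝ), ∃ e > (0:ℝ), ∀ ε ω U v vd lam, Dat m a0 C1 E ε ω U v vd lam →
    ε < e → ∃ μ', 0 < μ' ∧ μ' ≤ lam + B * ε ∧ IsNeumannEigenvalue ω μ' := by
  obtain ⟨c, hc, C4, hC4, e1, he1, H⟩ := leftPack m ha hC1 hE
  set B := 2 * C4 / c with hB
  have hB0 : 0 < B := by positivity
  set Q := 2 * C4 * B * (1 + B) + 2 * C4 ^ 2 * (1 + B) ^ 2 with hQ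
  have hQ0 : 0 < Q := by positivity
  refine ⟨B, hB0, min e1 (min (1 / B) (min (a0 / 2 ^ m / B) (2 * C4 / Q))), by positivity, ?_⟩
  intro ε ω U v vd lam d he
  have k1 : ε < e1 := he.trans_le (min_le_left _ _)
  have k2 : B * ε < 1 := by
    have := he.trans_le ((min_le_right _ _).trans (min_le_left _ _))
    rw [lt_div_iff₀ (by positivity)] at this
    linarith
  have k3 : B * ε < a0 / 2 ^ m := by
    have := he.trans_le ((min_le_right _ _).trans ((min_le_right _ _).trans (min_le_left _ _)))
    rw [lt_div_iff₀ (by positivity)] at this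
    linarith
  have k4 : Q * ε < 2 * C4 := by
    have := he.trans_le ((min_le_right _ _).trans ((min_le_right _ _).trans (min_le_right _ _)))
    rw [lt_div_iff₀ (by positivity)] at this
    linarith
  have hε := d.eps
  have hlg := d.lam_ge
  have hBε : 0 < B * ε := by positivity
  have hW := d.W
  choose! F Fd hF using fun l (hl : (0:ℝ) < l) => ivp' hW hl
  choose! R Rd hR using fun l (hl : (0:ℝ) < l) => ivp' hW.rev hl
  set D : ℝ → ℝ := fun l => (v 0 * v 1) * (Fd l (1 / 2) * R l (1 / 2) + F l (1 / 2) * Rd l (1 / 2))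
    with hD
  have hcont : ∀ G : ℝ → ℝ, (∃ C, ∀ x ∈ Icc (lam - B * ε) (lam + B * ε),
      ∀ y ∈ Icc (lam - B * ε) (lam + B * ε), |G x - G y| ≤ C * |x - y|) →
      ContinuousOn G (Icc (lam - B * ε) (lam + B * ε)) := by
    rintro G ⟨C, hC⟩
    have : LipschitzOnWith C.toNNReal G (Icc (lam - B * ε) (lam + B * ε)) := by
      apply LipschitzOnWith.of_dist_le_mul
      intro x hx y hy
      rw [Real.dist_eq, Real.dist_eq]
      refine (hC x hx y hy).trans ?_
      gcongr
      exact Real.le_coe_toNNReal C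
    exact this.continuousOn
  have hlp : ∀ x ∈ Icc (lam - B * ε) (lam + B * ε), 0 < x := fun x hx => by linarith [hx.1]
  have c1 : ContinuousOn (fun l => F l (1 / 2)) (Icc (lam - B * ε) (lam + B * ε)) := by
    apply hcont
    refine ⟨lipC m (lam + B * ε), fun x hx y hy => ?_⟩
    obtain ⟨C, hC, h1, h2⟩ := ivp_lip hW (hlp x hx) hx.2 (hlp y hy) hy.2 (hF x (hlp x hx))
      (hF y (hlp y hy))
    rw [hC] at h1; exact h1
  have c2 : ContinuousOn (fun l => Fd l (1 / 2)) (Icc (lam - B * ε) (lam + B * ε)) := by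
    apply hcont
    refine ⟨lipC m (lam + B * ε), fun x hx y hy => ?_⟩
    obtain ⟨C, hC, h1, h2⟩ := ivp_lip hW (hlp x hx) hx.2 (hlp y hy) hy.2 (hF x (hlp x hx))
      (hF y (hlp y hy))
    rw [hC] at h2; exact h2
  have c3 : ContinuousOn (fun l => R l (1 / 2)) (Icc (lam - B * ε) (lam + B * ε)) := by
    apply hcont
    refine ⟨lipC m (lam + B * ε), fun x hx y hy => ?_⟩
    obtain ⟨C, hC, h1, h2⟩ := ivp_lip hW.rev (hlp x hx) hx.2 (hlp y hy) hy.2 (hR x (hlp x hx))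
      (hR y (hlp y hy))
    rw [hC] at h1; exact h1
  have c4 : ContinuousOn (fun l => Rd l (1 / 2)) (Icc (lam - B * ε) (lam + B * ε)) := by
    apply hcont
    refine ⟨lipC m (lam + B * ε), fun x hx y hy => ?_⟩
    obtain ⟨C, hC, h1, h2⟩ := ivp_lip hW.rev (hlp x hx) hx.2 (hlp y hy) hy.2 (hR x (hlp x hx))
      (hR y (hlp y hy))
    rw [hC] at h2; exact h2
  have hDc : ContinuousOn D (Icc (lam - B * ε) (lam + B * ε)) :=
    continuousOn_const.mul ((c2.mul c3).add (c1.mul c4))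
  -- the expansion of D
  have hexp : ∀ l, 0 < l → |l - lam| = B * ε → ∃ J, 2 * c ≤ J ∧
      |D l + (l - lam) * J| ≤ 4 * C4 * ε := by
    intro l hl hle
    obtain ⟨p1, p2, I, hI, p3⟩ := H ε ω U v vd lam d k1 l (F l) (Fd l) hl (by rw [hle]; exact k2.le)
      (hF l hl)
    obtain ⟨q1, q2, I', hI', q3⟩ := H _ _ _ _ _ _ d.rev k1 l (R l) (Rd l) hl
      (by rw [hle]; exact k2.le) (hR l hl)
    have hhalf : (1:ℝ) - 1 / 2 = 1 / 2 := by norm_num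
    simp only [sub_zero, hhalf] at q1 q2 q3
    rw [hle] at p1 p2 p3 q1 q2 q3
    refine ⟨I + I', by linarith, ?_⟩
    set x := v (1 / 2)
    set y := vd (1 / 2)
    set P := v 0 * F l (1 / 2) with hP
    set P' := v 0 * Fd l (1 / 2) with hP'
    set S := -v 1 * R l (1 / 2) with hS
    set S' := -v 1 * Rd l (1 / 2) with hS'
    have e1 : D l + (l - lam) * (I + I') = (P' * x - P * y + (l - lam) * I)
        + (S' * -x - S * y + (l - lam) * I')
        + ((P' - y) * (-(S - -x)) - (P - x) * (S' - y)) := by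
      simp only [hD, hP, hP', hS, hS']; ring
    have e2 : |(P' - y) * (-(S - -x))| ≤ (C4 * (B * ε + ε)) * (C4 * (B * ε + ε)) := by
      rw [abs_mul, abs_neg]
      gcongr
    have e3 : |(P - x) * (S' - y)| ≤ (C4 * (B * ε + ε)) * (C4 * (B * ε + ε)) := by
      rw [abs_mul]
      gcongr
    rw [e1]
    have f1 := abs_le.1 p3
    have f2 := abs_le.1 q3
    have f3 := abs_le.1 e2
    have f4 := abs_le.1 e3
    have f5 : 2 * (C4 * (B * ε * (B * ε + ε) + ε)) +
        2 * ((C4 * (B * ε + ε)) * (C4 * (B * ε + ε))) = 2 * C4 * ε + (Q * ε) * ε := by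
      rw [hQ]; ring
    have f6 : (Q * ε) * ε ≤ 2 * C4 * ε := by gcongr
    rw [abs_le]
    constructor <;> linarith [f1.1, f1.2, f2.1, f2.2, f3.1, f3.2, f4.1, f4.2]
  have hcB : c * B = 2 * C4 := by rw [hB]; field_simp
  have hD1 : 0 ≤ D (lam - B * ε) := by
    obtain ⟨J, hJ, h1⟩ := hexp (lam - B * ε) (by linarith)
      (by rw [show lam - B * ε - lam = -(B * ε) by ring, abs_neg, abs_of_pos hBε])
    have h2 := (abs_le.1 h1).1
    have h3 : (B * ε) * (2 * c) ≤ (B * ε) * J := by gcongr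
    have h4 : (B * ε) * (2 * c) = 4 * C4 * ε := by
      rw [show (B * ε) * (2 * c) = 2 * (c * B) * ε by ring, hcB]; ring
    have h5 : (lam - B * ε - lam) * J = -((B * ε) * J) := by ring
    linarith
  have hD2 : D (lam + B * ε) ≤ 0 := by
    obtain ⟨J, hJ, h1⟩ := hexp (lam + B * ε) (by linarith)
      (by rw [show lam + B * ε - lam = (B * ε) by ring, abs_of_pos hBε])
    have h2 := (abs_le.1 h1).2
    have h3 : (B * ε) * (2 * c) ≤ (B * ε) * J := by gcongr
    have h4 : (B * ε) * (2 * c) = 4 * C4 * ε := by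
      rw [show (B * ε) * (2 * c) = 2 * (c * B) * ε by ring, hcB]; ring
    have h5 : (lam + B * ε - lam) * J = ((B * ε) * J) := by ring
    linarith
  obtain ⟨l, hl, hl0⟩ := intermediate_value_Icc' (by linarith) hDc ⟨hD2, hD1⟩
  have hlpos := hlp l hl
  refine ⟨l, hlpos, hl.2, ?_⟩
  have hv0 := d.v0
  have hv1 := d.v1
  have hz : Fd l (1 / 2) * R l (1 / 2) + F l (1 / 2) * Rd l (1 / 2) = 0 := by
    simp only [hD] at hl0
    rcases mul_eq_zero.1 hl0 with h | h
    · rcases mul_eq_zero.1 h with h | h <;> linarith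
    · exact h
  have hFl := hF l hlpos
  have hRl := hR l hlpos
  by_cases hA : R l (1 / 2) ≠ 0 ∨ F l (1 / 2) ≠ 0
  · exact glue hW hFl hRl hA (mul_comm _ _) (by linarith)
  · push Not at hA
    by_cases hA2 : Rd l (1 / 2) ≠ 0 ∨ -Fd l (1 / 2) ≠ 0
    · exact glue hW hFl hRl hA2 (by rw [hA.1, hA.2]; simp) (by ring)
    · push Not at hA2
      exact glue hW hFl hRl (a := 1) (b := 0) (by simp) (by rw [hA.2]; simp)
        (by rw [neg_eq_zero.1 hA2.2]; simp)

lemma mvt_abs {a b B : ℝ} (hab : a ≤ b) {z zd : ℝ → ℝ} (hc : ContinuousOn z (Icc a b))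
    (hd : ∀ t ∈ Ioo a b, HasDerivAt z (zd t) t) (hB : ∀ t ∈ Ioo a b, |zd t| ≤ B) :
    |z b - z a| ≤ B * (b - a) := by
  rcases hab.eq_or_lt with h | h
  · subst h; simp
  · obtain ⟨c, hc', he⟩ := exists_hasDerivAt_eq_slope z zd h hc hd
    have h1 : z b - z a = zd c * (b - a) := by
      rw [he]; field_simp [(sub_pos.2 h).ne']
    rw [h1, abs_mul, abs_of_pos (sub_pos.2 h)]
    exact mul_le_mul_of_nonneg_right (hB c hc') (sub_pos.2 h).le

lemma stabG (m : ℕ) {Λ : ℝ} (hΛ : 0 < Λ) : ∃ C > (0:ℝ), ∀ (ω : ℝ → ℝ) (_ : Wt m ω)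
    (z zd r : ℝ → ℝ) (B : ℝ), 0 ≤ B → ContinuousOn z (Icc 0 1) →
    (∀ t ∈ Ioo (0:ℝ) 1, HasDerivAt z (zd t) t) →
    (∀ t ∈ Ioo (0:ℝ) 1, ω t * zd t = - ∫ s in 0..t, ω s * r s) →
    (∀ t ∈ Ioo (0:ℝ) 1, ω t * zd t = ∫ s in t..1, ω s * r s) →
    (∀ t ∈ Ioo (0:ℝ) 1, |r t| ≤ Λ * |z t| + B) →
    ∀ t ∈ Icc (0:ℝ) 1, |z t| ≤ C * (|z 0| + B) := by
  set δ : ℝ := 1 / (2 ^ (m + 1) * (Λ + 1)) with hδ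
  have hδ0 : 0 < δ := by positivity
  have hp1 : (1:ℝ) ≤ 2 ^ m := one_le_pow₀ (by norm_num)
  have hδm : 2 ^ m * δ * (2 * (Λ + 1)) = 1 := by
    rw [hδ, pow_succ]; field_simp
  have hδ1 : 2 ^ m * δ ≤ 1 / 2 := by
    have : 0 < 2 ^ m * δ := by positivity
    nlinarith
  have hδ2 : δ ≤ 1 / 2 := by nlinarith
  have hδ3 : 2 ^ m * δ * Λ ≤ 1 / 2 := by
    have : 0 < 2 ^ m * δ := by positivity
    nlinarith
  set K : ℝ := (1 / δ) ^ m with hK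
  have hK0 : 0 < K := by positivity
  set X := Real.exp (2 * (K * Λ)) with hX
  have hX0 : 0 < X := Real.exp_pos _
  refine ⟨2 * (2 * (1 + K) * X + 1), by positivity, ?_⟩
  intro ω hW z zd r B hB hc hd he he2 hr
  have hI : ∀ t ∈ Ioo 0 (1 - δ), t ∈ Ioo (0:ℝ) 1 := fun t ht => ⟨ht.1, by linarith [ht.2]⟩
  obtain ⟨s1, -⟩ := stabL (ω := ω) (K := K) (Λ := Λ) (B := B) (T := 1 - δ) hK0 hΛ hB (by linarith)
    (by linarith) (fun t ht => hW.pos t (hI t ht)) (fun s t h1 h2 h3 => by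
      have := hW.left (T := 1 - δ) (by linarith) h1 h2 h3.le
      rwa [sub_sub_cancel] at this) (z := z) (zd := zd) (r := r)
      (hc.mono (Icc_subset_Icc_right (by linarith))) (fun t ht => hd t (hI t ht))
      (fun t ht => he t (hI t ht)) (fun t ht => hr t (hI t ht))
  obtain ⟨t0, ht0, hmax⟩ := isCompact_Icc.exists_isMaxOn (nonempty_Icc.2 (zero_le_one' ℝ)) hc.abs
  have hmax : ∀ t ∈ Icc (0:ℝ) 1, |z t| ≤ |z t0| := fun t ht => hmax ht
  set S := |z t0| with hS
  have hS0 : 0 ≤ S := abs_nonneg _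
  have hS1 : S ≤ 2 * (|z 0| + K * B) * X + S / 2 + B := by
    rcases le_or_gt t0 (1 - δ) with h | h
    · have := s1 t0 ⟨ht0.1, h⟩
      linarith
    · have hzd : ∀ t ∈ Ioo (1 - δ) t0, |zd t| ≤ 2 ^ m * (Λ * S + B) := by
        intro t ht
        have ht' : t ∈ Ioo (0:ℝ) 1 := ⟨by linarith [ht.1], ht.2.trans_le ht0.2⟩
        have hpt := hW.pos t ht'
        have h1 : |∫ s in t..1, ω s * r s| ≤ (2 ^ m * ω t * (Λ * S + B)) * (1 - t) := by
          apply abs_int_le ht'.2.le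
          intro s hs
          have hs' : s ∈ Ioo (0:ℝ) 1 := ⟨ht'.1.trans hs.1, hs.2⟩
          have hps := hW.pos s hs'
          rw [abs_mul, abs_of_pos hps]
          gcongr
          · have := hW.right (T := 1 / 2) (by norm_num) (s := t) (by linarith [ht.1]) hs.1.le hs.2
            norm_num at this; exact this
          · exact (hr s hs').trans (by gcongr; exact hmax s ⟨hs'.1.le, hs'.2.le⟩)
        rw [← he2 t ht', abs_mul, abs_of_pos hpt] at h1
        apply le_of_mul_le_mul_left _ hpt
        refine h1.trans ?_
        have : 0 ≤ 2 ^ m * ω t * (Λ * S + B) := by positivity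
        nlinarith [ht'.1]
      have h2 := mvt_abs h.le (hc.mono (Icc_subset_Icc (by linarith) ht0.2))
        (fun t ht => hd t ⟨by linarith [ht.1], ht.2.trans_le ht0.2⟩) hzd
      have h3 := s1 (1 - δ) ⟨by linarith, le_rfl⟩
      have h4 : 2 ^ m * (Λ * S + B) * (t0 - (1 - δ)) ≤ 2 ^ m * (Λ * S + B) * δ := by
        gcongr; linarith [ht0.2]
      have h5 : 2 ^ m * (Λ * S + B) * δ ≤ S / 2 + B := by
        have : 2 ^ m * (Λ * S + B) * δ = (2 ^ m * δ * Λ) * S + (2 ^ m * δ) * B := by ring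
        rw [this]
        nlinarith
      have h6 : |z t0| ≤ |z (1 - δ)| + |z t0 - z (1 - δ)| := by
        have := abs_add_le (z (1 - δ)) (z t0 - z (1 - δ))
        simpa using this
      rw [hS]; rw [← hS]; linarith
  intro t ht
  refine (hmax t ht).trans ?_
  have h0 := abs_nonneg (z 0)
  have : 0 ≤ 4 * X * K * |z 0| := by positivity
  have : 0 ≤ 4 * X * B := by positivity
  nlinarith

lemma neu_flux {m : ℕ} {ω : ℝ → ℝ} (hW : Wt m ω) {μ : ℝ} {φ φd : ℝ → ℝ}
    (h : NeumannSol ω μ φ φd) : ContinuousOn φ (Icc 0 1) ∧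
    ContinuousOn (fun t => ω t * φd t) (Icc 0 1) ∧
    (∀ a ∈ Icc (0:ℝ) 1, ∀ b ∈ Icc (0:ℝ) 1,
      IntervalIntegrable (fun s => ω s * (μ * φ s)) volume a b) ∧
    (∀ t ∈ Icc (0:ℝ) 1, ω t * φd t = - ∫ s in 0..t, ω s * (μ * φ s)) ∧
    (∀ t ∈ Icc (0:ℝ) 1, ω t * φd t = ∫ s in t..1, ω s * (μ * φ s)) := by
  obtain ⟨hD, hc, h0, h1, -, hf⟩ := h
  have hφ : ContinuousOn φ (Icc 0 1) := fun x hx => (hD x hx).continuousWithinAt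
  have hend : ∀ p ∈ Icc (0:ℝ) 1, φd p = 0 →
      ContinuousWithinAt (fun t => ω t * φd t) (Icc 0 1) p := by
    intro p hp hp0
    unfold ContinuousWithinAt
    simp only [hp0, mul_zero]
    have h2 : Tendsto (fun t => (2 ^ m + |ω 0| + |ω 1|) * |φd t|) (𝓝[Icc 0 1] p) (𝓝 0) := by
      have := (((hc p hp).abs).tendsto).const_mul (2 ^ m + |ω 0| + |ω 1|)
      simpa [hp0] using this
    apply squeeze_zero_norm' _ h2
    filter_upwards [self_mem_nhdsWithin] with t ht
    rw [norm_mul, Real.norm_eq_abs, Real.norm_eq_abs]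
    gcongr
    have hm : (0:ℝ) ≤ 2 ^ m := by positivity
    have a0 := abs_nonneg (ω 0)
    have a1 := abs_nonneg (ω 1)
    rcases ht.1.eq_or_lt with e | e
    · rw [← e]; linarith
    · rcases ht.2.eq_or_lt with e2 | e2
      · rw [e2]; linarith
      · rw [abs_of_pos (hW.pos t ⟨e, e2⟩)]
        have := hW.le ⟨e, e2⟩
        linarith
  have hF : ContinuousOn (fun t => ω t * φd t) (Icc 0 1) := by
    intro p hp
    rcases hp.1.eq_or_lt with e | e
    · exact hend p hp (by rw [← e]; exact h0)
    · rcases hp.2.eq_or_lt with e2 | e2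
      · exact hend p hp (by rw [e2]; exact h1)
      · exact (hf p ⟨e, e2⟩).continuousAt.continuousWithinAt
  obtain ⟨C, hC⟩ := isCompact_Icc.exists_bound_of_continuousOn hφ
  have hii : ∀ a ∈ Icc (0:ℝ) 1, ∀ b ∈ Icc (0:ℝ) 1,
      IntervalIntegrable (fun s => ω s * (μ * φ s)) volume a b := by
    intro a ha b hb
    refine ii_of (C := 2 ^ m * (|μ| * C))
      (hW.cont.mul (continuousOn_const.mul (hφ.mono Ioo_subset_Icc_self))) (hW.mul_bdd ?_) ha hb
    intro x hx
    simp only [Pi.mul_apply]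
    rw [abs_mul]
    gcongr
    exact hC x ⟨hx.1.le, hx.2.le⟩
  have key : ∀ a ∈ Icc (0:ℝ) 1, ∀ b ∈ Icc (0:ℝ) 1, a ≤ b →
      ∫ s in a..b, -(ω s * (μ * φ s)) = ω b * φd b - ω a * φd a := by
    intro a ha b hb hab
    refine intervalIntegral.integral_eq_sub_of_hasDerivAt_of_le hab
      (hF.mono (Icc_subset_Icc ha.1 hb.2)) (fun x hx => ?_) (hii a ha b hb).neg
    exact (hf x ⟨ha.1.trans_lt hx.1, hx.2.trans_le hb.2⟩).congr_deriv (by ring)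
  refine ⟨hφ, hF, hii, fun t ht => ?_, fun t ht => ?_⟩
  · have := key 0 (by simp) t ht ht.1
    rw [h0, intervalIntegral.integral_neg] at this
    linarith
  · have := key t ht 1 (by simp) ht.2
    rw [h1, intervalIntegral.integral_neg] at this
    linarith

set_option maxHeartbeats 1000000 in
lemma oneD (m : ℕ) {a0 C1 E : ℝ} (ha : 0 < a0) (hC1 : 0 < C1) (hE : 0 < E) :
    ∃ C > (0:ℝ), ∃ e > (0:ℝ), ∀ ε ω U v vd lam μ φ φd, Dat m a0 C1 E ε ω U v vd lam →
    ε < e → lam ≤ μ → NeumannSol ω μ φ φd →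
    (∀ μ', 0 < μ' → IsNeumannEigenvalue ω μ' → μ ≤ μ') → φ 0 = v 0 →
    ∀ x ∈ Ioo (0:ℝ) 1, |U x - φ x| ≤ C * ε := by
  obtain ⟨B, hB, e1, he1, H⟩ := exEig m ha hC1 hE
  have hd0 : 0 < dlt a0 C1 := lt_min (by norm_num) (by positivity)
  have hL0 : 0 < Lbd m a0 C1 := by unfold Lbd; positivity
  set Λ := Lbd m a0 C1 + 1 with hΛ
  have hΛ0 : 0 < Λ := by positivity
  obtain ⟨Cs, hCs, G⟩ := stabG m hΛ0
  refine ⟨E + Cs * (Λ * E + B * (Cs * (2 + C1))), by positivity,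
    min e1 (min (1 / B) (min (a0 / (4 * E)) (1 / E))), by positivity, ?_⟩
  intro ε ω U v vd lam μ φ φd d he hlm hφ hmin h0
  have k1 : ε < e1 := he.trans_le (min_le_left _ _)
  have k2 : B * ε < 1 := by
    have := he.trans_le ((min_le_right _ _).trans (min_le_left _ _))
    rw [lt_div_iff₀ (by positivity)] at this
    linarith
  have k3 : E * ε ≤ a0 / 4 := by
    have := he.trans_le ((min_le_right _ _).trans ((min_le_right _ _).trans (min_le_left _ _)))
    rw [lt_div_iff₀ (by positivity)] at this
    linarith
  have k4 : E * ε ≤ 1 := by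
    have := he.trans_le ((min_le_right _ _).trans ((min_le_right _ _).trans (min_le_right _ _)))
    rw [lt_div_iff₀ (by positivity)] at this
    linarith
  have hε := d.eps
  have hl := d.lpos
  have hlL := d.lam_le ha hC1 k3
  obtain ⟨μ', hμ'0, hμ'1, hμ'2⟩ := H ε ω U v vd lam d k1
  have hμ : μ ≤ lam + B * ε := (hmin μ' hμ'0 hμ'2).trans hμ'1
  have hμ0 : 0 < μ := by linarith
  have hμΛ : μ ≤ Λ := by linarith
  obtain ⟨f1, f2, f3, f4, f5⟩ := neu_flux d.W hφ
  have hIc : ∀ t ∈ Ioo (0:ℝ) 1, t ∈ Icc (0:ℝ) 1 := fun t ht => ⟨ht.1.le, ht.2.le⟩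
  have hφD : ∀ t ∈ Ioo (0:ℝ) 1, HasDerivAt φ (φd t) t := fun t ht =>
    (hφ.1 t (hIc t ht)).hasDerivAt (Icc_mem_nhds ht.1 ht.2)
  have hv0 : |v 0| ≤ 2 + C1 := by
    have h1 := mvt_abs (a := 0) (b := 1 / 2) (by norm_num)
      (d.vc.mono (Icc_subset_Icc_right (by norm_num)))
      (fun t ht => d.vD t ⟨ht.1, by linarith [ht.2]⟩)
      (fun t ht => d.vdb t ⟨ht.1, by linarith [ht.2]⟩)
    have h2 := abs_le.1 (d.err (1 / 2) (by norm_num))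
    have h3 := abs_le.1 (d.Ub (1 / 2) (by norm_num))
    have h4 := abs_le.1 h1
    rw [abs_le]; constructor <;> linarith
  have hφb : ∀ t ∈ Icc (0:ℝ) 1, |φ t| ≤ Cs * (2 + C1) := by
    intro t ht
    have := G ω d.W φ φd (fun s => μ * φ s) 0 le_rfl f1 hφD (fun t ht => f4 t (hIc t ht))
      (fun t ht => f5 t (hIc t ht)) (fun t _ => by
        rw [abs_mul, abs_of_pos hμ0, add_zero]; gcongr) t ht
    refine this.trans ?_
    rw [h0, add_zero]; gcongr
  have heq2 : ∀ t ∈ Ioo (0:ℝ) 1, ω t * vd t = ∫ s in t..1, ω s * (lam * U s) := by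
    intro t ht
    have h1 := intervalIntegral.integral_add_adjacent_intervals
      (d.ωU (a := 0) (b := t) (by simp) (hIc t ht)) (d.ωU (a := t) (b := 1) (hIc t ht) (by simp))
    have h2 : ∫ s in (0:ℝ)..1, ω s * (lam * U s) = 0 := by
      have : ∀ s, ω s * (lam * U s) = lam * (ω s * U s) := fun s => by ring
      simp_rw [this]
      rw [intervalIntegral.integral_const_mul, d.mean, mul_zero]
    rw [d.eq t ht]; linarith
  intro x hx
  have hz := G ω d.W (fun t => v t - φ t) (fun t => vd t - φd t) (fun t => lam * U t - μ * φ t)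
    (Λ * (E * ε) + B * ε * (Cs * (2 + C1))) (by positivity) (d.vc.sub f1)
    (fun t ht => (d.vD t ht).sub (hφD t ht)) (fun t ht => by
      simp_rw [mul_sub]
      rw [intervalIntegral.integral_sub (d.ωU (by simp) (hIc t ht)) (f3 _ (by simp) _ (hIc t ht)),
        d.eq t ht, f4 t (hIc t ht)]
      ring) (fun t ht => by
      simp_rw [mul_sub]
      rw [intervalIntegral.integral_sub (d.ωU (hIc t ht) (by simp)) (f3 _ (hIc t ht) _ (by simp)),
        heq2 t ht, f5 t (hIc t ht)]) (fun t ht => by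
      have h1 : lam * U t - μ * φ t = lam * (v t - φ t) + (lam * (U t - v t) - (μ - lam) * φ t) := by
        ring
      rw [h1]
      refine (abs_add_le _ _).trans ?_
      rw [abs_mul, abs_of_pos hl]
      have h2 : |lam * (U t - v t) - (μ - lam) * φ t|
          ≤ Λ * (E * ε) + B * ε * (Cs * (2 + C1)) := by
        refine (abs_sub _ _).trans ?_
        rw [abs_mul, abs_mul, abs_of_pos hl, abs_of_nonneg (by linarith : 0 ≤ μ - lam)]
        gcongr
        · linarith
        · exact d.err t ht
        · linarith
        · exact hφb t (hIc t ht)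
      gcongr
      linarith) x (hIc x hx)
  simp only [h0, sub_self, abs_zero, zero_add] at hz
  have h1 := abs_le.1 (d.err x hx)
  have h2 := abs_le.1 hz
  have h3 : (E + Cs * (Λ * E + B * (Cs * (2 + C1)))) * ε
      = E * ε + Cs * (Λ * (E * ε) + B * ε * (Cs * (2 + C1))) := by ring
  rw [h3, abs_le]
  constructor <;> linarith [h1.1, h1.2, h2.1, h2.2]

lemma mkPt_zero {m : ℕ} (x : ℝ) (y : EuclideanSpace ℝ (Fin m)) : mkPt m x y 0 = x := by
  simp [mkPt, EuclideanSpace.equiv]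

lemma mkPt_succ {m : ℕ} (x : ℝ) (y : EuclideanSpace ℝ (Fin m)) (i : Fin m) :
    mkPt m x y i.succ = y i := by
  simp [mkPt, EuclideanSpace.equiv]

lemma mkPt_comb {m : ℕ} (a b x x' : ℝ) (y y' : EuclideanSpace ℝ (Fin m)) :
    a • mkPt m x y + b • mkPt m x' y' = mkPt m (a * x + b * x') (a • y + b • y') := by
  ext i
  refine Fin.cases ?_ (fun i => ?_) i
  · simp [mkPt_zero]
  · simp [mkPt_succ]

lemma mkPt_sub {m : ℕ} (x x' : ℝ) (y y' : EuclideanSpace ℝ (Fin m)) :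
    mkPt m x y - mkPt m x' y' = mkPt m (x - x') (y - y') := by
  ext i
  refine Fin.cases ?_ (fun i => ?_) i
  · simp [mkPt_zero]
  · simp [mkPt_succ]

lemma mkPt_norm_sq {m : ℕ} (x : ℝ) (y : EuclideanSpace ℝ (Fin m)) :
    ‖mkPt m x y‖ ^ 2 = x ^ 2 + ‖y‖ ^ 2 := by
  rw [EuclideanSpace.real_norm_sq_eq, EuclideanSpace.real_norm_sq_eq, Fin.sum_univ_succ]
  simp [mkPt_zero, mkPt_succ]

lemma mkPt_norm_le {m : ℕ} (x : ℝ) (y : EuclideanSpace ℝ (Fin m)) :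
    ‖mkPt m x y‖ ≤ |x| + ‖y‖ := by
  apply le_of_sq_le_sq _ (by positivity)
  rw [mkPt_norm_sq, add_sq, sq_abs]
  have : 0 ≤ 2 * |x| * ‖y‖ := by positivity
  linarith

lemma mkPt_cont {m : ℕ} : Continuous (fun p : ℝ × EuclideanSpace ℝ (Fin m) => mkPt m p.1 p.2) := by
  unfold mkPt
  apply (EuclideanSpace.equiv (Fin (m+1)) ℝ).symm.continuous.comp
  refine continuous_pi fun i => ?_
  refine Fin.cases ?_ (fun i => ?_) i
  · simpa using continuous_fst
  · simp only [Fin.cons_succ]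
    exact (continuous_apply i).comp ((EuclideanSpace.equiv (Fin m) ℝ).continuous.comp continuous_snd)

lemma mkPt_surj {m : ℕ} (p : EuclideanSpace ℝ (Fin (m+1))) : ∃ y, p = mkPt m (p 0) y := by
  refine ⟨(EuclideanSpace.equiv (Fin m) ℝ).symm (fun i => p i.succ), ?_⟩
  ext i
  refine Fin.cases ?_ (fun i => ?_) i
  · simp [mkPt_zero]
  · simp [mkPt_succ, EuclideanSpace.equiv]

def mkE (m : ℕ) : (ℝ × EuclideanSpace ℝ (Fin m)) ≃ᵐ EuclideanSpace ℝ (Fin (m+1)) :=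
  (((MeasurableEquiv.refl ℝ).prodCongr (MeasurableEquiv.toLp 2 (Fin m → ℝ)).symm).trans
    (MeasurableEquiv.piFinSuccAbove (fun _ : Fin (m+1) => ℝ) 0).symm).trans
    (MeasurableEquiv.toLp 2 (Fin (m+1) → ℝ))

lemma mkE_apply {m : ℕ} (p : ℝ × EuclideanSpace ℝ (Fin m)) : mkE m p = mkPt m p.1 p.2 := by
  ext i
  refine Fin.cases ?_ (fun i => ?_) i
  · simp [mkPt_zero, mkE, MeasurableEquiv.piFinSuccAbove]; rfl
  · simp [mkPt_succ, mkE, MeasurableEquiv.piFinSuccAbove]; rfl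

lemma mkE_mp (m : ℕ) : MeasurePreserving (mkE m) (volume.prod volume) volume := by
  unfold mkE
  refine MeasurePreserving.trans (MeasurePreserving.trans (μb := volume) ?_ ?_) ?_ (μb := volume)
  · exact (MeasurePreserving.id volume).prod
      (EuclideanSpace.volume_preserving_symm_measurableEquiv_toLp (Fin m))
  · exact (volume_preserving_piFinSuccAbove (fun _ : Fin (m+1) => ℝ) 0).symm _
  · exact PiLp.volume_preserving_toLp (Fin (m+1))

structure Dom (m : ℕ) (ε : ℝ) (Ω : Set (EuclideanSpace ℝ (Fin (m+1)))) : Prop where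
  op : IsOpen Ω
  cv : Convex ℝ Ω
  bd : Bornology.IsBounded Ω
  sub : ∀ x y, mkPt m x y ∈ Ω →
        x ∈ Ioo (0:ℝ) 1 ∧ y ∈ Metric.ball (0 : EuclideanSpace ℝ (Fin m)) ε
  ne : ∀ s ∈ Ioo (0:ℝ) 1, (cross Ω s).Nonempty

def BC {k : ℕ} (Ω : Set (EuclideanSpace ℝ (Fin k))) (f : EuclideanSpace ℝ (Fin k) → ℝ) : Prop :=
  ContinuousOn f Ω ∧ ∃ C, 0 ≤ C ∧ ∀ p ∈ Ω, |f p| ≤ C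

def sl {m : ℕ} (Ω : Set (EuclideanSpace ℝ (Fin (m+1)))) (f : EuclideanSpace ℝ (Fin (m+1)) → ℝ)
    (x : ℝ) : ℝ := ∫ y in cross Ω x, f (mkPt m x y)

section
variable {m : ℕ} {ε : ℝ} {Ω : Set (EuclideanSpace ℝ (Fin (m+1)))}

lemma Dom.cop (d : Dom m ε Ω) (x : ℝ) : IsOpen (cross Ω x) :=
  d.op.preimage (mkPt_cont.comp (Continuous.prodMk_right x))

lemma Dom.ccv (d : Dom m ε Ω) (x : ℝ) : Convex ℝ (cross Ω x) := by
  intro y hy z hz a b ha hb hab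
  have := d.cv hy hz ha hb hab
  rw [mkPt_comb] at this
  have h : a * x + b * x = x := by rw [← add_mul, hab, one_mul]
  rw [h] at this
  exact this

lemma Dom.cball (d : Dom m ε Ω) (x : ℝ) : cross Ω x ⊆ Metric.ball 0 ε := fun y hy =>
  (d.sub x y hy).2

lemma Dom.cfin (d : Dom m ε Ω) (x : ℝ) : volume (cross Ω x) < ⊤ :=
  (measure_mono (d.cball x)).trans_lt measure_ball_lt_top

lemma Dom.fin (d : Dom m ε Ω) : volume Ω < ⊤ := d.bd.measure_lt_top

lemma Dom.ωpos (d : Dom m ε Ω) {x : ℝ} (hx : x ∈ Ioo (0:ℝ) 1) : 0 < ωvol Ω x :=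
  ENNReal.toReal_pos ((d.cop x).measure_pos volume (d.ne x hx)).ne' (d.cfin x).ne

lemma Dom.ω0 (d : Dom m ε Ω) {x : ℝ} (hx : x ∉ Ioo (0:ℝ) 1) : cross Ω x = ∅ := by
  ext y; simp only [mem_empty_iff_false, iff_false]
  exact fun h => hx (d.sub x y h).1

lemma sl_one (x : ℝ) : sl Ω (fun _ => 1) x = ωvol Ω x := by
  simp [sl, ωvol, Measure.real]

lemma BC.int (d : Dom m ε Ω) {f} (hf : BC Ω f) : IntegrableOn f Ω := by
  obtain ⟨hc, C, -, hC⟩ := hf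
  refine IntegrableOn.of_bound (C := C) d.fin (hc.aestronglyMeasurable d.op.measurableSet) ?_
  rw [ae_restrict_iff' d.op.measurableSet]
  exact Eventually.of_forall fun x hx => by simpa using hC x hx

lemma BC.cc (_ : Dom m ε Ω) {f} (hf : BC Ω f) (x : ℝ) :
    ContinuousOn (fun y => f (mkPt m x y)) (cross Ω x) :=
  hf.1.comp (mkPt_cont.comp (Continuous.prodMk_right x)).continuousOn (fun _ hy => hy)

lemma BC.cint (d : Dom m ε Ω) {f} (hf : BC Ω f) (x : ℝ) :
    IntegrableOn (fun y => f (mkPt m x y)) (cross Ω x) := by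
  obtain ⟨C, -, hC⟩ := hf.2
  refine IntegrableOn.of_bound (C := C) (d.cfin x)
    ((hf.cc d x).aestronglyMeasurable (d.cop x).measurableSet) ?_
  rw [ae_restrict_iff' (d.cop x).measurableSet]
  exact Eventually.of_forall fun y hy => by simpa using hC _ hy

lemma BC.const (c : ℝ) : BC Ω (fun _ => c) := ⟨continuousOn_const, |c|, abs_nonneg _, fun _ _ => le_rfl⟩

lemma BC.add {f g} (hf : BC Ω f) (hg : BC Ω g) : BC Ω (fun p => f p + g p) := by
  obtain ⟨hc, C, h0, hC⟩ := hf
  obtain ⟨hc', C', h0', hC'⟩ := hg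
  exact ⟨hc.add hc', C + C', by positivity, fun p hp => (abs_add_le _ _).trans
    (add_le_add (hC p hp) (hC' p hp))⟩

lemma BC.mul {f g} (hf : BC Ω f) (hg : BC Ω g) : BC Ω (fun p => f p * g p) := by
  obtain ⟨hc, C, h0, hC⟩ := hf
  obtain ⟨hc', C', h0', hC'⟩ := hg
  refine ⟨hc.mul hc', C * C', by positivity, fun p hp => ?_⟩
  rw [abs_mul]
  exact mul_le_mul (hC p hp) (hC' p hp) (abs_nonneg _) h0

lemma BC.pi (d : Dom m ε Ω) {η : ℝ → ℝ} (hη : Continuous η) : BC Ω (fun p => η (p 0)) := by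
  obtain ⟨C, hC⟩ := isCompact_Icc.exists_bound_of_continuousOn (hη.continuousOn (s := Icc 0 1))
  refine ⟨(hη.comp (by fun_prop)).continuousOn, C, (norm_nonneg _).trans (hC 0 (by simp)), ?_⟩
  intro p hp
  obtain ⟨y, hy⟩ := mkPt_surj p
  have := (d.sub (p 0) y (hy ▸ hp)).1
  exact hC _ ⟨this.1.le, this.2.le⟩

lemma sl_mul_pi (η : ℝ → ℝ) (f) (x : ℝ) : sl Ω (fun p => f p * η (p 0)) x = sl Ω f x * η x := by
  simp only [sl, mkPt_zero]
  rw [integral_mul_const]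

lemma sl_bound (d : Dom m ε Ω) {f} {C : ℝ} (hC : ∀ p ∈ Ω, |f p| ≤ C) (x : ℝ) :
    |sl Ω f x| ≤ C * ωvol Ω x := by
  have := norm_setIntegral_le_of_norm_le_const (μ := volume) (C := C) (d.cfin x)
    (f := fun y => f (mkPt m x y)) (fun y hy => hC _ hy)
  simpa [sl, ωvol, Measure.real] using this

lemma fub (d : Dom m ε Ω) {f} (hf : BC Ω f) : ∫ p in Ω, f p = ∫ x in (0:ℝ)..1, sl Ω f x := by
  rw [← integral_indicator d.op.measurableSet, ← (mkE_mp m).integral_comp' ]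
  have hi : Integrable (fun p => Ω.indicator f (mkE m p)) (volume.prod volume) :=
    (mkE_mp m).integrable_comp_of_integrable ((integrable_indicator_iff d.op.measurableSet).2 (hf.int d))
  rw [integral_prod _ hi, intervalIntegral.integral_of_le zero_le_one, integral_Ioc_eq_integral_Ioo,
    ← integral_indicator measurableSet_Ioo]
  congr 1
  ext x
  have h1 : ∀ y, Ω.indicator f (mkE m (x, y))
      = (cross Ω x).indicator (fun y => f (mkPt m x y)) y := by
    intro y
    rw [mkE_apply]
    rfl
  simp_rw [h1]
  rw [integral_indicator (d.cop x).measurableSet]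
  by_cases hx : x ∈ Ioo (0:ℝ) 1
  · rw [indicator_of_mem hx]; rfl
  · rw [indicator_of_notMem hx, d.ω0 hx]; simp

lemma Dom.clos (d : Dom m ε Ω) {x : ℝ} (hx : x ∈ Ioo (0:ℝ) 1) {y} (hy : mkPt m x y ∈ closure Ω) :
    y ∈ closure (cross Ω x) := by
  obtain ⟨y1, hy1⟩ := d.ne x hx
  have h := d.cv.openSegment_interior_closure_subset_interior (d.op.interior_eq.symm ▸ hy1) hy
  rw [d.op.interior_eq] at h
  have h2 : ∀ t ∈ Ioo (0:ℝ) 1, (1 - t) • y1 + t • y ∈ cross Ω x := by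
    intro t ht
    have := h ⟨1 - t, t, by linarith [ht.2], ht.1, by ring, rfl⟩
    rw [mkPt_comb] at this
    have e : (1 - t) * x + t * x = x := by ring
    rw [e] at this
    exact this
  have h3 : Tendsto (fun t : ℝ => (1 - t) • y1 + t • y) (𝓝[<] 1) (𝓝 y) := by
    have : Continuous (fun t : ℝ => (1 - t) • y1 + t • y) := by fun_prop
    have := (this.tendsto 1).mono_left (nhdsWithin_le_nhds (s := Iio 1))
    simpa using this
  refine mem_closure_of_tendsto h3 ?_
  filter_upwards [Ioo_mem_nhdsLT (zero_lt_one' ℝ)] with t ht using h2 t ht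

lemma sl_cont (d : Dom m ε Ω) {f} (hf : BC Ω f) : ContinuousOn (sl Ω f) (Ioo 0 1) := by
  have e : sl Ω f = fun x => ∫ y, Ω.indicator f (mkPt m x y) := by
    ext x
    rw [sl, ← integral_indicator (d.cop x).measurableSet]
    rfl
  obtain ⟨C, h0, hC⟩ := hf.2
  intro x hx
  apply ContinuousAt.continuousWithinAt
  rw [e]
  have hcm : ∀ y, Continuous (fun x => mkPt m x y) := fun y =>
    mkPt_cont.comp (Continuous.prodMk_left y)
  apply continuousAt_of_dominated (bound := (Metric.ball 0 ε).indicator (fun _ => C))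
  · refine Eventually.of_forall fun x => ?_
    have : (fun y => Ω.indicator f (mkPt m x y)) =
      (cross Ω x).indicator (fun y => f (mkPt m x y)) := rfl
    rw [this, aestronglyMeasurable_indicator_iff (d.cop x).measurableSet]
    exact (hf.cint d x).aestronglyMeasurable
  · refine Eventually.of_forall fun x => Eventually.of_forall fun y => ?_
    by_cases h : mkPt m x y ∈ Ω
    · rw [indicator_of_mem h, indicator_of_mem (d.sub x y h).2]
      exact hC _ h
    · rw [indicator_of_notMem h, norm_zero]
      exact indicator_nonneg (fun _ _ => h0) _
  · rw [integrable_indicator_iff measurableSet_ball]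
    exact integrableOn_const measure_ball_lt_top.ne
  · have hfr : ∀ᵐ y, y ∉ frontier (cross Ω x) := by
      rw [ae_iff]; simpa using (d.ccv x).addHaar_frontier volume
    filter_upwards [hfr] with y hy
    by_cases h : mkPt m x y ∈ Ω
    · have h1 : ContinuousAt f (mkPt m x y) := hf.1.continuousAt (d.op.mem_nhds h)
      have h2 : ContinuousAt (fun x => f (mkPt m x y)) x :=
        ContinuousAt.comp (f := fun x => mkPt m x y) h1 (hcm y).continuousAt
      refine h2.congr ?_
      filter_upwards [(hcm y).continuousAt.preimage_mem_nhds (d.op.mem_nhds h)] with z hz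
      exact (indicator_of_mem (show mkPt m z y ∈ Ω from hz) f).symm
    · have h1 : mkPt m x y ∉ closure Ω := fun h2 => by
        apply hy
        rw [frontier, (d.cop x).interior_eq]
        exact ⟨d.clos hx h2, h⟩
      have h2 : (closure Ω)ᶜ ∈ 𝓝 (mkPt m x y) := isClosed_closure.isOpen_compl.mem_nhds h1
      refine (continuousAt_const (y := (0:ℝ))).congr ?_
      filter_upwards [(hcm y).continuousAt.preimage_mem_nhds h2] with z hz
      rw [indicator_of_notMem (fun h3 => hz (subset_closure h3))]

end

section
variable {m : ℕ} {ε : ℝ} {Ω : Set (EuclideanSpace ℝ (Fin (m+1)))}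

lemma Dom.contr (d : Dom m ε Ω) {x0 : ℝ} {y0} (h0 : mkPt m x0 y0 ∈ Ω) {a b r : ℝ} (hr : 0 ≤ r)
    (hr1 : r ≤ 1) (hab : a = (1 - r) * x0 + r * b) {y} (hy : y ∈ cross Ω b) :
    AffineMap.homothety y0 r y ∈ cross Ω a := by
  have := d.cv h0 hy (by linarith : (0:ℝ) ≤ 1 - r) hr (by ring)
  rw [mkPt_comb, ← hab] at this
  have e : AffineMap.homothety y0 r y = (1 - r) • y0 + r • y := by
    rw [AffineMap.homothety_apply]
    simp only [vsub_eq_sub, vadd_eq_add, smul_sub, sub_smul, one_smul]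
    abel
  rw [e]
  exact this

lemma vol_homo (y0 : EuclideanSpace ℝ (Fin m)) {r : ℝ} (hr : 0 ≤ r) (S : Set (EuclideanSpace ℝ (Fin m))) :
    (volume (AffineMap.homothety y0 r '' S)).toReal = r ^ m * (volume S).toReal := by
  rw [Measure.addHaar_image_homothety, ENNReal.toReal_mul, ENNReal.toReal_ofReal (abs_nonneg _),
    abs_of_nonneg (by positivity)]
  simp

lemma Dom.contr_vol (d : Dom m ε Ω) {x0 : ℝ} {y0} (h0 : mkPt m x0 y0 ∈ Ω) {a b r : ℝ} (hr : 0 ≤ r)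
    (hr1 : r ≤ 1) (hab : a = (1 - r) * x0 + r * b) : r ^ m * ωvol Ω b ≤ ωvol Ω a := by
  rw [ωvol, ← vol_homo y0 hr]
  apply ENNReal.toReal_mono (d.cfin a).ne
  apply measure_mono
  rintro _ ⟨y, hy, rfl⟩
  exact d.contr h0 hr hr1 hab hy

lemma Dom.wl (d : Dom m ε Ω) {s t : ℝ} (hs : 0 < s) (hst : s ≤ t) (ht : t < 1) :
    ωvol Ω s * (1 - t) ^ m ≤ ωvol Ω t * (1 - s) ^ m := by
  have key : ∀ x0 ∈ Ioo t 1, ωvol Ω s * (x0 - t) ^ m ≤ ωvol Ω t * (x0 - s) ^ m := by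
    intro x0 hx
    obtain ⟨y0, hy0⟩ := d.ne x0 ⟨by linarith [hx.1], hx.2⟩
    have hp : 0 < x0 - s := by linarith [hx.1]
    have := d.contr_vol hy0 (a := t) (b := s) (r := (x0 - t) / (x0 - s))
      (div_nonneg (by linarith [hx.1]) hp.le) (by rw [div_le_one hp]; linarith)
      (by field_simp; ring)
    rw [div_pow, div_mul_eq_mul_div, div_le_iff₀ (by positivity)] at this
    linarith
  have c1 : Continuous fun x0 : ℝ => ωvol Ω s * (x0 - t) ^ m := by fun_prop
  have c2 : Continuous fun x0 : ℝ => ωvol Ω t * (x0 - s) ^ m := by fun_prop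
  refine le_of_tendsto_of_tendsto ((c1.tendsto 1).mono_left (nhdsWithin_le_nhds (s := Iio 1)))
    ((c2.tendsto 1).mono_left nhdsWithin_le_nhds) ?_
  filter_upwards [Ioo_mem_nhdsLT ht] with x hx using key x hx

lemma Dom.wr (d : Dom m ε Ω) {s t : ℝ} (hs : 0 < s) (hst : s ≤ t) (ht : t < 1) :
    ωvol Ω t * s ^ m ≤ ωvol Ω s * t ^ m := by
  have key : ∀ x0 ∈ Ioo 0 s, ωvol Ω t * (s - x0) ^ m ≤ ωvol Ω s * (t - x0) ^ m := by
    intro x0 hx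
    obtain ⟨y0, hy0⟩ := d.ne x0 ⟨hx.1, by linarith [hx.2]⟩
    have hp : 0 < t - x0 := by linarith [hx.2]
    have := d.contr_vol hy0 (a := s) (b := t) (r := (s - x0) / (t - x0))
      (div_nonneg (by linarith [hx.2]) hp.le) (by rw [div_le_one hp]; linarith)
      (by field_simp; ring)
    rw [div_pow, div_mul_eq_mul_div, div_le_iff₀ (by positivity)] at this
    linarith
  have c1 : Continuous fun x0 : ℝ => ωvol Ω t * (s - x0) ^ m := by fun_prop
  have c2 : Continuous fun x0 : ℝ => ωvol Ω s * (t - x0) ^ m := by fun_prop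
  have := le_of_tendsto_of_tendsto ((c1.tendsto 0).mono_left (nhdsWithin_le_nhds (s := Ioi 0)))
    ((c2.tendsto 0).mono_left nhdsWithin_le_nhds) (by
      filter_upwards [Ioo_mem_nhdsGT hs] with x hx using key x hx)
  simpa using this

lemma Dom.ωcont (d : Dom m ε Ω) : ContinuousOn (ωvol Ω) (Ioo 0 1) := by
  have := sl_cont d (BC.const (Ω := Ω) 1)
  exact this.congr fun x _ => (sl_one x).symm

lemma Dom.wt (d : Dom m ε Ω) : Wt m (fun x => ωvol Ω x / ωvol Ω (1 / 2)) where
  cont := d.ωcont.div_const _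
  pos x hx := div_pos (d.ωpos hx) (d.ωpos (by norm_num))
  l s t h1 h2 h3 := by
    rw [div_mul_eq_mul_div, div_mul_eq_mul_div]
    exact div_le_div_of_nonneg_right (d.wl h1 h2 h3) (d.ωpos (by norm_num)).le
  r s t h1 h2 h3 := by
    rw [div_mul_eq_mul_div, div_mul_eq_mul_div]
    exact div_le_div_of_nonneg_right (d.wr h1 h2 h3) (d.ωpos (by norm_num)).le
  one := div_self (d.ωpos (by norm_num)).ne'

/-- change of variables under a homothety -/
lemma int_homo (y0 : EuclideanSpace ℝ (Fin m)) {r : ℝ} (hr : 0 < r)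
    {S : Set (EuclideanSpace ℝ (Fin m))} (hS : IsOpen S) (F : EuclideanSpace ℝ (Fin m) → ℝ) :
    ∫ y in AffineMap.homothety y0 r '' S, F y = r ^ m * ∫ z in S, F (AffineMap.homothety y0 r z) := by
  have hinj : Function.Injective (AffineMap.homothety y0 r : EuclideanSpace ℝ (Fin m) → _) := by
    intro a b h
    simp only [AffineMap.homothety_apply, vsub_eq_sub, vadd_eq_add, add_left_inj] at h
    have := smul_right_injective _ hr.ne' h
    simpa using this
  have hd : ∀ z ∈ S, HasFDerivWithinAt (AffineMap.homothety y0 r : EuclideanSpace ℝ (Fin m) → _)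
      (r • ContinuousLinearMap.id ℝ (EuclideanSpace ℝ (Fin m))) S z := by
    intro z _
    have e : (AffineMap.homothety y0 r : EuclideanSpace ℝ (Fin m) → _) = fun y => r • (y - y0) + y0 := by
      ext1 y; simp [AffineMap.homothety_apply]
    rw [e]
    exact ((((hasFDerivAt_id z).sub_const y0).const_smul r).add_const y0).hasFDerivWithinAt
  rw [integral_image_eq_integral_abs_det_fderiv_smul volume hS.measurableSet hd hinj.injOn]
  have hdet : (r • ContinuousLinearMap.id ℝ (EuclideanSpace ℝ (Fin m))).det = r ^ m := by
    simp [ContinuousLinearMap.det, LinearMap.det_smul]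
  rw [hdet, abs_of_pos (by positivity)]
  simp_rw [smul_eq_mul]
  rw [integral_const_mul]
end

structure Eig (m : ℕ) (ε : ℝ) (Ω : Set (EuclideanSpace ℝ (Fin (m+1))))
    (u : EuclideanSpace ℝ (Fin (m+1)) → ℝ) (lam M C₀ : ℝ) : Prop where
  dom : Dom m ε Ω
  eps : 0 < ε
  eps1 : ε < 1 / 2
  sm : ContDiffOn ℝ (⊤:ℕ∞) u (closure Ω)
  mean : ∫ p in Ω, u p = 0
  lpos : 0 < lam
  inf : lam = sInf {r | ∃ w : EuclideanSpace ℝ (Fin (m+1)) → ℝ,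
        ContDiffOn ℝ (⊤:ℕ∞) w (closure Ω) ∧ (∃ p ∈ Ω, w p ≠ 0) ∧ (∫ p in Ω, w p) = 0 ∧
        r = (∫ p in Ω, ‖gradient w p‖ ^ 2) / (∫ p in Ω, (w p) ^ 2)}
  att : lam = (∫ p in Ω, ‖gradient u p‖ ^ 2) / (∫ p in Ω, (u p) ^ 2)
  gr : ∀ p ∈ Ω, ‖gradient u p‖ ≤ C₀ * max (min (p 0) (1 - p 0)) ε * M
  bd : ∀ p ∈ Ω, |u p| ≤ M
  Mpos : 0 < M
  Cpos : 0 < C₀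

section
variable {m : ℕ} {ε : ℝ} {Ω : Set (EuclideanSpace ℝ (Fin (m+1)))}
  {u : EuclideanSpace ℝ (Fin (m+1)) → ℝ} {lam M C₀ : ℝ}

lemma Dom.x (d : Dom m ε Ω) {p} (hp : p ∈ Ω) : p 0 ∈ Ioo (0:ℝ) 1 := by
  obtain ⟨y, hy⟩ := mkPt_surj p
  exact (d.sub (p 0) y (hy ▸ hp)).1

lemma Dom.ne' (d : Dom m ε Ω) : Ω.Nonempty := by
  obtain ⟨y, hy⟩ := d.ne (1 / 2) (by norm_num)
  exact ⟨_, hy⟩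

lemma smAt (hΩ : IsOpen Ω) (h : ContDiffOn ℝ (⊤:ℕ∞) u (closure Ω)) {p} (hp : p ∈ Ω) :
    ContDiffAt ℝ (⊤:ℕ∞) u p :=
  (h.mono subset_closure).contDiffAt (hΩ.mem_nhds hp)

lemma gcont (hΩ : IsOpen Ω) (h : ContDiffOn ℝ (⊤:ℕ∞) u (closure Ω)) :
    ContinuousOn (gradient u) Ω := by
  have h1 : ContinuousOn (fderiv ℝ u) Ω := (h.mono subset_closure).continuousOn_fderiv_of_isOpen hΩ
    (by exact_mod_cast le_top)
  exact ((InnerProductSpace.toDual ℝ _).symm.continuous.comp_continuousOn h1)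

lemma fd_eq (hΩ : IsOpen Ω) (h : ContDiffOn ℝ (⊤:ℕ∞) u (closure Ω)) {p} (hp : p ∈ Ω) :
    HasGradientAt u (gradient u p) p :=
  ((smAt hΩ h hp).differentiableAt (by simp)).hasGradientAt

lemma max_le_one' (hε : ε < 1 / 2) {x : ℝ} (hx : x ∈ Ioo (0:ℝ) 1) :
    max (min x (1 - x)) ε ≤ 1 :=
  max_le ((min_le_left _ _).trans hx.2.le) (by linarith)

lemma Eig.gr1 (e : Eig m ε Ω u lam M C₀) {p} (hp : p ∈ Ω) : ‖gradient u p‖ ≤ C₀ * M := by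
  refine (e.gr p hp).trans ?_
  have h1 := max_le_one' e.eps1 (e.dom.x hp)
  have := e.Mpos
  have := e.Cpos
  calc C₀ * max (min (p 0) (1 - p 0)) ε * M ≤ C₀ * 1 * M := by gcongr
    _ = C₀ * M := by ring

lemma Eig.uBC (e : Eig m ε Ω u lam M C₀) : BC Ω u :=
  ⟨e.sm.continuousOn.mono subset_closure, M, e.Mpos.le, e.bd⟩

lemma abs_coord (v : EuclideanSpace ℝ (Fin (m+1))) : |v 0| ≤ ‖v‖ := by
  have := PiLp.norm_apply_le v 0
  simpa using this

lemma Eig.uxBC (e : Eig m ε Ω u lam M C₀) : BC Ω (fun p => gradient u p 0) := by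
  refine ⟨?_, C₀ * M, mul_nonneg e.Cpos.le e.Mpos.le, fun p hp => (abs_coord _).trans (e.gr1 hp)⟩
  have h1 := gcont e.dom.op e.sm
  exact (by fun_prop : Continuous fun v : EuclideanSpace ℝ (Fin (m+1)) => v 0).comp_continuousOn h1

lemma Eig.gBC (e : Eig m ε Ω u lam M C₀) : BC Ω (fun p => ‖gradient u p‖ ^ 2) := by
  have h1 := (gcont e.dom.op e.sm).norm
  have h2 : BC Ω (fun p => ‖gradient u p‖) :=
    ⟨h1, C₀ * M, mul_nonneg e.Cpos.le e.Mpos.le, fun p hp => by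
      rw [abs_of_nonneg (norm_nonneg _)]; exact e.gr1 hp⟩
  have := h2.mul h2
  simpa [sq] using this

lemma Eig.ray (e : Eig m ε Ω u lam M C₀) {w : EuclideanSpace ℝ (Fin (m+1)) → ℝ}
    (hw : ContDiffOn ℝ (⊤:ℕ∞) w (closure Ω)) (h0 : ∫ p in Ω, w p = 0) :
    lam * ∫ p in Ω, (w p) ^ 2 ≤ ∫ p in Ω, ‖gradient w p‖ ^ 2 := by
  have hN : 0 ≤ ∫ p in Ω, ‖gradient w p‖ ^ 2 := integral_nonneg fun p => by positivity
  have hD : 0 ≤ ∫ p in Ω, (w p) ^ 2 := integral_nonneg fun p => by positivity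
  rcases hD.eq_or_lt with h | h
  · rw [← h, mul_zero]; exact hN
  · have hne : ∃ p ∈ Ω, w p ≠ 0 := by
      by_contra hc
      push Not at hc
      have : ∫ p in Ω, (w p) ^ 2 = 0 := by
        rw [setIntegral_congr_fun (g := fun _ => 0) e.dom.op.measurableSet
          (fun p hp => by simp [hc p hp])]
        simp
      linarith
    have : lam ≤ (∫ p in Ω, ‖gradient w p‖ ^ 2) / (∫ p in Ω, (w p) ^ 2) := by
      rw [e.inf]
      refine csInf_le ⟨0, ?_⟩ ⟨w, hw, hne, h0, rfl⟩
      rintro r ⟨w', -, -, -, rfl⟩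
      exact div_nonneg (integral_nonneg fun p => by positivity)
        (integral_nonneg fun p => by positivity)
    rwa [le_div_iff₀ h] at this

lemma Eig.att' (e : Eig m ε Ω u lam M C₀) :
    lam * ∫ p in Ω, (u p) ^ 2 = ∫ p in Ω, ‖gradient u p‖ ^ 2 := by
  have h := e.att
  have hne : ∫ p in Ω, (u p) ^ 2 ≠ 0 := by
    intro h0
    rw [h0, div_zero] at h
    exact e.lpos.ne' h
  rw [eq_div_iff hne] at h
  exact h

lemma grad_w {p : EuclideanSpace ℝ (Fin (m+1))} {g} (hu : HasGradientAt u g p)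
    {η : ℝ → ℝ} {η' : ℝ} (hη : HasDerivAt η η' (p 0)) (a t c : ℝ) :
    ‖gradient (fun p => a * u p + t * (η (p 0) - c)) p‖ ^ 2
      = a ^ 2 * ‖g‖ ^ 2 + 2 * a * t * (g 0 * η') + t ^ 2 * (η') ^ 2 := by
  set e0 : EuclideanSpace ℝ (Fin (m+1)) := EuclideanSpace.single 0 1
  have h1 : HasGradientAt (fun p => a * u p + t * (η (p 0) - c)) (a • g + (t * η') • e0) p := by
    rw [hasGradientAt_iff_hasFDerivAt] at hu ⊢
    have hπ : HasFDerivAt (fun p : EuclideanSpace ℝ (Fin (m+1)) => p 0)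
        (EuclideanSpace.proj 0 : EuclideanSpace ℝ (Fin (m+1)) →L[ℝ] ℝ) p :=
      (EuclideanSpace.proj 0 : EuclideanSpace ℝ (Fin (m+1)) →L[ℝ] ℝ).hasFDerivAt
    have h2 := (hu.const_mul a).add (((hη.comp_hasFDerivAt p hπ).sub_const c).const_mul t)
    refine h2.congr_fderiv ?_
    ext v
    simp [e0, EuclideanSpace.inner_single_left]
    ring
  rw [h1.gradient, norm_add_sq_real, norm_smul, norm_smul, mul_pow, mul_pow, Real.norm_eq_abs, Real.norm_eq_abs, sq_abs, sq_abs]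
  have he : ‖e0‖ = 1 := by simp [e0]
  rw [he, inner_smul_left, inner_smul_right]
  simp [e0, EuclideanSpace.inner_single_right]
  ring

lemma Eig.quad (e : Eig m ε Ω u lam M C₀) {η : ℝ → ℝ} (hη : ContDiff ℝ (⊤:ℕ∞) η) {c : ℝ}
    (hc : ∫ p in Ω, (η (p 0) - c) = 0) (a t : ℝ) :
    lam * (a ^ 2 * (∫ p in Ω, u p * u p) + 2 * a * t * (∫ p in Ω, u p * (η (p 0) - c))
      + t ^ 2 * ∫ p in Ω, (η (p 0) - c) * (η (p 0) - c))
    ≤ a ^ 2 * (∫ p in Ω, ‖gradient u p‖ ^ 2) + 2 * a * t * (∫ p in Ω, gradient u p 0 * deriv η (p 0))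
      + t ^ 2 * ∫ p in Ω, deriv η (p 0) * deriv η (p 0) := by
  have d := e.dom
  have hd : Continuous (deriv η) := hη.continuous_deriv (by exact_mod_cast le_top)
  have bη : BC Ω (fun p => η (p 0) - c) := BC.pi d (η := fun x => η x - c) (by
    have := hη.continuous; fun_prop)
  have bη' : BC Ω (fun p => deriv η (p 0)) := BC.pi d hd
  have hs : ContDiffOn ℝ (⊤:ℕ∞) (fun p => a * u p + t * (η (p 0) - c)) (closure Ω) := by
    have h1 : ContDiff ℝ (⊤:ℕ∞) (fun p : EuclideanSpace ℝ (Fin (m+1)) => η (p 0)) :=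
      hη.comp (EuclideanSpace.proj 0 : EuclideanSpace ℝ (Fin (m+1)) →L[ℝ] ℝ).contDiff
    exact (contDiffOn_const.mul e.sm).add (contDiffOn_const.mul (h1.contDiffOn.sub contDiffOn_const))
  have hm : ∫ p in Ω, (a * u p + t * (η (p 0) - c)) = 0 := by
    rw [integral_add ((e.uBC.int d).const_mul a) ((bη.int d).const_mul t), integral_const_mul,
      integral_const_mul, e.mean, hc]
    simp
  have key := e.ray hs hm
  have i1 := (e.uBC.mul e.uBC).int d
  have i2 := (e.uBC.mul bη).int d
  have i3 := (bη.mul bη).int d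
  have j1 := e.gBC.int d
  have j2 := (e.uxBC.mul bη').int d
  have j3 := (bη'.mul bη').int d
  have l1 : ∫ p in Ω, (a * u p + t * (η (p 0) - c)) ^ 2
      = a ^ 2 * (∫ p in Ω, u p * u p) + 2 * a * t * (∫ p in Ω, u p * (η (p 0) - c))
      + t ^ 2 * ∫ p in Ω, (η (p 0) - c) * (η (p 0) - c) := by
    rw [← integral_const_mul, ← integral_const_mul, ← integral_const_mul,
      ← integral_add (i1.const_mul _) (i2.const_mul _),
      ← integral_add ((i1.const_mul _).fun_add (i2.const_mul _)) (i3.const_mul _)]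
    congr 1; ext p; ring
  have l2 : ∫ p in Ω, ‖gradient (fun p => a * u p + t * (η (p 0) - c)) p‖ ^ 2
      = a ^ 2 * (∫ p in Ω, ‖gradient u p‖ ^ 2)
      + 2 * a * t * (∫ p in Ω, gradient u p 0 * deriv η (p 0))
      + t ^ 2 * ∫ p in Ω, deriv η (p 0) * deriv η (p 0) := by
    rw [← integral_const_mul, ← integral_const_mul, ← integral_const_mul,
      ← integral_add (j1.const_mul _) (j2.const_mul _),
      ← integral_add ((j1.const_mul _).fun_add (j2.const_mul _)) (j3.const_mul _)]
    refine setIntegral_congr_fun d.op.measurableSet fun p hp => ?_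
    simp only
    rw [grad_w (fd_eq d.op e.sm hp) ((hη.differentiable (by simp)).differentiableAt.hasDerivAt)]
    ring
  rw [l1, l2] at key
  exact key

lemma lin_zero {X Y : ℝ} (h : ∀ t : ℝ, 2 * t * X + t ^ 2 * Y ≤ 0) : X = 0 := by
  by_contra hX
  have hY : 0 < |Y| + 1 := by positivity
  have h1 := h (X / (|Y| + 1))
  have h2 : 2 * (X / (|Y| + 1)) * X + (X / (|Y| + 1)) ^ 2 * Y
      = X ^ 2 / (|Y| + 1) ^ 2 * (2 * (|Y| + 1) + Y) := by field_simp
  rw [h2] at h1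
  have h3 : 0 < 2 * (|Y| + 1) + Y := by
    have := neg_abs_le Y
    have := abs_nonneg Y
    linarith
  have : 0 < X ^ 2 / (|Y| + 1) ^ 2 * (2 * (|Y| + 1) + Y) := by positivity
  linarith

lemma Dom.volpos (d : Dom m ε Ω) : 0 < volume.real Ω :=
  ENNReal.toReal_pos (d.op.measure_pos volume d.ne').ne' d.fin.ne

lemma mean_ex (d : Dom m ε Ω) {η : ℝ → ℝ} (hη : Continuous η) :
    ∫ p in Ω, (η (p 0) - (∫ p in Ω, η (p 0)) / volume.real Ω) = 0 := by
  have hv := d.volpos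
  rw [integral_sub ((BC.pi d hη).int d) (integrableOn_const d.fin.ne)]
  simp
  field_simp
  ring

lemma Eig.weak (e : Eig m ε Ω u lam M C₀) {η : ℝ → ℝ} (hη : ContDiff ℝ (⊤:ℕ∞) η) :
    ∫ x in (0:ℝ)..1, sl Ω (fun p => gradient u p 0) x * deriv η x
      = lam * ∫ x in (0:ℝ)..1, sl Ω u x * η x := by
  have d := e.dom
  have hd : Continuous (deriv η) := hη.continuous_deriv (by exact_mod_cast le_top)
  have hc := mean_ex d hη.continuous
  set c := (∫ p in Ω, η (p 0)) / volume.real Ω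
  have q := e.quad hη hc
  have h1 := lin_zero (X := lam * (∫ p in Ω, u p * (η (p 0) - c))
    - ∫ p in Ω, gradient u p 0 * deriv η (p 0)) (Y := lam * (∫ p in Ω, (η (p 0) - c) * (η (p 0) - c))
    - ∫ p in Ω, deriv η (p 0) * deriv η (p 0)) (fun t => by
      have h2 := q 1 t
      have h3 := e.att'
      simp_rw [sq (u _)] at h3
      linarith)
  have h2 : ∫ p in Ω, u p * (η (p 0) - c) = ∫ p in Ω, u p * η (p 0) := by
    simp_rw [mul_sub]
    rw [integral_sub ((e.uBC.mul (BC.pi d hη.continuous)).int d) ((e.uBC.int d).mul_const c),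
      integral_mul_const, e.mean]
    simp
  rw [h2, fub d (e.uBC.mul (BC.pi d hη.continuous)), fub d (e.uxBC.mul (BC.pi d hd))] at h1
  simp_rw [sl_mul_pi] at h1
  linarith

lemma Eig.ray1 (e : Eig m ε Ω u lam M C₀) {η : ℝ → ℝ} (hη : ContDiff ℝ (⊤:ℕ∞) η) :
    lam * ∫ x in (0:ℝ)..1, ωvol Ω x * ((η x - (∫ x in (0:ℝ)..1, ωvol Ω x * η x)
      / ∫ x in (0:ℝ)..1, ωvol Ω x)) ^ 2
      ≤ ∫ x in (0:ℝ)..1, ωvol Ω x * (deriv η x) ^ 2 := by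
  have d := e.dom
  have hd : Continuous (deriv η) := hη.continuous_deriv (by exact_mod_cast le_top)
  have hF : ∀ f : ℝ → ℝ, Continuous f →
      ∫ p in Ω, f (p 0) = ∫ x in (0:ℝ)..1, ωvol Ω x * f x := by
    intro f hf
    rw [fub d (BC.pi d hf)]
    congr 1; ext x
    rw [← sl_one, ← sl_mul_pi]
    simp
  have hv : volume.real Ω = ∫ x in (0:ℝ)..1, ωvol Ω x := by
    have := hF (fun _ => 1) continuous_const
    simpa using this
  have hc := mean_ex d hη.continuous
  rw [hF η hη.continuous, hv] at hc
  set c := (∫ x in (0:ℝ)..1, ωvol Ω x * η x) / ∫ x in (0:ℝ)..1, ωvol Ω x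
  have q := e.quad hη hc 0 1
  have hcon := hη.continuous
  have r1 := hF (fun x => (η x - c) * (η x - c)) (by fun_prop)
  have r2 := hF (fun x => deriv η x * deriv η x) (by fun_prop)
  simp only [r1, r2] at q
  simp_rw [sq]
  simpa using q
end

lemma by_parts01 {f : ℝ → ℝ} {C : ℝ} (hf : ContinuousOn f (Ioo 0 1))
    (hC : ∀ x ∈ Ioo (0:ℝ) 1, |f x| ≤ C) (h1 : ∫ s in (0:ℝ)..1, f s = 0)
    {η η' : ℝ → ℝ} (hη : ContinuousOn η (Icc 0 1)) (hη' : ContinuousOn η' (Icc 0 1))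
    (hd : ∀ t ∈ Ioo (0:ℝ) 1, HasDerivAt η (η' t) t) :
    ∫ x in (0:ℝ)..1, f x * η x = - ∫ x in (0:ℝ)..1, (∫ s in (0:ℝ)..x, f s) * η' x := by
  have hH := icont_of hf hC (a := 0) (by simp)
  have i0 : IntervalIntegrable f volume 0 1 := ii_of hf hC (by simp) (by simp)
  have i1 : IntervalIntegrable (fun x => f x * η x) volume 0 1 :=
    i0.mul_continuousOn (by rwa [uIcc_of_le zero_le_one])
  have i2 : IntervalIntegrable (fun x => (∫ s in (0:ℝ)..x, f s) * η' x) volume 0 1 := by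
    apply ContinuousOn.intervalIntegrable
    rw [uIcc_of_le zero_le_one]
    exact hH.mul hη'
  have := intervalIntegral.integral_eq_sub_of_hasDerivAt_of_le (zero_le_one) (hH.mul hη)
    (f' := fun x => f x * η x + (∫ s in (0:ℝ)..x, f s) * η' x)
    (fun x hx => (ftc_of hf hC (by simp) hx).mul (hd x hx)) (i1.add i2)
  rw [intervalIntegral.integral_add i1 i2] at this
  simp only [Pi.mul_apply, h1, intervalIntegral.integral_same, zero_mul, sub_self] at this
  linarith

section
variable {m : ℕ} {ε : ℝ} {Ω : Set (EuclideanSpace ℝ (Fin (m+1)))}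
  {u : EuclideanSpace ℝ (Fin (m+1)) → ℝ} {lam M C₀ : ℝ}

lemma sl_bdd (d : Dom m ε Ω) {f} (hf : BC Ω f) : ∃ C, ∀ x ∈ Ioo (0:ℝ) 1, |sl Ω f x| ≤ C := by
  obtain ⟨C, h0, hC⟩ := hf.2
  have hp : 0 < ωvol Ω (1 / 2) := d.ωpos (by norm_num)
  refine ⟨C * (2 ^ m * ωvol Ω (1 / 2)), fun x hx => (sl_bound d hC x).trans ?_⟩
  have := d.wt.le hx
  rw [div_le_iff₀ hp] at this
  gcongr

lemma Eig.mean1 (e : Eig m ε Ω u lam M C₀) : ∫ x in (0:ℝ)..1, sl Ω u x = 0 := by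
  rw [← fub e.dom e.uBC, e.mean]

lemma smooth_prim {ζ : ℝ → ℝ} (hζ : ContDiff ℝ (⊤:ℕ∞) ζ) (c : ℝ) :
    ContDiff ℝ (⊤:ℕ∞) (fun x => c + ∫ s in (0:ℝ)..x, ζ s) ∧
    ∀ x, HasDerivAt (fun x => c + ∫ s in (0:ℝ)..x, ζ s) (ζ x) x := by
  have hd : ∀ x, HasDerivAt (fun x => c + ∫ s in (0:ℝ)..x, ζ s) (ζ x) x := fun x =>
    (intervalIntegral.integral_hasDerivAt_right (hζ.continuous.intervalIntegrable _ _)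
      (hζ.continuous.stronglyMeasurableAtFilter _ _) hζ.continuous.continuousAt).const_add c
  refine ⟨?_, hd⟩
  rw [contDiff_infty_iff_deriv]
  refine ⟨fun x => (hd x).differentiableAt, ?_⟩
  rwa [show deriv (fun x => c + ∫ s in (0:ℝ)..x, ζ s) = ζ from funext fun x => (hd x).deriv]

lemma Eig.flux (e : Eig m ε Ω u lam M C₀) : ∀ x ∈ Ioo (0:ℝ) 1,
    sl Ω (fun p => gradient u p 0) x = - (lam * ∫ s in (0:ℝ)..x, sl Ω u s) := by
  have d := e.dom
  obtain ⟨Cu, hCu⟩ := sl_bdd d e.uBC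
  obtain ⟨Cg, hCg⟩ := sl_bdd d e.uxBC
  have cu := sl_cont d e.uBC
  have cg := sl_cont d e.uxBC
  have hH := icont_of cu hCu (a := 0) (by simp)
  set H : ℝ → ℝ := fun x => ∫ s in (0:ℝ)..x, sl Ω u s with hHd
  set G : ℝ → ℝ := fun x => sl Ω (fun p => gradient u p 0) x + lam * H x with hG
  have cG : ContinuousOn G (Ioo 0 1) := cg.add (continuousOn_const.mul (hH.mono Ioo_subset_Icc_self))
  have key : ∀ᵐ x, x ∈ Ioo (0:ℝ) 1 → G x = 0 := by
    apply isOpen_Ioo.ae_eq_zero_of_integral_contDiff_smul_eq_zero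
    · exact cG.locallyIntegrableOn measurableSet_Ioo
    · intro ζ hζ _ hs
      obtain ⟨h1, h2⟩ := smooth_prim hζ 0
      have hw := e.weak h1
      have hb := by_parts01 cu hCu e.mean1 h1.continuous.continuousOn hζ.continuous.continuousOn
        (fun t _ => h2 t)
      rw [hb] at hw
      simp_rw [fun x => (h2 x).deriv] at hw
      have : ∫ x, ζ x • G x = ∫ x in (0:ℝ)..1, ζ x • G x := by
        rw [intervalIntegral.integral_of_le zero_le_one, integral_Ioc_eq_integral_Ioo,
          setIntegral_eq_integral_of_forall_compl_eq_zero]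
        intro x hx
        rw [image_eq_zero_of_notMem_tsupport (fun h => hx (hs h)), zero_smul]
      rw [this]
      have i1 : IntervalIntegrable (fun x => sl Ω (fun p => gradient u p 0) x * ζ x) volume 0 1 :=
        (ii_of cg hCg (by simp) (by simp)).mul_continuousOn hζ.continuous.continuousOn
      have i2 : IntervalIntegrable (fun x => H x * ζ x) volume 0 1 := by
        apply ContinuousOn.intervalIntegrable
        rw [uIcc_of_le zero_le_one]
        exact hH.mul hζ.continuous.continuousOn
      have : ∫ x in (0:ℝ)..1, ζ x • G x = (∫ x in (0:ℝ)..1, sl Ω (fun p => gradient u p 0) x * ζ x)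
          + lam * ∫ x in (0:ℝ)..1, H x * ζ x := by
        rw [← intervalIntegral.integral_const_mul, ← intervalIntegral.integral_add i1 (i2.const_mul _)]
        congr 1; ext x; simp [hG]; ring
      rw [this, hw]; ring
  have h2 : EqOn G 0 (Ioo 0 1) := by
    refine Measure.eqOn_open_of_ae_eq (μ := volume) ?_ isOpen_Ioo cG continuousOn_const
    rw [EventuallyEq, ae_restrict_iff' measurableSet_Ioo]
    exact key
  intro x hx
  have := h2 hx
  simp only [hG, Pi.zero_apply] at this
  linarith
end

lemma NeumannSol.scale {ω : ℝ → ℝ} {μ : ℝ} {φ φd : ℝ → ℝ} (h : NeumannSol ω μ φ φd) (k : ℝ) :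
    NeumannSol (fun x => ω x / k) μ φ φd := by
  obtain ⟨h1, h2, h3, h4, h5, h6⟩ := h
  refine ⟨h1, h2, h3, h4, h5, fun x hx => ?_⟩
  have := (h6 x hx).div_const k
  refine (this.congr_of_eventuallyEq (Eventually.of_forall fun t => ?_)).congr_deriv ?_
  · simp only; ring
  · ring

lemma NeumannSol.scale2 {ω : ℝ → ℝ} {μ : ℝ} {φ φd : ℝ → ℝ} (h : NeumannSol ω μ φ φd) {k : ℝ}
    (hk : k ≠ 0) : NeumannSol ω μ (fun x => φ x / k) (fun x => φd x / k) := by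
  obtain ⟨h1, h2, h3, h4, h5, h6⟩ := h
  refine ⟨fun x hx => (h1 x hx).div_const k, h2.div_const k, by simp [h3], by simp [h4], ?_,
    fun x hx => ?_⟩
  · obtain ⟨x, hx, hn⟩ := h5
    exact ⟨x, hx, div_ne_zero hn hk⟩
  have := (h6 x hx).div_const k
  refine (this.congr_of_eventuallyEq (Eventually.of_forall fun t => ?_)).congr_deriv ?_
  · simp only; ring
  · ring

lemma Wt.ii {m : ℕ} {W : ℝ → ℝ} (hW : Wt m W) {f : ℝ → ℝ} (hf : ContinuousOn f (Icc 0 1)) :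
    IntervalIntegrable (fun x => W x * f x) volume 0 1 := by
  have h1 : IntervalIntegrable W volume 0 1 := ii_of (C := 2 ^ m) hW.cont (fun x hx => by
    rw [abs_of_pos (hW.pos x hx)]; exact hW.le hx) (by simp) (by simp)
  exact h1.mul_continuousOn (by rwa [uIcc_of_le zero_le_one])

lemma Wt.mono {m : ℕ} {W : ℝ → ℝ} (hW : Wt m W) {f g : ℝ → ℝ} (hf : ContinuousOn f (Icc 0 1))
    (hg : ContinuousOn g (Icc 0 1)) (h : ∀ x ∈ Ioo (0:ℝ) 1, f x ≤ g x) :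
    ∫ x in (0:ℝ)..1, W x * f x ≤ ∫ x in (0:ℝ)..1, W x * g x :=
  intervalIntegral.integral_mono_on_of_le_Ioo zero_le_one (hW.ii hf) (hW.ii hg)
    fun x hx => mul_le_mul_of_nonneg_left (h x hx) (hW.pos x hx).le

lemma Wt.ipos {m : ℕ} {W : ℝ → ℝ} (hW : Wt m W) {f : ℝ → ℝ} (hf : ContinuousOn f (Icc 0 1))
    (h0 : ∃ x ∈ Icc (0:ℝ) 1, f x ≠ 0) : 0 < ∫ x in (0:ℝ)..1, W x * (f x) ^ 2 := by
  have hi := hW.ii (hf.pow 2)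
  have hex : ∃ x ∈ Ioo (0:ℝ) 1, f x ≠ 0 := by
    by_contra hc
    push Not at hc
    obtain ⟨x, hx, hn⟩ := h0
    have : EqOn f 0 (Icc 0 1) := by
      have h1 : EqOn f 0 (Ioo 0 1) := hc
      exact h1.of_subset_closure hf continuousOn_const Ioo_subset_Icc_self
        (by rw [closure_Ioo zero_ne_one])
    exact hn (this hx)
  obtain ⟨x, hx, hn⟩ := hex
  rw [intervalIntegral.integral_of_le zero_le_one, integral_Ioc_eq_integral_Ioo]
  have hi' : IntegrableOn (fun x => W x * (f x) ^ 2) (Ioo 0 1) := by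
    have := (intervalIntegrable_iff_integrableOn_Ioo_of_le zero_le_one).1 hi
    exact this
  rw [setIntegral_pos_iff_support_of_nonneg_ae _ hi']
  · have ho : IsOpen (Ioo (0:ℝ) 1 ∩ f ⁻¹' {0}ᶜ) :=
      (hf.mono Ioo_subset_Icc_self).isOpen_inter_preimage isOpen_Ioo isOpen_compl_singleton
    refine (ho.measure_pos volume ⟨x, hx, hn⟩).trans_le (measure_mono ?_)
    rintro y ⟨hy, hy'⟩
    exact ⟨mul_ne_zero (hW.pos y hy).ne' (pow_ne_zero 2 hy'), hy⟩
  · refine (ae_restrict_iff' measurableSet_Ioo).2 (Eventually.of_forall fun y hy => ?_)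
    exact mul_nonneg (hW.pos y hy).le (sq_nonneg _)

section
variable {m : ℕ} {ε : ℝ} {Ω : Set (EuclideanSpace ℝ (Fin (m+1)))}
  {u : EuclideanSpace ℝ (Fin (m+1)) → ℝ} {lam M C₀ : ℝ}

lemma Eig.ray2 (e : Eig m ε Ω u lam M C₀) {η : ℝ → ℝ} (hη : ContDiff ℝ (⊤:ℕ∞) η) {W : ℝ → ℝ}
    (hWd : W = fun x => ωvol Ω x / ωvol Ω (1 / 2)) :
    lam * ∫ x in (0:ℝ)..1, W x * ((η x - (∫ x in (0:ℝ)..1, W x * η x)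
      / ∫ x in (0:ℝ)..1, W x)) ^ 2
      ≤ ∫ x in (0:ℝ)..1, W x * (deriv η x) ^ 2 := by
  have h := e.ray1 hη
  have hk : 0 < ωvol Ω (1 / 2) := e.dom.ωpos (by norm_num)
  have hw : ∀ x, ωvol Ω x = ωvol Ω (1 / 2) * W x := fun x => by rw [hWd]; field_simp
  generalize ωvol Ω (1 / 2) = k at hk hw
  simp_rw [hw, mul_assoc, intervalIntegral.integral_const_mul] at h
  rw [mul_div_mul_left _ _ hk.ne', mul_left_comm] at h
  exact le_of_mul_le_mul_left h hk

lemma Eig.lam_le (e : Eig m ε Ω u lam M C₀) {μ : ℝ} {φ φd : ℝ → ℝ}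
    (h : NeumannSol (ωvol Ω) μ φ φd) (hμ : 0 < μ) : lam ≤ μ := by
  have hW := e.dom.wt
  have hN := h.scale (ωvol Ω (1 / 2))
  have ray := fun η hη => e.ray2 (η := η) hη rfl
  set W := fun x => ωvol Ω x / ωvol Ω (1 / 2)
  obtain ⟨cφ, -, -, fl, -⟩ := neu_flux hW hN
  obtain ⟨hD, cd, -, hd1, hne, -⟩ := hN
  have hD' : ∀ t ∈ Ioo (0:ℝ) 1, HasDerivAt φ (φd t) t := fun t ht =>
    (hD t ⟨ht.1.le, ht.2.le⟩).hasDerivAt (Icc_mem_nhds ht.1 ht.2)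
  have hA := hW.ipos cφ hne
  have mean : ∫ s in (0:ℝ)..1, W s * φ s = 0 := by
    have := fl 1 (by simp)
    rw [hd1] at this
    simp_rw [mul_left_comm _ μ] at this
    rw [intervalIntegral.integral_const_mul] at this
    have h2 : μ * ∫ s in (0:ℝ)..1, W s * φ s = 0 := by linarith
    exact (mul_eq_zero.1 h2).resolve_left hμ.ne'
  obtain ⟨K, hK⟩ := isCompact_Icc.exists_bound_of_continuousOn cφ
  obtain ⟨K', hK'⟩ := isCompact_Icc.exists_bound_of_continuousOn cd
  have hK0 : 0 ≤ K := (norm_nonneg _).trans (hK 0 (by simp))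
  have hK0' : 0 ≤ K' := (norm_nonneg _).trans (hK' 0 (by simp))
  have bp := by_parts01 (f := fun s => W s * φ s) (C := 2 ^ m * K)
    (hW.cont.mul (cφ.mono Ioo_subset_Icc_self))
    (hW.mul_bdd fun x hx => hK x ⟨hx.1.le, hx.2.le⟩) mean cφ cd hD'
  have en : ∫ s in (0:ℝ)..1, W s * (φd s) ^ 2 = μ * ∫ s in (0:ℝ)..1, W s * (φ s) ^ 2 := by
    have h1 : ∫ s in (0:ℝ)..1, W s * (φ s) ^ 2 = ∫ s in (0:ℝ)..1, W s * φ s * φ s := by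
      congr 1; ext s; ring
    rw [h1, bp, mul_neg, ← intervalIntegral.integral_const_mul, ← intervalIntegral.integral_neg]
    apply intervalIntegral.integral_congr
    intro x hx
    rw [uIcc_of_le zero_le_one] at hx
    have := fl x hx
    simp_rw [mul_left_comm _ μ] at this
    rw [intervalIntegral.integral_const_mul] at this
    simp only
    linear_combination φd x * this
  have hI : 0 < ∫ x in (0:ℝ)..1, W x := by
    have := hW.ipos (f := fun _ => 1) continuousOn_const ⟨0, by simp⟩
    simpa using this
  set I := ∫ x in (0:ℝ)..1, W x
  set A := ∫ s in (0:ℝ)..1, W s * (φ s) ^ 2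
  have key : ∀ δ ∈ Ioo (0:ℝ) 1, lam * A ≤ μ * A + δ * ((lam * (4 * K) + 2 * K' + 1) * I) := by
    intro δ hδ
    obtain ⟨P, hP⟩ := exists_polynomial_near_of_continuousOn 0 1 φd cd δ hδ.1
    have hPs : ContDiff ℝ (⊤:ℕ∞) (fun x => P.eval x) := by
      simpa using P.contDiff_aeval (𝕜 := ℝ) (⊤:ℕ∞)
    obtain ⟨s1, s2⟩ := smooth_prim hPs (φ 0)
    have r := ray _ s1
    simp_rw [fun x => (s2 x).deriv] at r
    set η := fun x => φ 0 + ∫ s in (0:ℝ)..x, P.eval s with hη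
    have cη : ContinuousOn η (Icc 0 1) := s1.continuous.continuousOn
    have b1 : ∀ x ∈ Icc (0:ℝ) 1, |η x - φ x| ≤ δ := by
      intro x hx
      have := mvt_abs (z := fun x => η x - φ x) hx.1
        ((cη.sub cφ).mono (Icc_subset_Icc_right hx.2))
        (fun t ht => (s2 t).sub (hD' t ⟨ht.1, ht.2.trans_le hx.2⟩)) (B := δ)
        (fun t ht => (hP t ⟨ht.1.le, ht.2.le.trans hx.2⟩).le)
      have h0 : η 0 - φ 0 = 0 := by simp [hη]
      rw [h0, sub_zero] at this
      nlinarith [hx.1, hx.2, hδ.1]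
    set c := (∫ x in (0:ℝ)..1, W x * η x) / I with hc
    have hcη : |c| ≤ δ := by
      have h1 : ∫ x in (0:ℝ)..1, W x * η x = ∫ x in (0:ℝ)..1, W x * (η x - φ x) := by
        simp_rw [mul_sub]
        rw [intervalIntegral.integral_sub (hW.ii cη) (hW.ii cφ), mean, sub_zero]
      have h2 := hW.mono (cη.sub cφ) (g := fun _ => δ) continuousOn_const
        (fun x hx => (abs_le.1 (b1 x ⟨hx.1.le, hx.2.le⟩)).2)
      have h3 := hW.mono (f := fun _ => -δ) (g := fun x => η x - φ x) continuousOn_const (cη.sub cφ)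
        (fun x hx => (abs_le.1 (b1 x ⟨hx.1.le, hx.2.le⟩)).1)
      rw [intervalIntegral.integral_mul_const] at h2 h3
      rw [hc, h1, abs_div, abs_of_pos hI, div_le_iff₀ hI, abs_le]
      constructor
      · linarith
      · simp only [Pi.sub_apply] at h2; linarith
    have l1 : A - 4 * K * δ * I ≤ ∫ x in (0:ℝ)..1, W x * (η x - c) ^ 2 := by
      have h1 := hW.mono (f := fun x => (φ x) ^ 2 - 4 * K * δ) (g := fun x => (η x - c) ^ 2)
        ((cφ.pow 2).sub continuousOn_const) ((cη.sub continuousOn_const).pow 2) (fun x hx => by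
          have hx' : x ∈ Icc (0:ℝ) 1 := ⟨hx.1.le, hx.2.le⟩
          have k1 := hK x hx'
          rw [Real.norm_eq_abs] at k1
          have k2 : |η x - c - φ x| ≤ 2 * δ := by
            have := b1 x hx'
            rw [abs_le] at this hcη ⊢
            constructor <;> linarith
          have k3 : |φ x * (η x - c - φ x)| ≤ K * (2 * δ) := by
            rw [abs_mul]; gcongr
          have := (abs_le.1 k3).1
          nlinarith [sq_nonneg (η x - c - φ x)])
      have h2 : ∫ x in (0:ℝ)..1, W x * ((φ x) ^ 2 - 4 * K * δ) = A - 4 * K * δ * I := by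
        simp_rw [mul_sub]
        rw [intervalIntegral.integral_sub (hW.ii (f := fun x => φ x ^ 2) (cφ.pow 2)) (hW.ii continuousOn_const),
          intervalIntegral.integral_mul_const]
        ring
      linarith
    have l2 : ∫ x in (0:ℝ)..1, W x * (P.eval x) ^ 2 ≤ μ * A + (2 * K' + 1) * δ * I := by
      have h1 := hW.mono (f := fun x => (P.eval x) ^ 2) (g := fun x => (φd x) ^ 2 + (2 * K' + 1) * δ)
        (hPs.continuous.continuousOn.pow 2) ((cd.pow 2).add continuousOn_const) (fun x hx => by
          have hx' : x ∈ Icc (0:ℝ) 1 := ⟨hx.1.le, hx.2.le⟩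
          have k1 := hK' x hx'
          rw [Real.norm_eq_abs] at k1
          have k2 := (hP x hx').le
          have k3 : |φd x * (P.eval x - φd x)| ≤ K' * δ := by
            rw [abs_mul]; gcongr
          have := (abs_le.1 k3).2
          have k4 : (P.eval x - φd x) ^ 2 ≤ δ := by
            rw [← sq_abs]
            nlinarith [abs_nonneg (P.eval x - φd x), hδ.1, hδ.2]
          nlinarith)
      have h2 : ∫ x in (0:ℝ)..1, W x * ((φd x) ^ 2 + (2 * K' + 1) * δ) = μ * A + (2 * K' + 1) * δ * I := by
        simp_rw [mul_add]
        rw [intervalIntegral.integral_add (hW.ii (f := fun x => φd x ^ 2) (cd.pow 2)) (hW.ii continuousOn_const),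
          intervalIntegral.integral_mul_const, en]
        ring
      linarith
    have := mul_le_mul_of_nonneg_left l1 e.lpos.le
    have r' : lam * ∫ x in (0:ℝ)..1, W x * (η x - c) ^ 2 ≤ ∫ x in (0:ℝ)..1, W x * (P.eval x) ^ 2 := r
    linarith
  have fin : lam * A ≤ μ * A := by
    have ht : Tendsto (fun δ : ℝ => μ * A + δ * ((lam * (4 * K) + 2 * K' + 1) * I)) (𝓝[>] 0)
        (𝓝 (μ * A)) := by
      have : Continuous (fun δ : ℝ => μ * A + δ * ((lam * (4 * K) + 2 * K' + 1) * I)) := by fun_prop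
      have h2 := this.tendsto 0
      simp only [zero_mul, add_zero] at h2
      exact h2.mono_left nhdsWithin_le_nhds
    refine ge_of_tendsto ht ?_
    filter_upwards [Ioo_mem_nhdsGT (zero_lt_one)] with δ hδ using key δ hδ
  exact le_of_mul_le_mul_right fin hA
end

lemma avg_c {α : Type*} [MeasurableSpace α] {μ : Measure α} {S : Set α} (hm : MeasurableSet S)
    (hS : μ S < ⊤) {G : α → ℝ} (hG : IntegrableOn G S μ) {c B : ℝ} (h : ∀ y ∈ S, |G y - c| ≤ B) :
    |∫ y in S, G y ∂μ - c * (μ S).toReal| ≤ B * (μ S).toReal := by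
  have h1 := norm_setIntegral_le_of_norm_le_const (μ := μ) (C := B) hS (f := fun y => G y - c) h
  rw [integral_sub hG (integrableOn_const hS.ne)] at h1
  simpa [Measure.real, mul_comm] using h1

lemma sub_avg {α : Type*} [MeasurableSpace α] {μ : Measure α} {S A : Set α} (hm : MeasurableSet S)
    (hA : MeasurableSet A) (hAS : A ⊆ S)
    (hS : μ S < ⊤) {G : α → ℝ} (hG : IntegrableOn G S μ) {a B : ℝ} (h : ∀ y ∈ S, |G y - a| ≤ B)
    (ha : ∫ y in S, G y ∂μ = a * (μ S).toReal) :
    |∫ y in A, G y ∂μ - a * (μ A).toReal| ≤ B * ((μ S).toReal - (μ A).toReal) := by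
  have hd : μ (S \ A) < ⊤ := (measure_mono diff_subset).trans_lt hS
  have h1 := avg_c (hm.diff hA) hd (hG.mono_set diff_subset) (c := a) (B := B)
    (fun y hy => h y hy.1)
  have h2 := integral_diff hA hG hAS
  have h3 : (μ (S \ A)).toReal = (μ S).toReal - (μ A).toReal := by
    rw [measure_diff hAS hA.nullMeasurableSet ((measure_mono hAS).trans_lt hS).ne,
      ENNReal.toReal_sub_of_le (measure_mono hAS) hS.ne]
  rw [h2, ha, h3] at h1
  rw [abs_le] at h1 ⊢
  constructor <;> nlinarith [h1.1, h1.2]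

section
variable {m : ℕ} {ε : ℝ} {Ω : Set (EuclideanSpace ℝ (Fin (m+1)))}
  {u : EuclideanSpace ℝ (Fin (m+1)) → ℝ} {lam M C₀ : ℝ}

lemma inner_mkPt (g : EuclideanSpace ℝ (Fin (m+1))) (a : ℝ) (w : EuclideanSpace ℝ (Fin m)) :
    |⟪g, mkPt m a w⟫ - a * g 0| ≤ ‖g‖ * ‖w‖ := by
  have h1 : mkPt m a w = a • EuclideanSpace.single 0 1 + mkPt m 0 w := by
    ext i
    refine Fin.cases ?_ (fun i => ?_) i
    · simp [mkPt_zero]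
    · simp [mkPt_succ]
  have h2 : ‖mkPt m 0 w‖ ≤ ‖w‖ := by simpa using mkPt_norm_le 0 w
  rw [h1, inner_add_right, inner_smul_right, EuclideanSpace.inner_single_right]
  simp only [one_mul, conj_trivial, add_sub_cancel_left]
  exact (abs_real_inner_le_norm _ _).trans (by gcongr)

lemma Eig.mv (e : Eig m ε Ω u lam M C₀) {x x' : ℝ} {w z}
    (hp : w ∈ cross Ω x) (hq : z ∈ cross Ω x') :
    ∃ ξ ∈ segment ℝ (mkPt m x w) (mkPt m x' z), ξ ∈ Ω ∧
      |u (mkPt m x' z) - u (mkPt m x w) - (x' - x) * gradient u ξ 0| ≤ ‖gradient u ξ‖ * ‖z - w‖ := by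
  have d := e.dom
  obtain ⟨ξ, hξ, h⟩ := domain_mvt (f := u) (s := Ω)
    (f' := fun p => (InnerProductSpace.toDual ℝ _) (gradient u p))
    (fun p hp => (hasGradientAt_iff_hasFDerivAt.1 (fd_eq d.op e.sm hp)).hasFDerivWithinAt) d.cv hp hq
  refine ⟨ξ, hξ, d.cv.segment_subset hp hq hξ, ?_⟩
  rw [h, mkPt_sub, InnerProductSpace.toDual_apply_apply]
  exact inner_mkPt _ _ _

lemma seg_coord {p q ξ : EuclideanSpace ℝ (Fin (m+1))} (h : ξ ∈ segment ℝ p q) :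
    ξ 0 ∈ segment ℝ (p 0) (q 0) := by
  obtain ⟨a, b, ha, hb, hab, rfl⟩ := h
  exact ⟨a, b, ha, hb, hab, by simp⟩

lemma seg_norm {p q ξ : EuclideanSpace ℝ (Fin (m+1))} (h : ξ ∈ segment ℝ p q) :
    ‖ξ - p‖ ≤ ‖q - p‖ := by
  obtain ⟨a, b, ha, hb, hab, rfl⟩ := h
  have : a • p + b • q - p = b • (q - p) := by
    rw [show a = 1 - b by linarith]; module
  rw [this, norm_smul, Real.norm_eq_abs, abs_of_nonneg hb]
  nlinarith [norm_nonneg (q - p)]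

lemma Dom.diam (d : Dom m ε Ω) {x x' : ℝ} {w z} (hw : w ∈ cross Ω x) (hz : z ∈ cross Ω x') :
    ‖z - w‖ ≤ 2 * ε := by
  have h1 := d.cball _ hw
  have h2 := d.cball _ hz
  rw [mem_ball_zero_iff] at h1 h2
  linarith [norm_sub_le z w]

lemma Eig.uc (e : Eig m ε Ω u lam M C₀) {η : ℝ} (hη : 0 < η) :
    ∃ δ > 0, ∀ p ∈ Ω, ∀ q ∈ Ω, ‖p - q‖ < δ → |gradient u p 0 - gradient u q 0| ≤ η := by
  have d := e.dom
  have hu : UniqueDiffOn ℝ (closure Ω) :=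
    uniqueDiffOn_convex d.cv.closure (by
      obtain ⟨p, hp⟩ := d.ne'
      exact ⟨p, interior_mono subset_closure (d.op.interior_eq.symm ▸ hp)⟩)
  have hc : ContinuousOn (fderivWithin ℝ u (closure Ω)) (closure Ω) :=
    e.sm.continuousOn_fderivWithin hu (by exact_mod_cast le_top)
  have hk : IsCompact (closure Ω) := d.bd.isCompact_closure
  have huc := hk.uniformContinuousOn_of_continuous hc
  rw [Metric.uniformContinuousOn_iff] at huc
  obtain ⟨δ, hδ, H⟩ := huc η hη
  refine ⟨δ, hδ, fun p hp q hq hpq => ?_⟩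
  have h1 := H p (subset_closure hp) q (subset_closure hq) (by rwa [dist_eq_norm])
  have hf : ∀ p ∈ Ω, fderivWithin ℝ u (closure Ω) p = fderiv ℝ u p := fun p hp =>
    fderivWithin_of_mem_nhds (mem_of_superset (d.op.mem_nhds hp) subset_closure)
  rw [hf p hp, hf q hq, dist_eq_norm] at h1
  have h2 : gradient u p - gradient u q = (InnerProductSpace.toDual ℝ _).symm (fderiv ℝ u p - fderiv ℝ u q) := by
    rw [map_sub]; rfl
  have h3 : ‖gradient u p - gradient u q‖ = ‖fderiv ℝ u p - fderiv ℝ u q‖ := by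
    rw [h2, LinearIsometryEquiv.norm_map]
  calc |gradient u p 0 - gradient u q 0| = |(gradient u p - gradient u q) 0| := by simp
    _ ≤ _ := abs_coord _
    _ ≤ η := by rw [h3]; exact h1.le

lemma ubar_eq (x : ℝ) : ubarFn Ω u x = sl Ω u x / ωvol Ω x := rfl

/-- average of a slice is close to a constant -/
lemma avg_close (d : Dom m ε Ω) {f} (hf : BC Ω f) {x : ℝ} (hx : x ∈ Ioo (0:ℝ) 1) {c B : ℝ}
    (h : ∀ y ∈ cross Ω x, |f (mkPt m x y) - c| ≤ B) : |sl Ω f x / ωvol Ω x - c| ≤ B := by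
  have hp := d.ωpos hx
  have h1 := avg_c (d.cop x).measurableSet (d.cfin x) (hf.cint d x) h
  have h2 : sl Ω f x / ωvol Ω x - c = (sl Ω f x - c * ωvol Ω x) / ωvol Ω x := by field_simp
  rw [h2, abs_div, abs_of_pos hp, div_le_iff₀ hp]
  exact h1

lemma Eig.near (e : Eig m ε Ω u lam M C₀) {x x' : ℝ} (hx : x ∈ Ioo (0:ℝ) 1)
    (hx' : x' ∈ Ioo (0:ℝ) 1) (h : |x - x'| ≤ ε) : |ubarFn Ω u x - ubarFn Ω u x'| ≤ 3 * ε * C₀ * M := by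
  have d := e.dom
  rw [ubar_eq x]
  refine avg_close d e.uBC hx fun y hy => ?_
  rw [abs_sub_comm, ubar_eq]
  refine avg_close d e.uBC hx' fun z hz => ?_
  obtain ⟨ξ, -, hξ, hm⟩ := e.mv hy hz
  have h1 := e.gr1 hξ
  have h2 := (abs_coord _).trans h1
  have h3 := d.diam hy hz
  have hCM : 0 ≤ C₀ * M := mul_nonneg e.Cpos.le e.Mpos.le
  have h4 : ‖gradient u ξ‖ * ‖z - y‖ ≤ C₀ * M * (2 * ε) := by gcongr
  have h5 : |(x' - x) * gradient u ξ 0| ≤ ε * (C₀ * M) := by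
    rw [abs_mul, abs_sub_comm]
    have := e.eps
    gcongr
  rw [abs_le] at hm h5 ⊢
  constructor <;> linarith [hm.1, hm.2, h5.1, h5.2]
end

section
variable {m : ℕ} {ε : ℝ} {Ω : Set (EuclideanSpace ℝ (Fin (m+1)))}
  {u : EuclideanSpace ℝ (Fin (m+1)) → ℝ} {lam M C₀ : ℝ}

lemma sl_add (d : Dom m ε Ω) {f g} (hf : BC Ω f) (hg : BC Ω g) (h x : ℝ) :
    sl Ω (fun p => f p + h * g p) x = sl Ω f x + h * sl Ω g x := by
  unfold sl
  rw [integral_add (hf.cint d x) ((hg.cint d x).const_mul h), integral_const_mul]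

lemma Eig.osc (e : Eig m ε Ω u lam M C₀) {x h : ℝ} (hx : x ∈ Icc ε (1 - ε)) (hh : 0 < h) {w w'}
    (hw : w ∈ cross Ω x) (hw' : w' ∈ cross Ω x) :
    |(u (mkPt m x w') + h * gradient u (mkPt m x w') 0)
      - (u (mkPt m x w) + h * gradient u (mkPt m x w) 0)|
      ≤ 2 * ε * C₀ * min x (1 - x) * M + 2 * h * C₀ * M := by
  obtain ⟨ξ, hs, hξ, h1⟩ := e.mv hw hw'
  have hs' := seg_coord hs
  simp only [mkPt_zero, segment_same, mem_singleton_iff] at hs'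
  have h2 := e.gr ξ hξ
  rw [hs', max_eq_left (le_min hx.1 (by linarith [hx.2]))] at h2
  have h3 := e.dom.diam hw hw'
  have h0 : 0 ≤ C₀ * min x (1 - x) * M := (norm_nonneg _).trans h2
  have h4 : ‖gradient u ξ‖ * ‖w' - w‖ ≤ C₀ * min x (1 - x) * M * (2 * ε) := by gcongr
  have h5 := (abs_coord _).trans (e.gr1 hw)
  have h6 := (abs_coord _).trans (e.gr1 hw')
  simp only [sub_self, zero_mul, sub_zero] at h1
  have h7 : |h * (gradient u (mkPt m x w') 0 - gradient u (mkPt m x w) 0)| ≤ h * (2 * (C₀ * M)) := by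
    rw [abs_mul, abs_of_pos hh]
    gcongr
    rw [abs_le] at h5 h6 ⊢
    constructor <;> linarith [h5.1, h5.2, h6.1, h6.2]
  rw [abs_le] at h1 h7 ⊢
  constructor <;> linarith [h1.1, h1.2, h7.1, h7.2]

lemma Eig.pt (e : Eig m ε Ω u lam M C₀) {x h η δ r : ℝ} (hx : x ∈ Icc ε (1 - ε)) (hh : 0 < h)
    (hhx : h ≤ x) (hr : r = (x / 2) / (x / 2 + h)) {y0} (hy0 : y0 ∈ cross Ω (x / 2))
    (hδ : ∀ p ∈ Ω, ∀ q ∈ Ω, ‖p - q‖ < δ → |gradient u p 0 - gradient u q 0| ≤ η)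
    (hs : 5 * h < δ) {z} (hz : z ∈ cross Ω (x + h))
    (hw : AffineMap.homothety y0 r z ∈ cross Ω x) :
    |u (mkPt m (x + h) z) - (u (mkPt m x (AffineMap.homothety y0 r z))
      + h * gradient u (mkPt m x (AffineMap.homothety y0 r z)) 0)| ≤ h * η + 8 * C₀ * M * ε * h := by
  have he := e.eps
  have hx0 : 0 < x := he.trans_le hx.1
  have hCM : 0 ≤ C₀ * M := mul_nonneg e.Cpos.le e.Mpos.le
  have hw0 : z - AffineMap.homothety y0 r z = (1 - r) • (z - y0) := by
    simp only [AffineMap.homothety_apply, vsub_eq_sub, vadd_eq_add]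
    module
  set w := AffineMap.homothety y0 r z
  have h1r : 1 - r = h / (x / 2 + h) := by rw [hr]; field_simp; ring
  have h1r' : 1 - r ≤ 2 * h / x := by
    rw [h1r, div_le_div_iff₀ (by positivity) hx0]; nlinarith
  have h1r0 : 0 ≤ 1 - r := by rw [h1r]; positivity
  have hzw : ‖z - w‖ ≤ 4 * ε * h / x := by
    rw [hw0, norm_smul, Real.norm_eq_abs, abs_of_nonneg h1r0]
    calc (1 - r) * ‖z - y0‖ ≤ 2 * h / x * (2 * ε) := by
          have := e.dom.diam hy0 hz
          gcongr
      _ = _ := by ring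
  have hzw2 : ‖z - w‖ ≤ 4 * h := by
    refine hzw.trans ?_
    rw [div_le_iff₀ hx0]; nlinarith [hx.1]
  obtain ⟨ξ, hsg, hξ, hm⟩ := e.mv hw hz
  have hn : ‖ξ - mkPt m x w‖ < δ := by
    refine (seg_norm hsg).trans_lt ?_
    rw [mkPt_sub]
    refine (mkPt_norm_le _ _).trans_lt ?_
    rw [add_sub_cancel_left, abs_of_pos hh]
    linarith
  have h1 := hδ ξ hξ _ hw hn
  have hc := seg_coord hsg
  simp only [mkPt_zero] at hc
  rw [segment_eq_Icc (by linarith)] at hc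
  have h2 : ‖gradient u ξ‖ ≤ C₀ * (2 * x) * M := by
    refine (e.gr ξ hξ).trans ?_
    have : max (min (ξ 0) (1 - ξ 0)) ε ≤ 2 * x :=
      max_le ((min_le_left _ _).trans (by linarith [hc.2])) (by linarith [hx.1])
    have := e.Cpos
    have := e.Mpos
    gcongr
  have h3 : ‖gradient u ξ‖ * ‖z - w‖ ≤ 8 * C₀ * M * ε * h := by
    calc ‖gradient u ξ‖ * ‖z - w‖ ≤ (C₀ * (2 * x) * M) * (4 * ε * h / x) := by
          have := (norm_nonneg _).trans h2
          gcongr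
      _ = 8 * C₀ * M * ε * h := by field_simp; ring
  have h4 : |h * (gradient u ξ 0 - gradient u (mkPt m x w) 0)| ≤ h * η := by
    rw [abs_mul, abs_of_pos hh]; gcongr
  rw [add_sub_cancel_left] at hm
  rw [abs_le] at hm h4 ⊢
  constructor <;> linarith [hm.1, hm.2, h4.1, h4.2]

def kap (m : ℕ) (x h : ℝ) : ℝ := (((x / 2 + h) / (x / 2)) * ((1 - x) / (1 - x - h))) ^ m

lemma Eig.step (e : Eig m ε Ω u lam M C₀) {x h η δ : ℝ} (hx : x ∈ Icc ε (1 - ε)) (hh : 0 < h)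
    (hhx : h ≤ x) (hx1 : x + h < 1)
    (hδ : ∀ p ∈ Ω, ∀ q ∈ Ω, ‖p - q‖ < δ → |gradient u p 0 - gradient u q 0| ≤ η)
    (hs : 5 * h < δ) :
    |ubarFn Ω u (x + h) - ubarFn Ω u x
        - h * (sl Ω (fun p => gradient u p 0) x / ωvol Ω x)|
      ≤ h * η + 8 * C₀ * M * ε * h +
        (2 * ε * C₀ * min x (1 - x) * M + 2 * h * C₀ * M) * (kap m x h - 1) := by
  have d := e.dom
  have he := e.eps
  have hx0 : 0 < x := he.trans_le hx.1
  have hxI : x ∈ Ioo (0:ℝ) 1 := ⟨hx0, by linarith⟩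
  have hxI' : x + h ∈ Ioo (0:ℝ) 1 := ⟨by linarith, hx1⟩
  obtain ⟨y0, hy0⟩ := d.ne (x / 2) ⟨by linarith, by linarith⟩
  set r := (x / 2) / (x / 2 + h) with hr
  have hr0 : 0 < r := by positivity
  have hr1 : r ≤ 1 := by rw [hr, div_le_one (by positivity)]; linarith
  have hmap : ∀ z ∈ cross Ω (x + h), AffineMap.homothety y0 r z ∈ cross Ω x := fun z hz =>
    d.contr hy0 hr0.le hr1 (by rw [hr]; field_simp; ring) hz
  set f : EuclideanSpace ℝ (Fin (m+1)) → ℝ := fun p => u p + h * gradient u p 0 with hf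
  have bf : BC Ω f := e.uBC.add ((BC.const h).mul e.uxBC)
  set B := 2 * ε * C₀ * min x (1 - x) * M + 2 * h * C₀ * M with hB
  have hB0 : 0 ≤ B := by
    have := e.osc hx hh (d.ne x hxI).some_mem (d.ne x hxI).some_mem
    exact (abs_nonneg _).trans this
  set a := sl Ω f x / ωvol Ω x with ha
  have hW := d.ωpos hxI
  have hW' := d.ωpos hxI'
  have haeq : a = ubarFn Ω u x + h * (sl Ω (fun p => gradient u p 0) x / ωvol Ω x) := by
    rw [ha, hf, sl_add d e.uBC e.uxBC, ubar_eq]; ring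
  set A := AffineMap.homothety y0 r '' cross Ω (x + h)
  have hAo : IsOpen A := AffineMap.homothety_isOpenMap y0 r hr0.ne' _ (d.cop _)
  have hAS : A ⊆ cross Ω x := by rintro _ ⟨z, hz, rfl⟩; exact hmap z hz
  have hAv : (volume A).toReal = r ^ m * ωvol Ω (x + h) := vol_homo y0 hr0.le _
  have hAi := int_homo y0 hr0 (d.cop (x + h)) (fun y => f (mkPt m x y))
  have k1 := sub_avg (μ := volume) (d.cop x).measurableSet hAo.measurableSet hAS (d.cfin x)
    (bf.cint d x) (a := a) (B := B) (fun y hy => by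
      rw [abs_sub_comm]
      exact avg_close d bf hxI fun y' hy' => e.osc hx hh hy hy')
    (by rw [ha]; exact (div_mul_cancel₀ _ hW.ne').symm)
  rw [hAv, hAi] at k1
  change |_| ≤ B * (ωvol Ω x - _) at k1
  set I := ∫ z in cross Ω (x + h), f (mkPt m x (AffineMap.homothety y0 r z)) with hI
  have hint : IntegrableOn (fun z => f (mkPt m x (AffineMap.homothety y0 r z))) (cross Ω (x + h)) := by
    obtain ⟨C, -, hC⟩ := bf.2
    refine IntegrableOn.of_bound (C := C) (d.cfin _) (ContinuousOn.aestronglyMeasurable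
      (((bf.cc d x).comp (AffineMap.homothety_continuous y0 r).continuousOn hmap)) (d.cop _).measurableSet) ?_
    rw [ae_restrict_iff' (d.cop _).measurableSet]
    exact Eventually.of_forall fun y hy => by simpa using hC _ (hmap y hy)
  have k2 : |sl Ω u (x + h) - I| ≤ (h * η + 8 * C₀ * M * ε * h) * ωvol Ω (x + h) := by
    have := norm_setIntegral_le_of_norm_le_const (μ := volume) (C := h * η + 8 * C₀ * M * ε * h)
      (d.cfin (x + h))
      (f := fun z => u (mkPt m (x + h) z) - f (mkPt m x (AffineMap.homothety y0 r z)))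
      (fun z hz => e.pt hx hh hhx hr hy0 hδ hs hz (hmap z hz))
    rw [integral_sub (e.uBC.cint d _) hint] at this
    exact this
  have hrm : 0 < r ^ m := by positivity
  have k3 : |I / ωvol Ω (x + h) - a| ≤ B * (kap m x h - 1) := by
    have h1 : I / ωvol Ω (x + h) - a
        = (r ^ m * I - a * (r ^ m * ωvol Ω (x + h))) / (r ^ m * ωvol Ω (x + h)) := by
      field_simp
    rw [h1, abs_div, abs_of_pos (mul_pos hrm hW'), div_le_iff₀ (mul_pos hrm hW')]
    refine k1.trans ?_
    rw [mul_assoc]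
    apply mul_le_mul_of_nonneg_left _ hB0
    rw [sub_mul, one_mul]
    apply sub_le_sub_right
    have h2 := d.wl hx0 (by linarith : x ≤ x + h) hx1
    have hp : 0 < 1 - (x + h) := by linarith
    have h3 : kap m x h * (r ^ m * ωvol Ω (x + h))
        = ωvol Ω (x + h) * (1 - x) ^ m / (1 - (x + h)) ^ m := by
      have hq : (x / 2 + h) / (x / 2) * ((1 - x) / (1 - x - h)) * r = (1 - x) / (1 - (x + h)) := by
        rw [hr, ← sub_sub]
        have : 1 - x - h ≠ 0 := by linarith
        field_simp
      rw [kap, ← mul_assoc, ← mul_pow, hq, div_pow]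
      ring
    rw [h3, le_div_iff₀ (by positivity)]
    exact h2
  have k4 : |sl Ω u (x + h) / ωvol Ω (x + h) - I / ωvol Ω (x + h)| ≤ h * η + 8 * C₀ * M * ε * h := by
    rw [← sub_div, abs_div, abs_of_pos hW', div_le_iff₀ hW']
    exact k2
  rw [sub_sub, ← haeq, ubar_eq]
  rw [abs_le] at k3 k4 ⊢
  constructor <;> linarith [k3.1, k3.2, k4.1, k4.2]
end

lemma kap_zero {m : ℕ} {x : ℝ} (hx : x ∈ Ioo (0:ℝ) 1) : kap m x 0 = 1 := by
  have h1 : x / 2 ≠ 0 := by linarith [hx.1]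
  have h2 : 1 - x ≠ 0 := by linarith [hx.2]
  simp [kap, div_self h1, div_self h2]

lemma kap_deriv {m : ℕ} {x : ℝ} (hx : x ∈ Ioo (0:ℝ) 1) :
    HasDerivAt (kap m x) (m * (2 / x + 1 / (1 - x))) 0 := by
  have h1 : x ≠ 0 := by linarith [hx.1]
  have h2 : 1 - x ≠ 0 := by linarith [hx.2]
  have a1 : HasDerivAt (fun h : ℝ => (x / 2 + h) / (x / 2)) (1 / (x / 2)) 0 :=
    ((hasDerivAt_id (0:ℝ)).const_add (x / 2)).div_const (x / 2)
  have a2 : HasDerivAt (fun h : ℝ => 1 - x - h) (-1) 0 := by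
    simpa using (hasDerivAt_id (0:ℝ)).const_sub (1 - x)
  have a3 := (hasDerivAt_const (0:ℝ) (1 - x)).div a2 (by simpa using h2)
  have a4 := (a1.mul a3).pow m
  refine (a4.congr_of_eventuallyEq (Eventually.of_forall fun t => ?_)).congr_deriv ?_
  · rfl
  · simp [div_self h2, div_self (show x / 2 ≠ 0 by simpa using h1)]
    field_simp
    ring_nf
    simp

section
variable {m : ℕ} {ε : ℝ} {Ω : Set (EuclideanSpace ℝ (Fin (m+1)))}
  {u : EuclideanSpace ℝ (Fin (m+1)) → ℝ} {lam M C₀ : ℝ}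

def vdF (Ω : Set (EuclideanSpace ℝ (Fin (m+1)))) (u : EuclideanSpace ℝ (Fin (m+1)) → ℝ) (x : ℝ) : ℝ :=
  sl Ω (fun p => gradient u p 0) x / ωvol Ω x

def vF (Ω : Set (EuclideanSpace ℝ (Fin (m+1)))) (u : EuclideanSpace ℝ (Fin (m+1)) → ℝ) (L0 x : ℝ) : ℝ :=
  L0 + ∫ s in (0:ℝ)..x, vdF Ω u s

lemma Eig.vdc (e : Eig m ε Ω u lam M C₀) : ContinuousOn (vdF Ω u) (Ioo 0 1) :=
  (sl_cont e.dom e.uxBC).div e.dom.ωcont fun _ hx => (e.dom.ωpos hx).ne'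

lemma Eig.vdb (e : Eig m ε Ω u lam M C₀) : ∀ x ∈ Ioo (0:ℝ) 1, |vdF Ω u x| ≤ C₀ * M := by
  intro x hx
  have := avg_close e.dom e.uxBC hx (c := 0) (B := C₀ * M) (fun y hy => by
    rw [sub_zero]; exact (abs_coord _).trans (e.gr1 hy))
  simpa [vdF] using this

lemma Eig.vD (e : Eig m ε Ω u lam M C₀) (L0 : ℝ) :
    ∀ x ∈ Ioo (0:ℝ) 1, HasDerivAt (vF Ω u L0) (vdF Ω u x) x := fun x hx =>
  (ftc_of e.vdc e.vdb (by simp) hx).const_add L0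

lemma Eig.vc (e : Eig m ε Ω u lam M C₀) (L0 : ℝ) : ContinuousOn (vF Ω u L0) (Icc 0 1) :=
  continuousOn_const.add (icont_of e.vdc e.vdb (by simp))

lemma Eig.ubc (e : Eig m ε Ω u lam M C₀) : ContinuousOn (ubarFn Ω u) (Ioo 0 1) :=
  (sl_cont e.dom e.uBC).div e.dom.ωcont fun _ hx => (e.dom.ωpos hx).ne'

lemma Eig.dini (e : Eig m ε Ω u lam M C₀) (L0 : ℝ) {x r : ℝ} (hx : x ∈ Ico ε (1 - ε))
    (hr : (8 + 6 * m) * C₀ * M * ε < r) :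
    ∀ᶠ z in 𝓝[>] x, slope (norm ∘ fun x => ubarFn Ω u x - vF Ω u L0 x) x z < r := by
  have he := e.eps
  have hx0 : 0 < x := he.trans_le hx.1
  have hxI : x ∈ Ioo (0:ℝ) 1 := ⟨hx0, by linarith [hx.2]⟩
  have hp1 : 0 < 1 - x := by linarith [hxI.2]
  set η := (r - (8 + 6 * m) * C₀ * M * ε) / 4 with hη
  have hη0 : 0 < η := by rw [hη]; linarith
  obtain ⟨δ, hδ, H⟩ := e.uc hη0
  set F := fun x => ubarFn Ω u x - vF Ω u L0 x with hF
  set D := 2 * ε * C₀ * min x (1 - x) * M with hD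
  have t1 : Tendsto (fun h => (D + 2 * h * C₀ * M) * ((kap m x h - 1) / h)) (𝓝[>] 0)
      (𝓝 (D * (m * (2 / x + 1 / (1 - x))))) := by
    have h1 := (kap_deriv (m := m) hxI).tendsto_slope_zero_right
    simp only [zero_add, kap_zero hxI, smul_eq_mul] at h1
    have h2 : Tendsto (fun h : ℝ => D + 2 * h * C₀ * M) (𝓝[>] 0) (𝓝 D) := by
      have : Continuous (fun h : ℝ => D + 2 * h * C₀ * M) := by fun_prop
      have h3 := this.tendsto 0
      simp only [mul_zero, zero_mul, add_zero] at h3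
      exact h3.mono_left nhdsWithin_le_nhds
    refine (h2.mul h1).congr fun h => ?_
    ring
  have hlim : D * (m * (2 / x + 1 / (1 - x))) ≤ 6 * m * C₀ * M * ε := by
    have h1 : min x (1 - x) * (2 / x) ≤ 2 := by
      rw [mul_div_assoc', div_le_iff₀ hx0]
      linarith [min_le_left x (1 - x)]
    have h2 : min x (1 - x) * (1 / (1 - x)) ≤ 1 := by
      rw [mul_div_assoc', div_le_iff₀ hp1]
      linarith [min_le_right x (1 - x)]
    have h3 : 0 ≤ 2 * ε * C₀ * M * m := by
      have := e.Cpos; have := e.Mpos; positivity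
    have : min x (1 - x) * (2 / x + 1 / (1 - x)) ≤ 3 := by rw [mul_add]; linarith
    calc D * (m * (2 / x + 1 / (1 - x)))
        = 2 * ε * C₀ * M * m * (min x (1 - x) * (2 / x + 1 / (1 - x))) := by rw [hD]; ring
      _ ≤ 2 * ε * C₀ * M * m * 3 := by gcongr
      _ = _ := by ring
  have t2 := (e.vD L0 x hxI).tendsto_slope_zero_right
  have ev1 := t1.eventually_lt_const (show _ < 6 * m * C₀ * M * ε + η by linarith)
  have ev2 := t2.eventually (Metric.ball_mem_nhds _ hη0)
  have ev3 : ∀ᶠ h in 𝓝[>] (0:ℝ), h ∈ Ioo 0 (min (min x (1 - x)) (δ / 5)) :=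
    Ioo_mem_nhdsGT (lt_min (lt_min hx0 hp1) (by positivity))
  have tz : Tendsto (fun z => z - x) (𝓝[>] x) (𝓝[>] 0) := by
    refine tendsto_nhdsWithin_iff.2 ⟨?_, ?_⟩
    · have : Continuous fun z : ℝ => z - x := by fun_prop
      have h3 := this.tendsto x
      rw [sub_self] at h3
      exact h3.mono_left nhdsWithin_le_nhds
    · filter_upwards [self_mem_nhdsWithin] with z hz
      exact mem_Ioi.2 (sub_pos.2 (mem_Ioi.1 hz))
  filter_upwards [tz.eventually ev1, tz.eventually ev2, tz.eventually ev3] with z h1 h2 h3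
  obtain ⟨h, rfl⟩ : ∃ h, z = x + h := ⟨z - x, by ring⟩
  simp only [add_sub_cancel_left] at h1 h2 h3
  obtain ⟨hh, h3⟩ := h3
  rw [lt_min_iff, lt_min_iff] at h3
  have st := e.step ⟨hx.1, hx.2.le⟩ hh h3.1.1.le (by linarith) H (by linarith)
  rw [Real.dist_eq, smul_eq_mul] at h2
  have h4 : |vF Ω u L0 (x + h) - vF Ω u L0 x - h * vdF Ω u x| ≤ h * η := by
    have : vF Ω u L0 (x + h) - vF Ω u L0 x - h * vdF Ω u x
      = h * (h⁻¹ * (vF Ω u L0 (x + h) - vF Ω u L0 x) - vdF Ω u x) := by field_simp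
    rw [this, abs_mul, abs_of_pos hh]
    gcongr
  have h5 : (D + 2 * h * C₀ * M) * (kap m x h - 1) ≤ h * (6 * m * C₀ * M * ε + η) := by
    have : (D + 2 * h * C₀ * M) * (kap m x h - 1)
      = h * ((D + 2 * h * C₀ * M) * ((kap m x h - 1) / h)) := by field_simp
    rw [this]
    gcongr
  have h6 : |F (x + h) - F x| ≤ h * ((8 + 6 * m) * C₀ * M * ε + 3 * η) := by
    have st' : |ubarFn Ω u (x + h) - ubarFn Ω u x - h * vdF Ω u x| ≤ _ := st
    simp only [hF]
    rw [abs_le] at st' h4 ⊢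
    constructor <;> linarith [st'.1, st'.2, h4.1, h4.2]
  rw [slope_def_field, add_sub_cancel_left, div_lt_iff₀ hh]
  simp only [Function.comp, Real.norm_eq_abs]
  calc |F (x + h)| - |F x| ≤ |F (x + h) - F x| := abs_sub_abs_le_abs_sub _ _
    _ ≤ _ := h6
    _ < r * h := by rw [mul_comm]; gcongr; linarith

lemma Eig.err (e : Eig m ε Ω u lam M C₀) {L0 : ℝ} (hL : Tendsto (ubarFn Ω u) (𝓝[>] 0) (𝓝 L0)) :
    ∀ x ∈ Ioo (0:ℝ) 1, |ubarFn Ω u x - vF Ω u L0 x| ≤ (16 + 6 * m) * C₀ * M * ε := by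
  have he := e.eps
  have he1 := e.eps1
  have hCM : 0 < C₀ * M := mul_pos e.Cpos e.Mpos
  have hcon : ContinuousOn (fun x => ubarFn Ω u x - vF Ω u L0 x) (Ioo 0 1) :=
    e.ubc.sub ((e.vc L0).mono Ioo_subset_Icc_self)
  have hmv : ∀ a b, 0 ≤ a → a ≤ b → b ≤ 1 → b - a ≤ ε → |vF Ω u L0 b - vF Ω u L0 a| ≤ C₀ * M * ε := by
    intro a b h0 hab hb hba
    refine (mvt_abs hab ((e.vc L0).mono (Icc_subset_Icc h0 hb)) (zd := vdF Ω u) (B := C₀ * M)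
      (fun t ht => e.vD L0 t ⟨by linarith [ht.1], by linarith [ht.2]⟩)
      (fun t ht => e.vdb t ⟨by linarith [ht.1], by linarith [ht.2]⟩)).trans ?_
    gcongr
  have z1 : ∀ x ∈ Ioc (0:ℝ) ε, |ubarFn Ω u x - vF Ω u L0 x| ≤ 4 * (C₀ * M * ε) := by
    intro x hx
    have h1 : |ubarFn Ω u x - L0| ≤ 3 * ε * C₀ * M := by
      have ht : Tendsto (fun t => |ubarFn Ω u x - ubarFn Ω u t|) (𝓝[>] 0) (𝓝 |ubarFn Ω u x - L0|) :=
        (tendsto_const_nhds.sub hL).abs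
      refine le_of_tendsto ht ?_
      filter_upwards [Ioo_mem_nhdsGT hx.1] with t ht
      exact e.near ⟨hx.1, by linarith [hx.2]⟩ ⟨ht.1, by linarith [hx.2, ht.2]⟩
        (by rw [abs_of_pos (by linarith [ht.2])]; linarith [ht.1, hx.2])
    have h2 := hmv 0 x le_rfl hx.1.le (by linarith [hx.2]) (by linarith [hx.2])
    have h0 : vF Ω u L0 0 = L0 := by simp [vF]
    rw [h0] at h2
    rw [abs_le] at h1 h2 ⊢
    constructor <;> linarith [h1.1, h1.2, h2.1, h2.2]
  have z2 : ∀ x ∈ Icc ε (1 - ε), |ubarFn Ω u x - vF Ω u L0 x| ≤ (12 + 6 * m) * (C₀ * M * ε) := by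
    have key : ∀ τ > (0:ℝ), ∀ x ∈ Icc ε (1 - ε),
        |ubarFn Ω u x - vF Ω u L0 x| ≤ 4 * (C₀ * M * ε)
          + ((8 + 6 * m) * C₀ * M * ε + τ) * (x - ε) := by
      intro τ hτ x hx
      exact image_norm_le_of_liminf_right_slope_norm_lt_deriv_boundary
        (f := fun x => ubarFn Ω u x - vF Ω u L0 x) (f' := fun _ => (8 + 6 * m) * C₀ * M * ε)
        (B' := fun _ => (8 + 6 * m) * C₀ * M * ε + τ)
        (B := fun x => 4 * (C₀ * M * ε) + ((8 + 6 * m) * C₀ * M * ε + τ) * (x - ε))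
        (hcon.mono fun y hy => ⟨by linarith [hy.1], by linarith [hy.2]⟩)
        (fun y hy r hr => (e.dini L0 hy hr).frequently)
        (by simpa using z1 ε ⟨he, le_rfl⟩)
        (by fun_prop)
        (fun y _ => by
          have := (((hasDerivAt_id y).sub_const ε).const_mul
            ((8 + 6 * m) * C₀ * M * ε + τ)).const_add (4 * (C₀ * M * ε))
          simpa using this.hasDerivWithinAt)
        (fun y _ _ => by simpa using hτ) hx
    intro x hx
    have h1 : |ubarFn Ω u x - vF Ω u L0 x| ≤ 4 * (C₀ * M * ε) + (8 + 6 * m) * C₀ * M * ε * (x - ε) := by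
      have ht : Tendsto (fun τ : ℝ => 4 * (C₀ * M * ε) + ((8 + 6 * m) * C₀ * M * ε + τ) * (x - ε)) (𝓝[>] 0)
          (𝓝 (4 * (C₀ * M * ε) + (8 + 6 * m) * C₀ * M * ε * (x - ε))) := by
        have : Continuous (fun τ : ℝ => 4 * (C₀ * M * ε) + ((8 + 6 * m) * C₀ * M * ε + τ) * (x - ε)) := by
          fun_prop
        have h2 := this.tendsto 0
        rw [add_zero] at h2
        exact h2.mono_left nhdsWithin_le_nhds
      refine ge_of_tendsto ht ?_
      filter_upwards [self_mem_nhdsWithin] with τ hτ using key τ hτ x hx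
    have h2 : (8 + 6 * m) * C₀ * M * ε * (x - ε) ≤ (8 + 6 * m) * C₀ * M * ε * 1 := by
      have := e.Cpos; have := e.Mpos
      gcongr
      linarith [hx.2]
    linarith
  intro x hx
  have hpos : 0 < C₀ * M * ε := by positivity
  have hm0 : (0:ℝ) ≤ m * (C₀ * M * ε) := by positivity
  rcases le_total x ε with h | h
  · have := z1 x ⟨hx.1, h⟩
    linarith
  rcases le_total x (1 - ε) with h' | h'
  · have := z2 x ⟨h, h'⟩
    linarith
  · have h1 := z2 (1 - ε) ⟨by linarith, le_rfl⟩
    have h2 := e.near hx (x' := 1 - ε) ⟨by linarith, by linarith⟩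
      (by rw [abs_of_nonneg (by linarith)]; linarith [hx.2])
    have h3 := hmv (1 - ε) x (by linarith) h' hx.2.le (by linarith [hx.2])
    rw [abs_le] at h1 h2 h3 ⊢
    constructor <;> linarith [h1.1, h1.2, h2.1, h2.2, h3.1, h3.2]
end

section
variable {m : ℕ} {ε : ℝ} {Ω : Set (EuclideanSpace ℝ (Fin (m+1)))}
  {u : EuclideanSpace ℝ (Fin (m+1)) → ℝ} {lam M C₀ : ℝ}

lemma Eig.dat (e : Eig m ε Ω u lam M C₀) {L0 L1 a0 : ℝ}
    (hL : Tendsto (ubarFn Ω u) (𝓝[>] 0) (𝓝 L0))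
    (hL1 : Tendsto (ubarFn Ω u) (𝓝[<] 1) (𝓝 L1))
    (h0 : a0 * M ≤ L0) (h1 : L1 ≤ - (2 * a0 * M)) (hs : (16 + 6 * m) * C₀ * ε ≤ a0) :
    Dat m a0 C₀ ((16 + 6 * m) * C₀) ε (fun x => ωvol Ω x / ωvol Ω (1 / 2))
      (fun x => ubarFn Ω u x / M) (fun x => vF Ω u L0 x / M) (fun x => vdF Ω u x / M) lam := by
  have hM := e.Mpos
  have hub : ∀ s ∈ Ioo (0:ℝ) 1, ωvol Ω s * ubarFn Ω u s = sl Ω u s := fun s hs => by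
    rw [ubar_eq, mul_div_cancel₀ _ (e.dom.ωpos hs).ne']
  set k := ωvol Ω (1 / 2) with hk
  have hkp : 0 < k := e.dom.ωpos (by norm_num)
  have int : ∀ (c t : ℝ), t ∈ Icc (0:ℝ) 1 → ∫ s in (0:ℝ)..t, ωvol Ω s / k * (c * (ubarFn Ω u s / M))
      = c / (k * M) * ∫ s in (0:ℝ)..t, sl Ω u s := by
    intro c t ht
    rw [← intervalIntegral.integral_const_mul]
    refine intervalIntegral.integral_congr_ae ?_
    have : ∀ᵐ s : ℝ, s ≠ 1 := by
      simp [ae_iff]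
    filter_upwards [this] with s hs1 hs
    rw [uIoc_of_le ht.1] at hs
    have hs' : s ∈ Ioo (0:ℝ) 1 := ⟨hs.1, lt_of_le_of_ne (hs.2.trans ht.2) hs1⟩
    rw [← hub s hs']
    field_simp
  have err := e.err hL
  refine ⟨e.eps, e.dom.wt, e.ubc.div_const _, fun x hx => ?_, e.lpos, ?_, (e.vc L0).div_const _,
    fun t ht => (e.vD L0 t ht).div_const _, fun t ht => ?_, fun t ht => ?_, fun t ht => ?_, ?_, ?_⟩
  · have := avg_close e.dom e.uBC hx (c := 0) (B := M) (fun y hy => by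
      rw [sub_zero]; exact e.bd _ hy)
    rw [sub_zero, ← ubar_eq] at this
    rw [abs_div, abs_of_pos hM, div_le_one hM]
    exact this
  · have := int 1 1 (by simp)
    rw [e.mean1, mul_zero] at this
    simpa using this
  · rw [int lam t ⟨ht.1.le, ht.2.le⟩]
    have f := e.flux t ht
    have : ωvol Ω t * vdF Ω u t = - (lam * ∫ s in (0:ℝ)..t, sl Ω u s) := by
      rw [← f, vdF, mul_div_cancel₀ _ (e.dom.ωpos ht).ne']
    calc ωvol Ω t / k * (vdF Ω u t / M) = (ωvol Ω t * vdF Ω u t) / (k * M) := by field_simp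
      _ = _ := by rw [this]; ring
  · rw [abs_div, abs_of_pos hM, div_le_iff₀ hM]
    exact e.vdb t ht
  · rw [← sub_div, abs_div, abs_of_pos hM, div_le_iff₀ hM]
    exact (err t ht).trans (by nlinarith)
  · rw [le_div_iff₀ hM]
    simpa [vF] using h0
  · rw [div_le_iff₀ hM]
    have c1 : Tendsto (vF Ω u L0) (𝓝[<] 1) (𝓝 (vF Ω u L0 1)) := by
      have := (e.vc L0) 1 (by simp)
      rw [ContinuousWithinAt] at this
      refine this.mono_left ?_
      rw [← nhdsWithin_Ioo_eq_nhdsLT (show (0:ℝ) < 1 by norm_num)]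
      exact nhdsWithin_mono _ Ioo_subset_Icc_self
    have c2 : vF Ω u L0 1 ≤ L1 + (16 + 6 * m) * C₀ * M * ε := by
      refine le_of_tendsto_of_tendsto c1 (hL1.add_const _) ?_
      filter_upwards [Ioo_mem_nhdsLT (show (0:ℝ) < 1 by norm_num)] with t ht
      have := (abs_le.1 (err t ht)).1
      linarith
    nlinarith [mul_le_mul_of_nonneg_right hs hM.le]
end

set_option maxHeartbeats 2000000 in
theorem crosssection_average_close_to_ode_eigenfunction
    (m : ℕ) (hm : 1 ≤ m) (c₀ C₀ : ℝ) (hc₀ : 0 < c₀) (hC₀ : 0 < C₀) :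
    ∃ C > (0:ℝ), ∃ ε₀ > (0:ℝ),
    ∀ (ε : ℝ) (Ω : Set (EuclideanSpace ℝ (Fin (m+1))))
      (u : EuclideanSpace ℝ (Fin (m+1)) → ℝ) (lam μ L0 L1 : ℝ) (φ φd : ℝ → ℝ),
      0 < ε → ε < ε₀ →
      IsOpen Ω → Convex ℝ Ω → Bornology.IsBounded Ω →
      -- smooth boundary
      (∃ F : EuclideanSpace ℝ (Fin (m+1)) → ℝ, ContDiff ℝ (⊤:ℕ∞) F ∧
        Ω = {p | F p < 0} ∧ frontier Ω = {p | F p = 0} ∧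
        ∀ p ∈ frontier Ω, gradient F p ≠ 0) →
      -- Ω ⊆ (0,1) × B^{n-1}(ε)
      (∀ x y, mkPt m x y ∈ Ω →
        x ∈ Ioo (0:ℝ) 1 ∧ y ∈ Metric.ball (0 : EuclideanSpace ℝ (Fin m)) ε) →
      -- nonempty cross-sections
      (∀ s ∈ Ioo (0:ℝ) 1, (cross Ω s).Nonempty) →
      -- u is a nonzero mean-zero smooth Neumann eigenfunction with eigenvalue lam
      ContDiffOn ℝ (⊤:ℕ∞) u (closure Ω) →
      (∃ p ∈ Ω, u p ≠ 0) →
      (∫ p in Ω, u p) = 0 →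
      (∀ p ∈ Ω, lap u p = -(lam * u p)) →
      (∀ p ∈ frontier Ω, ∀ v, (∀ z ∈ Ω, ⟪v, z - p⟫ ≤ 0) → ⟪gradient u p, v⟫ = 0) →
      0 < lam →
      -- lam is the smallest nonzero Neumann eigenvalue (variational
      -- characterization), attained at u
      lam = sInf {r | ∃ w : EuclideanSpace ℝ (Fin (m+1)) → ℝ,
        ContDiffOn ℝ (⊤:ℕ∞) w (closure Ω) ∧ (∃ p ∈ Ω, w p ≠ 0) ∧ (∫ p in Ω, w p) = 0 ∧
        r = (∫ p in Ω, ‖gradient w p‖ ^ 2) / (∫ p in Ω, (w p) ^ 2)} →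
      lam = (∫ p in Ω, ‖gradient u p‖ ^ 2) / (∫ p in Ω, (u p) ^ 2) →
      -- facts from [CJK2009], assumed as hypotheses
      (∀ p ∈ Ω, ‖gradient u p‖ ≤
        C₀ * max (min (p 0) (1 - p 0)) ε * sSup ((fun q => |u q|) '' Ω)) →
      c₀ * sSup (u '' Ω) ≤ -sInf (u '' Ω) →
      -sInf (u '' Ω) ≤ C₀ * sSup (u '' Ω) →
      Tendsto (ubarFn Ω u) (𝓝[>] 0) (𝓝 L0) →
      (1 - C₀ * ε) * sSup (u '' Ω) ≤ L0 →
      Tendsto (ubarFn Ω u) (𝓝[<] 1) (𝓝 L1) →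
      L1 ≤ (1 - C₀ * ε) * sInf (u '' Ω) →
      -- φ is a first Neumann eigenfunction of the ODE
      NeumannSol (ωvol Ω) μ φ φd →
      0 < μ →
      (∀ μ', 0 < μ' → IsNeumannEigenvalue (ωvol Ω) μ' → μ ≤ μ') →
      -- normalization φ(0) = lim_{x→0+} ū(x)
      φ 0 = L0 →
      ∀ x ∈ Ioo (0:ℝ) 1,
        |ubarFn Ω u x - φ x| ≤ C * ε * sSup ((fun q => |u q|) '' Ω) := by
  set K := max 1 C₀ with hK
  have hK1 : 1 ≤ K := le_max_left _ _
  have hKC : C₀ ≤ K := le_max_right _ _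
  have hK0 : 0 < K := by linarith
  set a0 := min 1 c₀ / (4 * K) with ha0
  have hmin : 0 < min 1 c₀ := lt_min one_pos hc₀
  have ha : 0 < a0 := by positivity
  have ha4 : a0 * K ≤ 1 / 4 ∧ a0 * K ≤ c₀ / 4 := by
    have : a0 * K = min 1 c₀ / 4 := by rw [ha0]; field_simp
    rw [this]
    constructor
    · linarith [min_le_left 1 c₀]
    · linarith [min_le_right 1 c₀]
  have hE : (0:ℝ) < (16 + 6 * m) * C₀ := by positivity
  obtain ⟨C, hC, e0, he0, H⟩ := oneD m ha hC₀ hE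
  refine ⟨C, hC, min (min e0 (1 / 2)) (min (1 / (2 * C₀)) (a0 / ((16 + 6 * m) * C₀))),
    by positivity, ?_⟩
  intro ε Ω u lam μ L0 L1 φ φd hε hεs hop hcv hbd _ hsub hne hsm hnz hmean _ _ hlam hinf hatt hgr
    hS1 hS2 hL0 hL0' hL1 hL1' hN hμ hmu hφ0
  rw [lt_min_iff, lt_min_iff, lt_min_iff] at hεs
  obtain ⟨⟨hε1, hε2⟩, hε3, hε4⟩ := hεs
  rw [lt_div_iff₀ (by positivity)] at hε3 hε4
  have hcomp : IsCompact (closure Ω) := hbd.isCompact_closure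
  obtain ⟨B, hB⟩ := hcomp.exists_bound_of_continuousOn hsm.continuousOn
  have hB' : ∀ p ∈ Ω, |u p| ≤ B := fun p hp => by simpa using hB p (subset_closure hp)
  have bA : BddAbove ((fun q => |u q|) '' Ω) := ⟨B, by rintro _ ⟨p, hp, rfl⟩; exact hB' p hp⟩
  have bU : BddAbove (u '' Ω) := ⟨B, by
    rintro _ ⟨p, hp, rfl⟩; exact (le_abs_self _).trans (hB' p hp)⟩
  have bL : BddBelow (u '' Ω) := ⟨-B, by
    rintro _ ⟨p, hp, rfl⟩; exact (abs_le.1 (hB' p hp)).1⟩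
  set M := sSup ((fun q => |u q|) '' Ω) with hM
  set S := sSup (u '' Ω) with hS
  set s := sInf (u '' Ω) with hs
  have hMb : ∀ p ∈ Ω, |u p| ≤ M := fun p hp => le_csSup bA ⟨p, hp, rfl⟩
  obtain ⟨p0, hp0, hup0⟩ := hnz
  have hMp : 0 < M := (abs_pos.2 hup0).trans_le (hMb p0 hp0)
  have hsS : s ≤ S := (csInf_le bL ⟨p0, hp0, rfl⟩).trans (le_csSup bU ⟨p0, hp0, rfl⟩)
  have hS0 : 0 ≤ S := by
    by_contra hcon
    push Not at hcon
    have : C₀ * S < 0 := mul_neg_of_pos_of_neg hC₀ hcon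
    linarith
  have hMK : M ≤ K * S := by
    refine csSup_le ⟨_, p0, hp0, rfl⟩ ?_
    rintro _ ⟨p, hp, rfl⟩
    have q1 : u p ≤ S := le_csSup bU ⟨p, hp, rfl⟩
    have q2 : s ≤ u p := csInf_le bL ⟨p, hp, rfl⟩
    refine abs_le.2 ⟨?_, ?_⟩ <;> nlinarith
  have e : Eig m ε Ω u lam M C₀ :=
    ⟨⟨hop, hcv, hbd, hsub, hne⟩, hε, hε2, hsm, hmean, hlam, hinf, hatt, hgr, hMb, hMp, hC₀⟩
  have haM : a0 * M ≤ a0 * K * S := by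
    rw [mul_assoc]; exact mul_le_mul_of_nonneg_left hMK ha.le
  have k1 : a0 * M ≤ L0 := by
    nlinarith [mul_le_mul_of_nonneg_right ha4.1 hS0]
  have hs0 : s ≤ 0 := by nlinarith
  have k2 : L1 ≤ -(2 * a0 * M) := by
    nlinarith [mul_le_mul_of_nonneg_right ha4.2 hS0]
  have hD := e.dat hL0 hL1 k1 k2 (by nlinarith)
  have hkp : 0 < ωvol Ω (1 / 2) := e.dom.ωpos (by norm_num)
  intro x hx
  have F := H ε _ _ _ _ lam μ _ _ hD hε1 (e.lam_le hN hμ) ((hN.scale (ωvol Ω (1 / 2))).scale2 hMp.ne')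
    (fun μ' h0 hI => hmu μ' h0 (by
      obtain ⟨ψ, ψd, hψ⟩ := hI
      refine ⟨ψ, ψd, ?_⟩
      have := hψ.scale (1 / ωvol Ω (1 / 2))
      have h2 : (fun x => ωvol Ω x / ωvol Ω (1 / 2) / (1 / ωvol Ω (1 / 2))) = ωvol Ω := by
        ext x; field_simp
      rwa [h2] at this)) (by simp [vF, hφ0]) x hx
  rw [← sub_div, abs_div, abs_of_pos hMp, div_le_iff₀ hMp] at F
  exact F
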